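/- Let Ω ⊂ ℝⁿ (n ≥ 2) be a bounded polyhedral domain with singular set S ≠ ∅ and η(x) = dist(x, S), and let μ ≥ 1 be an integer. Then there exists a constant C > 0 such that for every function u : ℝⁿ → ℝ that is smooth on Ω, continuous on the closure of Ω, vanishes on ∂Ω, and satisfies ‖u‖_{K^1_1(Ω)} < ∞ and ‖Δu‖_{K^{μ−1}_{−1}(Ω)} < ∞, one has ‖u‖_{K^{μ+1}_1(Ω)} ≤ C ‖Δu‖_{K^{μ−1}_{−1}(Ω)}. -/

import Mathlib

open MeasureTheory Set Metric
open scoped RealInnerProductSpace ENNReal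

noncomputable section

/-- `H` is an affine hyperplane in `ℝⁿ`. -/
def IsAffineHyperplane {n : ℕ} (H : Set (EuclideanSpace ℝ (Fin n))) : Prop :=
  ∃ (v : EuclideanSpace ℝ (Fin n)) (c : ℝ), v ≠ 0 ∧ H = {x | ⟪v, x⟫ = c}

/-- `Ω` is a bounded polyhedral domain with boundary contained in the union of the minimal
finite family `𝓗` of affine hyperplanes. -/
structure IsPolyhedralDomain {n : ℕ} (Ω : Set (EuclideanSpace ℝ (Fin n)))
    (𝓗 : Finset (Set (EuclideanSpace ℝ (Fin n)))) : Prop where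
  isOpen : IsOpen Ω
  isBounded : Bornology.IsBounded Ω
  frontier_closure : frontier Ω = frontier (closure Ω)
  hyperplane : ∀ H ∈ 𝓗, IsAffineHyperplane H
  subset_union : frontier Ω ⊆ ⋃ H ∈ 𝓗, H
  minimal : ∀ 𝓗' ⊂ 𝓗, ¬ frontier Ω ⊆ ⋃ H ∈ 𝓗', H

/-- The set of singular boundary points: boundary points lying on at least two
distinct hyperplanes of the family `𝓗`. -/
def polySingularSet {n : ℕ} (Ω : Set (EuclideanSpace ℝ (Fin n)))
    (𝓗 : Finset (Set (EuclideanSpace ℝ (Fin n)))) : Set (EuclideanSpace ℝ (Fin n)) :=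
  {x | x ∈ frontier Ω ∧ ∃ H₁ ∈ 𝓗, ∃ H₂ ∈ 𝓗, H₁ ≠ H₂ ∧ x ∈ H₁ ∧ x ∈ H₂}

/-- Iterated partial derivative along a list of coordinate directions. -/
def derivAlong {n : ℕ} : List (Fin n) → (EuclideanSpace ℝ (Fin n) → ℝ) →
    EuclideanSpace ℝ (Fin n) → ℝ
  | [], u => u
  | i :: L, u => fun x => fderiv ℝ (derivAlong L u) x (EuclideanSpace.single i 1)

/-- The iterated partial derivative `∂^β` associated to a multi-index `β`. -/
def pderivMulti {n : ℕ} (β : Fin n → ℕ) (u : EuclideanSpace ℝ (Fin n) → ℝ) :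
    EuclideanSpace ℝ (Fin n) → ℝ :=
  derivAlong ((List.finRange n).flatMap fun i => List.replicate (β i) i) u

/-- The finite set of multi-indices `β : Fin n → ℕ` with `|β| = ∑ i, β i ≤ m`. -/
def multiIndicesLE (n m : ℕ) : Finset (Fin n → ℕ) :=
  ((Finset.univ : Finset (Fin n → Fin (m + 1))).filter
    (fun γ => ∑ i, (γ i : ℕ) ≤ m)).image (fun γ i => (γ i : ℕ))

/-- The squared Babuška–Kondratiev norm `‖u‖²_{K^μ_a(Ω)}` with weight the distance to `S`. -/
def KnormSq {n : ℕ} (Ω S : Set (EuclideanSpace ℝ (Fin n))) (μ : ℕ) (a : ℝ)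
    (u : EuclideanSpace ℝ (Fin n) → ℝ) : ℝ≥0∞ :=
  ∑ β ∈ multiIndicesLE n μ, ∫⁻ x in Ω,
    ENNReal.ofReal (infDist x S ^ (2 * (((∑ i, β i : ℕ) : ℝ) - a)) * pderivMulti β u x ^ 2)

/-- The Laplace operator `Δu = ∑ⱼ ∂²u/∂xⱼ²`. -/
def laplaceOp {n : ℕ} (u : EuclideanSpace ℝ (Fin n) → ℝ) :
    EuclideanSpace ℝ (Fin n) → ℝ :=
  fun x => ∑ j : Fin n, derivAlong [j, j] u x

open scoped ContDiff Gradient Laplacian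

/-!
Since the faces of `Ω` lie in finitely many hyperplanes, from every point `x` of `Ω` the boundary is
visible within distance `M η(x)` in one of finitely many directions. The one-dimensional Hardy
inequality along these rays gives `∫ u² / η² ≤ C ∫ |∇u|²`, and testing `Δu` with `u` then yields
`∫ |∇u|² ≤ C ∫ η² (Δu)²`. The test functions are truncations of `u` at small levels, which have
compact support because `u` is continuous up to the boundary and vanishes there.

For the higher derivatives, a ball `B(y, κ η(y))` meets at most one face, so that its intersection
with `Ω` is empty, a ball or a half ball. On a half ball, Caccioppoli's inequality applied to
tangential difference quotients controls the tangential derivatives, and the equation recovers the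
normal ones. Rescaling by `η(y)` and averaging over `y` against the kernel `η(y)⁻ᵈ` bounds
`∫ η^{2(k+1)} |D^{k+2} u|²` by the corresponding weighted integrals of `D^{k+1} u` and `D^k Δu`, and
one concludes by induction on `k`.
-/

section DirectionalDerivatives

variable {E : Type*} [NormedAddCommGroup E] [NormedSpace ℝ E] {U : Set E} {u g : E → ℝ} {x : E}

/-- The directional derivative `∂_v u`, as an operator on scalar functions. -/
def dirDeriv (v : E) (u : E → ℝ) : E → ℝ := fun x => fderiv ℝ u x v

/-- The iterated directional derivative `∂_{v₁} ⋯ ∂_{vₖ} u`; the head of the list is applied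
last, as in `derivAlong`. -/
def iterDirDeriv (vs : List E) (u : E → ℝ) : E → ℝ := vs.foldr dirDeriv u

lemma iterDirDeriv_cons (v : E) (vs : List E) (u : E → ℝ) :
    iterDirDeriv (v :: vs) u = dirDeriv v (iterDirDeriv vs u) := rfl

lemma differentiableAt_of_contDiffOn (hU : IsOpen U) (hu : ContDiffOn ℝ ∞ u U) (hx : x ∈ U) :
    DifferentiableAt ℝ u x :=
  (hu.contDiffAt (hU.mem_nhds hx)).differentiableAt (by simp)

lemma hasDerivAt_comp_add_smul (hU : IsOpen U) (hu : ContDiffOn ℝ ∞ u U) {v : E} {t : ℝ}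
    (ht : x + t • v ∈ U) :
    HasDerivAt (fun s : ℝ => u (x + s • v)) (dirDeriv v u (x + t • v)) t :=
  (differentiableAt_of_contDiffOn hU hu ht).hasFDerivAt.comp_hasDerivAt t
    (by simpa using ((hasDerivAt_id t).smul_const v).const_add x)

lemma contDiffOn_dirDeriv (hU : IsOpen U) (hu : ContDiffOn ℝ ∞ u U) (v : E) :
    ContDiffOn ℝ ∞ (dirDeriv v u) U :=
  (hu.fderiv_of_isOpen hU (by simp)).clm_apply contDiffOn_const

lemma contDiffOn_iterDirDeriv (hU : IsOpen U) (hu : ContDiffOn ℝ ∞ u U) (vs : List E) :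
    ContDiffOn ℝ ∞ (iterDirDeriv vs u) U := by
  induction vs with
  | nil => exact hu
  | cons v vs ih => exact contDiffOn_dirDeriv hU ih v

lemma continuousOn_norm_fderiv (hU : IsOpen U) (hu : ContDiffOn ℝ ∞ u U) :
    ContinuousOn (fun x => ‖fderiv ℝ u x‖) U :=
  (hu.continuousOn_fderiv_of_isOpen hU (by simp)).norm

lemma continuousOn_norm_iteratedFDeriv (hU : IsOpen U) (hu : ContDiffOn ℝ ∞ u U) (k : ℕ) :
    ContinuousOn (fun x => ‖iteratedFDeriv ℝ k u x‖) U := fun x hx =>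
  ((hu.contDiffAt (hU.mem_nhds hx)).continuousAt_iteratedFDeriv
    (by exact_mod_cast le_top)).norm.continuousWithinAt

lemma dirDeriv_eqOn (hU : IsOpen U) (h : EqOn u g U) (v : E) :
    EqOn (dirDeriv v u) (dirDeriv v g) U := fun x hx => by
  simp only [dirDeriv, (h.eventuallyEq_of_mem (hU.mem_nhds hx)).fderiv_eq]

lemma iterDirDeriv_eqOn (hU : IsOpen U) (h : EqOn u g U) (vs : List E) :
    EqOn (iterDirDeriv vs u) (iterDirDeriv vs g) U := by
  induction vs with
  | nil => exact h
  | cons v vs ih => exact dirDeriv_eqOn hU ih v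

lemma dirDeriv_dirDeriv_apply (hU : IsOpen U) (hu : ContDiffOn ℝ ∞ u U) (hx : x ∈ U) (v w : E) :
    dirDeriv v (dirDeriv w u) x = fderiv ℝ (fderiv ℝ u) x v w := by
  have hd : DifferentiableAt ℝ (fderiv ℝ u) x :=
    ((hu.fderiv_of_isOpen (m := ∞) hU (by simp)).contDiffAt (hU.mem_nhds hx)).differentiableAt
      (by simp)
  unfold dirDeriv
  rw [fderiv_clm_apply hd (by fun_prop)]
  simp

lemma dirDeriv_comm (hU : IsOpen U) (hu : ContDiffOn ℝ ∞ u U) (v w : E) :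
    EqOn (dirDeriv v (dirDeriv w u)) (dirDeriv w (dirDeriv v u)) U := fun x hx => by
  have hsymm : IsSymmSndFDerivAt ℝ u x := (hu.contDiffAt (hU.mem_nhds hx)).isSymmSndFDerivAt (by
    rw [minSmoothness_of_isRCLikeNormedField]
    exact WithTop.coe_le_coe.2 (le_top : (2 : ℕ∞) ≤ ⊤))
  rw [dirDeriv_dirDeriv_apply hU hu hx, dirDeriv_dirDeriv_apply hU hu hx, hsymm v w]

lemma dirDeriv_iterDirDeriv_comm (hU : IsOpen U) (hu : ContDiffOn ℝ ∞ u U) (vs : List E) (w : E) :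
    EqOn (dirDeriv w (iterDirDeriv vs u)) (iterDirDeriv vs (dirDeriv w u)) U := by
  induction vs with
  | nil => exact fun _ _ => rfl
  | cons v vs ih =>
    exact (dirDeriv_comm hU (contDiffOn_iterDirDeriv hU hu vs) w v).trans (dirDeriv_eqOn hU ih v)

lemma iterDirDeriv_perm (hU : IsOpen U) (hu : ContDiffOn ℝ ∞ u U) {vs ws : List E}
    (h : vs.Perm ws) : EqOn (iterDirDeriv vs u) (iterDirDeriv ws u) U := by
  induction h with
  | nil => exact fun _ _ => rfl
  | cons v _ ih => exact dirDeriv_eqOn hU ih v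
  | swap v w vs => exact dirDeriv_comm hU (contDiffOn_iterDirDeriv hU hu vs) w v
  | trans _ _ ih₁ ih₂ => exact ih₁.trans ih₂

lemma dirDeriv_sum {ι : Type*} (hU : IsOpen U) (s : Finset ι) {g : ι → E → ℝ}
    (hg : ∀ i ∈ s, ContDiffOn ℝ ∞ (g i) U) (v : E) :
    EqOn (dirDeriv v fun x => ∑ i ∈ s, g i x) (fun x => ∑ i ∈ s, dirDeriv v (g i) x) U :=
  fun x hx => by
    simp [dirDeriv, fderiv_fun_sum fun i hi => differentiableAt_of_contDiffOn hU (hg i hi) hx]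

lemma norm_iteratedFDeriv_dirDeriv_le (hU : IsOpen U) (hu : ContDiffOn ℝ ∞ u U) (hx : x ∈ U)
    (k : ℕ) (v : E) :
    ‖iteratedFDeriv ℝ k (dirDeriv v u) x‖ ≤ ‖v‖ * ‖iteratedFDeriv ℝ (k + 1) u x‖ := by
  have hD : ContDiffAt ℝ k (fderiv ℝ u) x :=
    (((hu.fderiv_of_isOpen (m := ∞) hU (by simp)).contDiffAt (hU.mem_nhds hx))).of_le
      (by exact_mod_cast le_top)
  have hcomp := (ContinuousLinearMap.apply ℝ ℝ v).norm_iteratedFDeriv_comp_left hD le_rfl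
  rw [norm_iteratedFDeriv_fderiv] at hcomp
  have hv : ‖ContinuousLinearMap.apply ℝ ℝ v‖ ≤ ‖v‖ :=
    ContinuousLinearMap.opNorm_le_bound _ (norm_nonneg v) fun L => by
      simpa [mul_comm] using L.le_opNorm v
  exact hcomp.trans (by gcongr)

lemma norm_iteratedFDeriv_iterDirDeriv_le (hU : IsOpen U) (hu : ContDiffOn ℝ ∞ u U)
    (hx : x ∈ U) {vs : List E} (hvs : ∀ v ∈ vs, ‖v‖ ≤ 1) (k : ℕ) :
    ‖iteratedFDeriv ℝ k (iterDirDeriv vs u) x‖ ≤ ‖iteratedFDeriv ℝ (k + vs.length) u x‖ := by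
  induction vs generalizing k with
  | nil => rfl
  | cons v vs ih =>
    rw [List.forall_mem_cons] at hvs
    calc ‖iteratedFDeriv ℝ k (iterDirDeriv (v :: vs) u) x‖
        ≤ ‖v‖ * ‖iteratedFDeriv ℝ (k + 1) (iterDirDeriv vs u) x‖ :=
          norm_iteratedFDeriv_dirDeriv_le hU (contDiffOn_iterDirDeriv hU hu vs) hx k v
      _ ≤ ‖iteratedFDeriv ℝ (k + 1) (iterDirDeriv vs u) x‖ :=
          mul_le_of_le_one_left (norm_nonneg _) hvs.1
      _ ≤ ‖iteratedFDeriv ℝ (k + (v :: vs).length) u x‖ := by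
          rw [List.length_cons, add_comm vs.length, ← add_assoc]
          exact ih hvs.2 (k + 1)

lemma abs_iterDirDeriv_le (hU : IsOpen U) (hu : ContDiffOn ℝ ∞ u U) (hx : x ∈ U)
    {vs : List E} (hvs : ∀ v ∈ vs, ‖v‖ ≤ 1) :
    |iterDirDeriv vs u x| ≤ ‖iteratedFDeriv ℝ vs.length u x‖ := by
  have h := norm_iteratedFDeriv_iterDirDeriv_le hU hu hx hvs 0
  rwa [zero_add, norm_iteratedFDeriv_zero, Real.norm_eq_abs] at h

lemma abs_dirDeriv_le {v : E} (hv : ‖v‖ ≤ 1) (u : E → ℝ) (x : E) :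
    |dirDeriv v u x| ≤ ‖fderiv ℝ u x‖ :=
  (fderiv ℝ u x).unit_le_opNorm v hv

end DirectionalDerivatives

section OrthonormalFrames

variable {E ι : Type*} [NormedAddCommGroup E] [InnerProductSpace ℝ E] [Fintype ι]
  (b : OrthonormalBasis ι ℝ E) {U : Set E} {u : E → ℝ} {x : E}

lemma fderiv_eq_sum_dirDeriv_smul (u : E → ℝ) (x : E) :
    fderiv ℝ u x = ∑ j, dirDeriv (b j) u x • innerSL ℝ (b j) := by
  ext v
  conv_lhs => rw [← b.sum_repr' v, map_sum]
  simp [dirDeriv, mul_comm]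

lemma norm_fderiv_le_sum_abs_dirDeriv (u : E → ℝ) (x : E) :
    ‖fderiv ℝ u x‖ ≤ ∑ j, |dirDeriv (b j) u x| := by
  rw [fderiv_eq_sum_dirDeriv_smul b u x]
  refine (norm_sum_le _ _).trans_eq (Finset.sum_congr rfl fun j _ => ?_)
  rw [norm_smul, innerSL_apply_norm, b.norm_eq_one, mul_one, Real.norm_eq_abs]

lemma norm_iteratedFDeriv_succ_le_sum (hU : IsOpen U) (hu : ContDiffOn ℝ ∞ u U) (hx : x ∈ U)
    (k : ℕ) :
    ‖iteratedFDeriv ℝ (k + 1) u x‖ ≤ ∑ j, ‖iteratedFDeriv ℝ k (dirDeriv (b j) u) x‖ := by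
  let L (j : ι) : ℝ →L[ℝ] E →L[ℝ] ℝ := ContinuousLinearMap.toSpanSingleton ℝ (innerSL ℝ (b j))
  have hL (j : ι) : ‖L j‖ = 1 := by
    rw [ContinuousLinearMap.norm_toSpanSingleton, innerSL_apply_norm, b.norm_eq_one]
  have hd (j : ι) : ContDiffAt ℝ k (dirDeriv (b j) u) x :=
    ((contDiffOn_dirDeriv hU hu (b j)).contDiffAt (hU.mem_nhds hx)).of_le
      (by exact_mod_cast le_top)
  have hfderiv : fderiv ℝ u = ∑ j, L j ∘ dirDeriv (b j) u := by
    funext y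
    simpa [L] using fderiv_eq_sum_dirDeriv_smul b u y
  calc ‖iteratedFDeriv ℝ (k + 1) u x‖
      = ‖∑ j, iteratedFDeriv ℝ k (L j ∘ dirDeriv (b j) u) x‖ := by
        rw [← norm_iteratedFDeriv_fderiv, hfderiv, iteratedFDeriv_sum_apply]
        exact fun j _ => (L j).contDiff.contDiffAt.comp x (hd j)
    _ ≤ ∑ j, ‖iteratedFDeriv ℝ k (L j ∘ dirDeriv (b j) u) x‖ := norm_sum_le _ _
    _ ≤ ∑ j, ‖iteratedFDeriv ℝ k (dirDeriv (b j) u) x‖ := Finset.sum_le_sum fun j _ => by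
        simpa [hL j] using (L j).norm_iteratedFDeriv_comp_left (hd j) le_rfl

section Laplacian

variable [FiniteDimensional ℝ E]

lemma laplacian_eqOn_sum_dirDeriv (hU : IsOpen U) (hu : ContDiffOn ℝ ∞ u U) :
    EqOn (Δ u) (fun x => ∑ j, dirDeriv (b j) (dirDeriv (b j) u) x) U := fun x hx => by
  rw [InnerProductSpace.laplacian_eq_iteratedFDeriv_orthonormalBasis u b]
  simp [iteratedFDeriv_two_apply, dirDeriv_dirDeriv_apply hU hu hx]

lemma contDiffOn_laplacian (hU : IsOpen U) (hu : ContDiffOn ℝ ∞ u U) :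
    ContDiffOn ℝ ∞ (Δ u) U :=
  (ContDiffOn.sum fun _ _ => contDiffOn_dirDeriv hU (contDiffOn_dirDeriv hU hu _) _).congr
    (laplacian_eqOn_sum_dirDeriv (stdOrthonormalBasis ℝ E) hU hu)

lemma laplacian_dirDeriv_eqOn (hU : IsOpen U) (hu : ContDiffOn ℝ ∞ u U) (v : E) :
    EqOn (Δ (dirDeriv v u)) (dirDeriv v (Δ u)) U := fun x hx => by
  let b := stdOrthonormalBasis ℝ E
  have hbu (j) : ContDiffOn ℝ ∞ (dirDeriv (b j) u) U := contDiffOn_dirDeriv hU hu _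
  rw [laplacian_eqOn_sum_dirDeriv b hU (contDiffOn_dirDeriv hU hu v) hx,
    dirDeriv_eqOn hU (laplacian_eqOn_sum_dirDeriv b hU hu) v hx,
    dirDeriv_sum hU _ (fun j _ => contDiffOn_dirDeriv hU (hbu j) _) v hx]
  exact Finset.sum_congr rfl fun j _ =>
    (dirDeriv_eqOn hU (dirDeriv_comm hU hu _ _) _ hx).trans (dirDeriv_comm hU (hbu j) _ _ hx)

end Laplacian

section TangentialDerivatives

variable [DecidableEq ι]

/-- The sum of `‖∇ ∂_{b j₁} ⋯ ∂_{b jₖ} u‖` over all words with letters `jᵢ ≠ i₀`, that is, the size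
of the gradient of the `k`-th order derivatives of `u` tangential to the hyperplane `(b i₀)ᗮ`. -/
def tangentialGradNorm (b : OrthonormalBasis ι ℝ E) (i₀ : ι) : ℕ → (E → ℝ) → E → ℝ
  | 0, u => fun x => ‖fderiv ℝ u x‖
  | k + 1, u => fun x => ∑ j ∈ Finset.univ.erase i₀, tangentialGradNorm b i₀ k (dirDeriv (b j) u) x

lemma tangentialGradNorm_zero (i₀ : ι) (u : E → ℝ) (x : E) :
    tangentialGradNorm b i₀ 0 u x = ‖fderiv ℝ u x‖ := rfl

lemma tangentialGradNorm_succ (i₀ : ι) (k : ℕ) (u : E → ℝ) (x : E) :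
    tangentialGradNorm b i₀ (k + 1) u x =
      ∑ j ∈ Finset.univ.erase i₀, tangentialGradNorm b i₀ k (dirDeriv (b j) u) x := rfl

lemma tangentialGradNorm_eqOn (hU : IsOpen U) {g : E → ℝ} (h : EqOn u g U) (i₀ : ι) (k : ℕ) :
    EqOn (tangentialGradNorm b i₀ k u) (tangentialGradNorm b i₀ k g) U := by
  induction k generalizing u g with
  | zero =>
    intro x hx
    simp only [tangentialGradNorm, (h.eventuallyEq_of_mem (hU.mem_nhds hx)).fderiv_eq]
  | succ k ih => exact fun x hx => Finset.sum_congr rfl fun j _ => ih (dirDeriv_eqOn hU h _) hx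

lemma continuousOn_tangentialGradNorm (hU : IsOpen U) (hu : ContDiffOn ℝ ∞ u U) (i₀ : ι) (k : ℕ) :
    ContinuousOn (tangentialGradNorm b i₀ k u) U := by
  induction k generalizing u with
  | zero => exact continuousOn_norm_fderiv hU hu
  | succ k ih => exact continuousOn_finsetSum _ fun j _ => ih (contDiffOn_dirDeriv hU hu _)

variable [FiniteDimensional ℝ E]

lemma norm_iteratedFDeriv_laplacian_dirDeriv_le (hU : IsOpen U) (hu : ContDiffOn ℝ ∞ u U)
    (hx : x ∈ U) (k : ℕ) {v : E} (hv : ‖v‖ = 1) :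
    ‖iteratedFDeriv ℝ k (Δ (dirDeriv v u)) x‖ ≤ ‖iteratedFDeriv ℝ (k + 1) (Δ u) x‖ := by
  have heq : Δ (dirDeriv v u) =ᶠ[nhds x] dirDeriv v (Δ u) :=
    (laplacian_dirDeriv_eqOn hU hu v).eventuallyEq_of_mem (hU.mem_nhds hx)
  rw [(heq.iteratedFDeriv ℝ k).eq_of_nhds]
  simpa [hv] using norm_iteratedFDeriv_dirDeriv_le hU (contDiffOn_laplacian hU hu) hx k v

/-- The equation recovers the second normal derivative: `∂_{i₀}² u = Δ u - ∑_{j ≠ i₀} ∂_j² u`. -/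
lemma norm_fderiv_dirDeriv_normal_le (hU : IsOpen U) (hu : ContDiffOn ℝ ∞ u U) (hx : x ∈ U)
    (i₀ : ι) :
    ‖fderiv ℝ (dirDeriv (b i₀) u) x‖ ≤ |Δ u x| + 2 * tangentialGradNorm b i₀ 1 u x := by
  have hsecond (i j : ι) :
      |dirDeriv (b i) (dirDeriv (b j) u) x| ≤ ‖fderiv ℝ (dirDeriv (b j) u) x‖ :=
    abs_dirDeriv_le (b.norm_eq_one i).le _ x
  have hlap : dirDeriv (b i₀) (dirDeriv (b i₀) u) x =
      Δ u x - ∑ j ∈ Finset.univ.erase i₀, dirDeriv (b j) (dirDeriv (b j) u) x := by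
    rw [laplacian_eqOn_sum_dirDeriv b hU hu hx]
    exact eq_sub_of_add_eq (Finset.add_sum_erase _
      (fun j => dirDeriv (b j) (dirDeriv (b j) u) x) (Finset.mem_univ i₀))
  have hnormal : |dirDeriv (b i₀) (dirDeriv (b i₀) u) x| ≤
      |Δ u x| + tangentialGradNorm b i₀ 1 u x := by
    rw [hlap]
    refine (abs_sub _ _).trans ?_
    gcongr
    exact (Finset.abs_sum_le_sum_abs _ _).trans (Finset.sum_le_sum fun j _ => hsecond j j)
  have hmixed : ∑ j ∈ Finset.univ.erase i₀, |dirDeriv (b j) (dirDeriv (b i₀) u) x| ≤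
      tangentialGradNorm b i₀ 1 u x :=
    Finset.sum_le_sum fun j _ => by
      rw [dirDeriv_comm hU hu _ _ hx]
      exact hsecond i₀ j
  calc ‖fderiv ℝ (dirDeriv (b i₀) u) x‖
      ≤ ∑ j, |dirDeriv (b j) (dirDeriv (b i₀) u) x| := norm_fderiv_le_sum_abs_dirDeriv b _ x
    _ = |dirDeriv (b i₀) (dirDeriv (b i₀) u) x| +
          ∑ j ∈ Finset.univ.erase i₀, |dirDeriv (b j) (dirDeriv (b i₀) u) x| :=
        (Finset.add_sum_erase _ _ (Finset.mem_univ i₀)).symm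
    _ ≤ |Δ u x| + 2 * tangentialGradNorm b i₀ 1 u x := by linarith

lemma tangentialGradNorm_dirDeriv_normal_le (hU : IsOpen U) (hu : ContDiffOn ℝ ∞ u U)
    (hx : x ∈ U) (i₀ : ι) (k : ℕ) :
    tangentialGradNorm b i₀ k (dirDeriv (b i₀) u) x ≤
      (Fintype.card ι : ℝ) ^ k * ‖iteratedFDeriv ℝ k (Δ u) x‖ +
        2 * tangentialGradNorm b i₀ (k + 1) u x := by
  induction k generalizing u with
  | zero => simpa [tangentialGradNorm_zero] using norm_fderiv_dirDeriv_normal_le b hU hu hx i₀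
  | succ k ih =>
    have hj (j : ι) : tangentialGradNorm b i₀ k (dirDeriv (b j) (dirDeriv (b i₀) u)) x ≤
        (Fintype.card ι : ℝ) ^ k * ‖iteratedFDeriv ℝ (k + 1) (Δ u) x‖ +
          2 * tangentialGradNorm b i₀ (k + 1) (dirDeriv (b j) u) x := by
      rw [tangentialGradNorm_eqOn b hU (dirDeriv_comm hU hu _ _) i₀ k hx]
      refine (ih (contDiffOn_dirDeriv hU hu (b j))).trans ?_
      gcongr
      exact norm_iteratedFDeriv_laplacian_dirDeriv_le hU hu hx k (b.norm_eq_one j)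
    calc tangentialGradNorm b i₀ (k + 1) (dirDeriv (b i₀) u) x
        ≤ ∑ j ∈ Finset.univ.erase i₀,
            ((Fintype.card ι : ℝ) ^ k * ‖iteratedFDeriv ℝ (k + 1) (Δ u) x‖ +
              2 * tangentialGradNorm b i₀ (k + 1) (dirDeriv (b j) u) x) :=
          Finset.sum_le_sum fun j _ => hj j
      _ = (Finset.univ.erase i₀).card *
            ((Fintype.card ι : ℝ) ^ k * ‖iteratedFDeriv ℝ (k + 1) (Δ u) x‖) +
              2 * tangentialGradNorm b i₀ (k + 1 + 1) u x := by
          rw [Finset.sum_add_distrib, Finset.sum_const, nsmul_eq_mul, ← Finset.mul_sum,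
            tangentialGradNorm_succ b i₀ (k + 1)]
      _ ≤ Fintype.card ι * ((Fintype.card ι : ℝ) ^ k * ‖iteratedFDeriv ℝ (k + 1) (Δ u) x‖) +
              2 * tangentialGradNorm b i₀ (k + 1 + 1) u x := by
          gcongr
          exact Finset.card_le_univ _
      _ = _ := by ring

lemma sum_tangentialGradNorm_dirDeriv_le (hU : IsOpen U) (hu : ContDiffOn ℝ ∞ u U) (hx : x ∈ U)
    (i₀ : ι) (k : ℕ) :
    ∑ j, tangentialGradNorm b i₀ k (dirDeriv (b j) u) x ≤
      (Fintype.card ι : ℝ) ^ k * ‖iteratedFDeriv ℝ k (Δ u) x‖ +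
        3 * tangentialGradNorm b i₀ (k + 1) u x := by
  rw [← Finset.add_sum_erase _ _ (Finset.mem_univ i₀), ← tangentialGradNorm_succ]
  linarith [tangentialGradNorm_dirDeriv_normal_le b hU hu hx i₀ k]

lemma norm_iteratedFDeriv_le_tangentialGradNorm_add (hU : IsOpen U) (hu : ContDiffOn ℝ ∞ u U)
    (hx : x ∈ U) (i₀ : ι) (k : ℕ) :
    ‖iteratedFDeriv ℝ (k + 2) u x‖ ≤ 3 ^ (k + 1) * (tangentialGradNorm b i₀ (k + 1) u x +
      (Fintype.card ι : ℝ) ^ k * ‖iteratedFDeriv ℝ k (Δ u) x‖) := by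
  induction k generalizing u with
  | zero =>
    have hfirst := sum_tangentialGradNorm_dirDeriv_le b hU hu hx i₀ 0
    have hsecond := norm_iteratedFDeriv_succ_le_sum b hU hu hx 1
    simp only [tangentialGradNorm_zero, norm_iteratedFDeriv_one, pow_zero, one_mul, zero_add,
      Nat.reduceAdd, pow_one] at hfirst hsecond ⊢
    linarith [norm_nonneg (iteratedFDeriv ℝ 0 (Δ u) x)]
  | succ k ih =>
    have hj (j : ι) : ‖iteratedFDeriv ℝ (k + 2) (dirDeriv (b j) u) x‖ ≤
        3 ^ (k + 1) * (tangentialGradNorm b i₀ (k + 1) (dirDeriv (b j) u) x +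
          (Fintype.card ι : ℝ) ^ k * ‖iteratedFDeriv ℝ (k + 1) (Δ u) x‖) := by
      refine (ih (contDiffOn_dirDeriv hU hu (b j))).trans ?_
      gcongr
      exact norm_iteratedFDeriv_laplacian_dirDeriv_le hU hu hx k (b.norm_eq_one j)
    calc ‖iteratedFDeriv ℝ (k + 1 + 2) u x‖
        ≤ ∑ j, ‖iteratedFDeriv ℝ (k + 2) (dirDeriv (b j) u) x‖ :=
          norm_iteratedFDeriv_succ_le_sum b hU hu hx (k + 2)
      _ ≤ ∑ j, 3 ^ (k + 1) * (tangentialGradNorm b i₀ (k + 1) (dirDeriv (b j) u) x +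
            (Fintype.card ι : ℝ) ^ k * ‖iteratedFDeriv ℝ (k + 1) (Δ u) x‖) :=
          Finset.sum_le_sum fun j _ => hj j
      _ = 3 ^ (k + 1) * ((∑ j, tangentialGradNorm b i₀ (k + 1) (dirDeriv (b j) u) x) +
            (Fintype.card ι : ℝ) ^ (k + 1) * ‖iteratedFDeriv ℝ (k + 1) (Δ u) x‖) := by
          rw [← Finset.mul_sum, Finset.sum_add_distrib, Finset.sum_const, Finset.card_univ,
            nsmul_eq_mul]
          ring
      _ ≤ 3 ^ (k + 1) * (3 * (tangentialGradNorm b i₀ (k + 2) u x +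
            (Fintype.card ι : ℝ) ^ (k + 1) * ‖iteratedFDeriv ℝ (k + 1) (Δ u) x‖)) := by
          have hpos : 0 ≤ (Fintype.card ι : ℝ) ^ (k + 1) *
            ‖iteratedFDeriv ℝ (k + 1) (Δ u) x‖ := by positivity
          gcongr
          linarith [sum_tangentialGradNorm_dirDeriv_le b hU hu hx i₀ (k + 1)]
      _ = _ := by ring

lemma sq_norm_iteratedFDeriv_le_tangentialGradNorm_add (hU : IsOpen U) (hu : ContDiffOn ℝ ∞ u U)
    (hx : x ∈ U) (i₀ : ι) (k : ℕ) :
    ‖iteratedFDeriv ℝ (k + 2) u x‖ ^ 2 ≤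
      2 * (3 ^ (k + 1)) ^ 2 * (1 + ((Fintype.card ι : ℝ) ^ k) ^ 2) *
        (tangentialGradNorm b i₀ (k + 1) u x ^ 2 + ‖iteratedFDeriv ℝ k (Δ u) x‖ ^ 2) := by
  set N := (Fintype.card ι : ℝ) ^ k
  set T := tangentialGradNorm b i₀ (k + 1) u x
  set L := ‖iteratedFDeriv ℝ k (Δ u) x‖
  calc ‖iteratedFDeriv ℝ (k + 2) u x‖ ^ 2 ≤ (3 ^ (k + 1) * (T + N * L)) ^ 2 := by
        gcongr
        exact norm_iteratedFDeriv_le_tangentialGradNorm_add b hU hu hx i₀ k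
    _ ≤ (3 ^ (k + 1)) ^ 2 * (2 * (T ^ 2 + (N * L) ^ 2)) := by
        rw [mul_pow]
        gcongr
        exact add_sq_le
    _ ≤ 2 * (3 ^ (k + 1)) ^ 2 * (1 + N ^ 2) * (T ^ 2 + L ^ 2) := by
        have hpos : 0 ≤ 2 * ((3 : ℝ) ^ (k + 1)) ^ 2 * (N ^ 2 * T ^ 2 + L ^ 2) := by positivity
        linarith

end TangentialDerivatives

end OrthonormalFrames

section SoftThreshold

/-- A smooth monotone version of the soft threshold at level `ε`: it vanishes on `[-ε, ε]` and is
the identity outside `[-2ε, 2ε]`. Composing with it turns a function vanishing on the boundary into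
an admissible compactly supported test function. -/
def softThreshold (ε s : ℝ) : ℝ := s * Real.smoothTransition ((s / ε) ^ 2 - 1)

lemma contDiff_softThreshold (ε : ℝ) : ContDiff ℝ ∞ (softThreshold ε) :=
  contDiff_id.mul
    (Real.smoothTransition.contDiff.comp (((contDiff_id.div_const ε).pow 2).sub contDiff_const))

lemma deriv_softThreshold (ε s : ℝ) :
    deriv (softThreshold ε) s = Real.smoothTransition ((s / ε) ^ 2 - 1) +
      2 * (s / ε) ^ 2 * deriv Real.smoothTransition ((s / ε) ^ 2 - 1) := by
  have hinner : HasDerivAt (fun t : ℝ => (t / ε) ^ 2 - 1) (2 * (s / ε) * (1 / ε)) s := by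
    simpa using (((hasDerivAt_id s).div_const ε).pow 2).sub_const 1
  have houter : HasDerivAt Real.smoothTransition
      (deriv Real.smoothTransition ((s / ε) ^ 2 - 1)) ((s / ε) ^ 2 - 1) :=
    ((Real.smoothTransition.contDiff (n := 1)).differentiable one_ne_zero _).hasDerivAt
  have h := (hasDerivAt_id s).mul
    (HasDerivAt.comp (h₂ := Real.smoothTransition) s houter hinner)
  refine (h.congr_deriv ?_).deriv
  simp only [id, Function.comp_apply]
  ring

lemma smoothTransition_le_deriv_softThreshold (ε s : ℝ) :
    Real.smoothTransition ((s / ε) ^ 2 - 1) ≤ deriv (softThreshold ε) s := by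
  have hderiv := Real.smoothTransition.monotone.deriv_nonneg (x := (s / ε) ^ 2 - 1)
  rw [deriv_softThreshold]
  exact le_add_of_nonneg_right (by positivity)

lemma deriv_softThreshold_nonneg (ε s : ℝ) : 0 ≤ deriv (softThreshold ε) s :=
  (Real.smoothTransition.nonneg _).trans (smoothTransition_le_deriv_softThreshold ε s)

lemma softThreshold_sq_le (ε s : ℝ) :
    softThreshold ε s ^ 2 ≤ s ^ 2 * deriv (softThreshold ε) s := by
  rw [softThreshold, mul_pow]
  gcongr
  exact (pow_le_of_le_one (Real.smoothTransition.nonneg _) (Real.smoothTransition.le_one _)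
    two_ne_zero).trans (smoothTransition_le_deriv_softThreshold ε s)

lemma softThreshold_sq_le_sq (ε s : ℝ) : softThreshold ε s ^ 2 ≤ s ^ 2 := by
  rw [softThreshold, mul_pow]
  exact mul_le_of_le_one_right (sq_nonneg s)
    (pow_le_one₀ (Real.smoothTransition.nonneg _) (Real.smoothTransition.le_one _))

lemma softThreshold_eq_zero {ε s : ℝ} (h : |s| < ε) : softThreshold ε s = 0 := by
  have hsε : |s / ε| ≤ 1 := by
    rw [abs_div, abs_of_pos ((abs_nonneg s).trans_lt h)]
    exact div_le_one_of_le₀ h.le ((abs_nonneg s).trans h.le)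
  rw [softThreshold, Real.smoothTransition.zero_of_nonpos, mul_zero]
  linarith [(sq_le_one_iff_abs_le_one _).2 hsε]

lemma deriv_softThreshold_eq_zero {ε s : ℝ} (h : |s| < ε) : deriv (softThreshold ε) s = 0 := by
  have hzero : softThreshold ε =ᶠ[nhds s] fun _ => 0 := by
    filter_upwards [continuous_abs.continuousAt.eventually_lt_const h] with t ht
    exact softThreshold_eq_zero ht
  rw [hzero.deriv_eq, deriv_const]

lemma deriv_smoothTransition_eq_zero {t : ℝ} (ht : 1 < t) : deriv Real.smoothTransition t = 0 := by
  have hone : Real.smoothTransition =ᶠ[nhds t] fun _ => 1 := by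
    filter_upwards [lt_mem_nhds ht] with s hs
    exact Real.smoothTransition.one_of_one_le hs.le
  rw [hone.deriv_eq, deriv_const]

lemma deriv_softThreshold_eq_one {ε s : ℝ} (hε : 0 < ε) (h : 2 * ε < |s|) :
    deriv (softThreshold ε) s = 1 := by
  have hsε : 2 < |s / ε| := by rwa [abs_div, abs_of_pos hε, lt_div_iff₀ hε]
  have hsq : 1 < (s / ε) ^ 2 - 1 := by
    rw [← sq_abs]
    nlinarith
  rw [deriv_softThreshold, Real.smoothTransition.one_of_one_le hsq.le,
    deriv_smoothTransition_eq_zero hsq, mul_zero, add_zero]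

lemma exists_deriv_softThreshold_le : ∃ M : ℝ, 1 ≤ M ∧ ∀ ε s, deriv (softThreshold ε) s ≤ M := by
  have hcont : Continuous (deriv Real.smoothTransition) :=
    Real.smoothTransition.contDiff.continuous_deriv (n := 1) le_rfl
  obtain ⟨B, hB⟩ := (isCompact_Icc (a := (-1 : ℝ)) (b := 1)).bddAbove_image hcont.continuousOn
  have hB0 : 0 ≤ B := Real.smoothTransition.monotone.deriv_nonneg.trans
    (hB (mem_image_of_mem _ (right_mem_Icc.2 (by norm_num))))
  refine ⟨1 + 4 * B, by linarith, fun ε s => ?_⟩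
  rw [deriv_softThreshold]
  have hsq := sq_nonneg (s / ε)
  refine add_le_add (Real.smoothTransition.le_one _) ?_
  rcases le_or_gt ((s / ε) ^ 2 - 1) 1 with h | h
  · have hle := hB (mem_image_of_mem _ (⟨by linarith, h⟩ : (s / ε) ^ 2 - 1 ∈ Icc (-1 : ℝ) 1))
    exact mul_le_mul (by linarith) hle Real.smoothTransition.monotone.deriv_nonneg (by norm_num)
  · rw [deriv_smoothTransition_eq_zero h, mul_zero]
    positivity

end SoftThreshold

section CompactSupport

variable {E : Type*} [NormedAddCommGroup E] {U K : Set E} {u : E → ℝ}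

lemma tsupport_subset_of_eq_zero (hK : IsClosed K) (h0 : ∀ x ∉ K, u x = 0) : tsupport u ⊆ K :=
  closure_minimal (fun x hx => by_contra fun h => hx (h0 x h)) hK

lemma continuous_of_eq_zero_off_isCompact (hU : IsOpen U) (hK : IsCompact K) (hKU : K ⊆ U)
    (hu : ContinuousOn u U) (h0 : ∀ x ∉ K, u x = 0) : Continuous u :=
  continuous_of_tsupport fun _ hx =>
    hu.continuousAt (hU.mem_nhds (hKU (tsupport_subset_of_eq_zero hK.isClosed h0 hx)))

lemma integrable_of_eq_zero_off_isCompact [MeasurableSpace E] [BorelSpace E]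
    {ν : Measure E} [IsFiniteMeasureOnCompacts ν] (hU : IsOpen U) (hK : IsCompact K)
    (hKU : K ⊆ U) (hu : ContinuousOn u U) (h0 : ∀ x ∉ K, u x = 0) : Integrable u ν :=
  (continuous_of_eq_zero_off_isCompact hU hK hKU hu h0).integrable_of_hasCompactSupport
    (HasCompactSupport.intro hK h0)

lemma integrableOn_of_eq_zero_off_isCompact [MeasurableSpace E] [BorelSpace E]
    {ν : Measure E} [IsFiniteMeasureOnCompacts ν] (hU : IsOpen U) (hK : IsCompact K)
    (hKU : K ⊆ U) (hu : ContinuousOn u U) (h0 : ∀ x ∈ U, x ∉ K → u x = 0) :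
    IntegrableOn u U ν :=
  ((hu.mono hKU).integrableOn_compact hK).of_forall_sdiff_eq_zero hU.measurableSet
    fun x hx => h0 x hx.1 hx.2

variable [NormedSpace ℝ E]

lemma contDiff_of_eq_zero_off_isCompact (hU : IsOpen U) (hK : IsCompact K) (hKU : K ⊆ U)
    (hu : ContDiffOn ℝ ∞ u U) (h0 : ∀ x ∉ K, u x = 0) : ContDiff ℝ ∞ u :=
  contDiff_iff_contDiffAt.2 fun x => by
    by_cases hx : x ∈ U
    · exact hu.contDiffAt (hU.mem_nhds hx)
    · exact contDiffAt_const.congr_of_eventuallyEq (Filter.eventually_of_mem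
        (hK.isClosed.isOpen_compl.mem_nhds fun h => hx (hKU h)) h0)

lemma fderiv_eq_zero_of_notMem_tsupport {x : E} (hx : x ∉ tsupport u) : fderiv ℝ u x = 0 :=
  image_eq_zero_of_notMem_tsupport fun h => hx (tsupport_fderiv_subset ℝ h)

end CompactSupport

section TruncatedTest

variable {E : Type*} [NormedAddCommGroup E] {U : Set E} {w ζ : E → ℝ} {ε : ℝ} {x : E}

/-- The Caccioppoli test function `ζ² φ_ε(w)`, extended by zero off `U`, where `φ_ε` is the soft
threshold. -/
def truncatedTest (U : Set E) (ζ w : E → ℝ) (ε : ℝ) : E → ℝ :=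
  U.indicator fun x => ζ x ^ 2 * softThreshold ε (w x)

/-- A set off which `truncatedTest U ζ w ε` and its gradient vanish. -/
def truncationCore (U : Set E) (ζ w : E → ℝ) (ε : ℝ) : Set E :=
  {x | x ∈ U ∧ ε ≤ |w x| ∧ x ∈ tsupport ζ}

lemma truncationCore_subset : truncationCore U ζ w ε ⊆ U := fun _ hx => hx.1

lemma abs_lt_or_eq_zero_of_notMem_truncationCore (hxU : x ∈ U) (hx : x ∉ truncationCore U ζ w ε) :
    |w x| < ε ∨ ζ x = 0 := by
  by_contra! h
  exact hx ⟨hxU, h.1, subset_tsupport ζ h.2⟩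

lemma truncatedTest_eq_zero (hx : x ∉ truncationCore U ζ w ε) : truncatedTest U ζ w ε x = 0 := by
  by_cases hxU : x ∈ U
  · rw [truncatedTest, indicator_of_mem hxU]
    rcases abs_lt_or_eq_zero_of_notMem_truncationCore hxU hx with h | h
    · rw [softThreshold_eq_zero h, mul_zero]
    · rw [h, zero_pow two_ne_zero, zero_mul]
  · rw [truncatedTest, indicator_of_notMem hxU]

variable [NormedSpace ℝ E]

lemma contDiffOn_truncatedTest (hζ : ContDiffOn ℝ ∞ ζ U) (hw : ContDiffOn ℝ ∞ w U) :
    ContDiffOn ℝ ∞ (truncatedTest U ζ w ε) U :=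
  ((hζ.pow 2).mul ((contDiff_softThreshold ε).comp_contDiffOn hw)).congr fun _ hx =>
    indicator_of_mem hx _

lemma fderiv_truncatedTest (hU : IsOpen U) (hζ : ContDiffOn ℝ ∞ ζ U) (hw : ContDiffOn ℝ ∞ w U)
    (hx : x ∈ U) :
    fderiv ℝ (truncatedTest U ζ w ε) x = (2 * ζ x * softThreshold ε (w x)) • fderiv ℝ ζ x +
      (ζ x ^ 2 * deriv (softThreshold ε) (w x)) • fderiv ℝ w x := by
  have heq : truncatedTest U ζ w ε =ᶠ[nhds x] fun y => ζ y ^ 2 * softThreshold ε (w y) :=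
    eqOn_indicator.eventuallyEq_of_mem (hU.mem_nhds hx)
  have hζx := (differentiableAt_of_contDiffOn hU hζ hx).hasFDerivAt.pow 2
  have hφ := ((contDiff_softThreshold ε).differentiable (by simp) (w x)).hasDerivAt
  have hφw := hφ.comp_hasFDerivAt x (differentiableAt_of_contDiffOn hU hw hx).hasFDerivAt
  rw [heq.fderiv_eq]
  refine (hζx.mul hφw).fderiv.trans ?_
  ext v
  simp
  ring

lemma norm_fderiv_truncatedTest_sq_le (hU : IsOpen U) (hζ : ContDiffOn ℝ ∞ ζ U)
    (hζ1 : ∀ x, |ζ x| ≤ 1) (hw : ContDiffOn ℝ ∞ w U) {M : ℝ}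
    (hM : ∀ s, deriv (softThreshold ε) s ≤ M) (hx : x ∈ U) :
    ‖fderiv ℝ (truncatedTest U ζ w ε) x‖ ^ 2 ≤ 8 * (‖fderiv ℝ ζ x‖ ^ 2 * w x ^ 2) +
      2 * M * (ζ x ^ 2 * deriv (softThreshold ε) (w x) * ‖fderiv ℝ w x‖ ^ 2) := by
  have hd := deriv_softThreshold_nonneg ε (w x)
  have hζsq : ζ x ^ 2 ≤ 1 := (sq_le_one_iff_abs_le_one _).2 (hζ1 x)
  have hζφ : ζ x ^ 2 * softThreshold ε (w x) ^ 2 ≤ 1 * w x ^ 2 :=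
    mul_le_mul hζsq (softThreshold_sq_le_sq ε (w x)) (sq_nonneg _) zero_le_one
  have hζd : ζ x ^ 2 * deriv (softThreshold ε) (w x) ≤ 1 * M :=
    mul_le_mul hζsq (hM _) hd zero_le_one
  rw [fderiv_truncatedTest hU hζ hw hx]
  calc ‖(2 * ζ x * softThreshold ε (w x)) • fderiv ℝ ζ x +
        (ζ x ^ 2 * deriv (softThreshold ε) (w x)) • fderiv ℝ w x‖ ^ 2
      ≤ (‖(2 * ζ x * softThreshold ε (w x)) • fderiv ℝ ζ x‖ +
          ‖(ζ x ^ 2 * deriv (softThreshold ε) (w x)) • fderiv ℝ w x‖) ^ 2 := by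
        gcongr
        exact norm_add_le _ _
    _ ≤ 2 * (‖(2 * ζ x * softThreshold ε (w x)) • fderiv ℝ ζ x‖ ^ 2 +
          ‖(ζ x ^ 2 * deriv (softThreshold ε) (w x)) • fderiv ℝ w x‖ ^ 2) := add_sq_le
    _ = 8 * (‖fderiv ℝ ζ x‖ ^ 2 * (ζ x ^ 2 * softThreshold ε (w x) ^ 2)) +
          2 * (ζ x ^ 2 * deriv (softThreshold ε) (w x)) *
            (ζ x ^ 2 * deriv (softThreshold ε) (w x) * ‖fderiv ℝ w x‖ ^ 2) := by
        simp only [norm_smul, Real.norm_eq_abs, mul_pow, sq_abs]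
        ring
    _ ≤ _ := by
        rw [one_mul] at hζφ hζd
        gcongr

end TruncatedTest

section Gradient

variable {E : Type*} [NormedAddCommGroup E] [InnerProductSpace ℝ E] [FiniteDimensional ℝ E]
  {U : Set E} {w ζ : E → ℝ} {ε : ℝ} {x : E}

lemma fderiv_apply_gradient_eq_sum {ι : Type*} [Fintype ι] (b : OrthonormalBasis ι ℝ E)
    (u w : E → ℝ) (x : E) :
    fderiv ℝ u x (∇ w x) = ∑ j, dirDeriv (b j) u x * dirDeriv (b j) w x := by
  rw [fderiv_eq_sum_dirDeriv_smul b u x]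
  simp [dirDeriv, real_inner_comm (∇ w x)]

lemma norm_gradient (u : E → ℝ) (x : E) : ‖∇ u x‖ = ‖fderiv ℝ u x‖ := by
  rw [← toDual_gradient, LinearIsometryEquiv.norm_map]

lemma fderiv_apply_gradient_self (u : E → ℝ) (x : E) :
    fderiv ℝ u x (∇ u x) = ‖fderiv ℝ u x‖ ^ 2 := by
  rw [← inner_gradient_left, real_inner_self_eq_norm_sq, norm_gradient]

lemma le_fderiv_truncatedTest_apply_gradient (hU : IsOpen U) (hζ : ContDiffOn ℝ ∞ ζ U)
    (hw : ContDiffOn ℝ ∞ w U) (hx : x ∈ U) :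
    3 / 4 * (ζ x ^ 2 * deriv (softThreshold ε) (w x) * ‖fderiv ℝ w x‖ ^ 2) -
        4 * (‖fderiv ℝ ζ x‖ ^ 2 * w x ^ 2) ≤
      fderiv ℝ (truncatedTest U ζ w ε) x (∇ w x) := by
  set d := deriv (softThreshold ε) (w x)
  have hd : 0 ≤ d := deriv_softThreshold_nonneg ε (w x)
  have hpair : (fderiv ℝ ζ x (∇ w x)) ^ 2 ≤ (‖fderiv ℝ ζ x‖ * ‖fderiv ℝ w x‖) ^ 2 := by
    rw [← norm_gradient w]
    exact sq_le_sq.2 (by simpa using (fderiv ℝ ζ x).le_opNorm (∇ w x))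
  have hsq : (2 * ζ x * softThreshold ε (w x) * fderiv ℝ ζ x (∇ w x)) ^ 2 ≤
      (1 / 4 * (ζ x ^ 2 * d * ‖fderiv ℝ w x‖ ^ 2) + 4 * (‖fderiv ℝ ζ x‖ ^ 2 * w x ^ 2)) ^ 2 := by
    have hprod := mul_le_mul (mul_le_mul_of_nonneg_left (softThreshold_sq_le ε (w x))
      (sq_nonneg (ζ x))) hpair (sq_nonneg _) (by positivity)
    nlinarith [sq_nonneg (1 / 4 * (ζ x ^ 2 * d * ‖fderiv ℝ w x‖ ^ 2) -
      4 * (‖fderiv ℝ ζ x‖ ^ 2 * w x ^ 2))]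
  have hcross := (abs_le.1 (abs_le_of_sq_le_sq hsq (by positivity))).1
  rw [fderiv_truncatedTest hU hζ hw hx, add_apply, smul_apply, smul_apply,
    fderiv_apply_gradient_self, smul_eq_mul, smul_eq_mul]
  linarith

end Gradient

section Energy

variable {E : Type*} [NormedAddCommGroup E] [InnerProductSpace ℝ E] [FiniteDimensional ℝ E]
  [MeasurableSpace E] [BorelSpace E] {U : Set E} {w ζ Ψ : E → ℝ} {ε : ℝ}

/-- `HasNegNormLE U f K` says that the `H⁻¹(U)` norm of `f`, that is, the norm dual to the Dirichlet
norm on test functions, is at most `K`. -/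
def HasNegNormLE (U : Set E) (f : E → ℝ) (K : ℝ) : Prop :=
  ∀ Ψ : E → ℝ, ContDiff ℝ ∞ Ψ → HasCompactSupport Ψ → tsupport Ψ ⊆ U →
    |∫ x, Ψ x * f x| ≤ K * √(∫ x, ‖fderiv ℝ Ψ x‖ ^ 2)

lemma integral_mul_laplacian_eq_neg (hU : IsOpen U) (hw : ContDiffOn ℝ ∞ w U)
    (hΨ : ContDiff ℝ ∞ Ψ) (hΨc : HasCompactSupport Ψ) (hΨU : tsupport Ψ ⊆ U) :
    ∫ x, Ψ x * Δ w x = -∫ x, fderiv ℝ Ψ x (∇ w x) := by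
  let b := stdOrthonormalBasis ℝ E
  have hzero : ∀ x ∉ tsupport Ψ, Ψ x = 0 := fun x => image_eq_zero_of_notMem_tsupport
  have hint {f g : E → ℝ} (hf : ContinuousOn f U) (hg : ContinuousOn g U)
      (h0 : ∀ x ∉ tsupport Ψ, f x = 0) : Integrable fun x => f x * g x :=
    integrable_of_eq_zero_off_isCompact hU hΨc hΨU (hf.mul hg) fun x hx => by
      rw [h0 x hx, zero_mul]
  have hdw (j) := contDiffOn_dirDeriv hU hw (b j)
  have hparts (j) : Integrable fun x => dirDeriv (b j) Ψ x * dirDeriv (b j) w x :=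
    hint (contDiffOn_dirDeriv hU hΨ.contDiffOn _).continuousOn (hdw j).continuousOn fun x hx => by
      rw [dirDeriv, fderiv_eq_zero_of_notMem_tsupport hx, zero_apply]
  have hsecond (j) : Integrable fun x => Ψ x * dirDeriv (b j) (dirDeriv (b j) w) x :=
    hint hΨ.continuous.continuousOn (contDiffOn_dirDeriv hU (hdw j) _).continuousOn hzero
  calc ∫ x, Ψ x * Δ w x
      = ∫ x, ∑ j, Ψ x * dirDeriv (b j) (dirDeriv (b j) w) x := by
        congr 1 with x
        by_cases hx : x ∈ U
        · rw [laplacian_eqOn_sum_dirDeriv b hU hw hx, Finset.mul_sum]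
        · simp [hzero x fun h => hx (hΨU h)]
    _ = -∫ x, fderiv ℝ Ψ x (∇ w x) := by
        simp_rw [fderiv_apply_gradient_eq_sum b]
        rw [integral_finsetSum _ fun j _ => hsecond j, integral_finsetSum _ fun j _ => hparts j,
          ← Finset.sum_neg_distrib]
        refine Finset.sum_congr rfl fun j _ => ?_
        exact integral_mul_fderiv_eq_neg_fderiv_mul_of_integrable (hparts j) (hsecond j)
          (hint hΨ.continuous.continuousOn (hdw j).continuousOn hzero)
          (fun x _ => hΨ.differentiable (by simp) x)
          fun x hx => differentiableAt_of_contDiffOn hU (hdw j) (hΨU hx)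

lemma ae_dirDeriv_eq_zero_of_eq_zero (hU : IsOpen U) (hw : ContDiffOn ℝ ∞ w U) (v : E) :
    ∀ᵐ x : E, x ∈ U → w x = 0 → dirDeriv v w x = 0 := by
  let A : Set E := (U ∩ w ⁻¹' {0}) ∩ (U ∩ dirDeriv v w ⁻¹' {0}ᶜ)
  have hA : MeasurableSet A := by
    refine MeasurableSet.inter ?_
      ((contDiffOn_dirDeriv hU hw v).continuousOn.isOpen_inter_preimage hU
        isOpen_compl_singleton).measurableSet
    obtain ⟨s, hs, h⟩ := continuousOn_iff_isClosed.1 hw.continuousOn {0} isClosed_singleton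
    rw [inter_comm U, h]
    exact hs.measurableSet.inter hU.measurableSet
  have hline (y : E) : ∀ᵐ t : ℝ, y + LinearMap.toSpanSingleton ℝ E v t ∈ Aᶜ := by
    simp only [LinearMap.toSpanSingleton_apply, ae_iff, mem_compl_iff, not_not]
    -- A zero of `t ↦ w (y + t v)` with nonzero derivative is isolated.
    have hdisc : DiscreteTopology {t : ℝ | y + t • v ∈ A} := by
      rw [discreteTopology_subtype_iff]
      rintro t ⟨⟨hU', -⟩, -, hne⟩
      rw [Filter.inf_principal_eq_bot]
      filter_upwards [(hasDerivAt_comp_add_smul hU hw hU').eventually_ne (c := 0) hne] with s hs hsA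
      exact hs hsA.1.2
    exact (countable_coe_iff.1
      (TopologicalSpace.separableSpace_iff_countable.1 inferInstance)).measure_zero _
  filter_upwards [ae_mem_of_ae_add_linearMap_mem (LinearMap.toSpanSingleton ℝ E v) volume volume
    hA.compl hline] with x hxA hxU hwx
  by_contra hne
  exact hxA ⟨⟨hxU, hwx⟩, hxU, hne⟩

lemma ae_fderiv_eq_zero_of_eq_zero (hU : IsOpen U) (hw : ContDiffOn ℝ ∞ w U) :
    ∀ᵐ x ∂volume.restrict U, w x = 0 → fderiv ℝ w x = 0 := by
  let b := stdOrthonormalBasis ℝ E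
  rw [ae_restrict_iff' hU.measurableSet]
  filter_upwards [ae_all_iff.2 fun j => ae_dirDeriv_eq_zero_of_eq_zero hU hw (b j)]
    with x hx hxU hwx
  rw [fderiv_eq_sum_dirDeriv_smul b w x]
  exact Finset.sum_eq_zero fun j _ => by rw [hx j hxU hwx, zero_smul]

lemma le_of_le_mul_sqrt {A B K M X : ℝ} (hB : 0 ≤ B) (hM : 1 ≤ M) (hX : 0 ≤ X)
    (hXle : X ≤ 8 * B + 2 * M * A) (h : 3 / 4 * A - 4 * B ≤ K * √X) :
    A ≤ 10 * B + 4 * M * K ^ 2 := by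
  have hsq := Real.sq_sqrt hX
  have hyoung : 8 * M * (K * √X) ≤ 16 * M ^ 2 * K ^ 2 + X := by
    nlinarith [sq_nonneg (4 * M * K - √X)]
  have hscaled : 4 * M * A ≤ 4 * M * (10 * B + 4 * M * K ^ 2) := by
    nlinarith [mul_le_mul_of_nonneg_left h (by positivity : 0 ≤ 8 * M)]
  exact le_of_mul_le_mul_left hscaled (by positivity)

lemma integrableOn_truncatedEnergy (hU : IsOpen U) (hw : ContDiffOn ℝ ∞ w U)
    (hζ : Continuous ζ) (hcore : IsCompact (truncationCore U ζ w ε)) :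
    IntegrableOn (fun x => ζ x ^ 2 * deriv (softThreshold ε) (w x) * ‖fderiv ℝ w x‖ ^ 2) U := by
  refine integrableOn_of_eq_zero_off_isCompact hU hcore truncationCore_subset
    (((hζ.continuousOn.pow 2).mul (((contDiff_softThreshold ε).continuous_deriv
      (by simp)).comp_continuousOn hw.continuousOn)).mul ((continuousOn_norm_fderiv hU hw).pow 2))
    fun x hxU hx => ?_
  rcases abs_lt_or_eq_zero_of_notMem_truncationCore hxU hx with h | h
  · rw [deriv_softThreshold_eq_zero h, mul_zero, zero_mul]
  · rw [h, zero_pow two_ne_zero, zero_mul, zero_mul]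

lemma integral_fderiv_truncatedTest_apply_gradient_le (hU : IsOpen U) (hw : ContDiffOn ℝ ∞ w U)
    (hζ : ContDiff ℝ ∞ ζ) (hcore : IsCompact (truncationCore U ζ w ε)) {K : ℝ}
    (hK : HasNegNormLE U (Δ w) K) :
    IntegrableOn (fun x => fderiv ℝ (truncatedTest U ζ w ε) x (∇ w x)) U ∧
    IntegrableOn (fun x => ‖fderiv ℝ (truncatedTest U ζ w ε) x‖ ^ 2) U ∧
    ∫ x in U, fderiv ℝ (truncatedTest U ζ w ε) x (∇ w x) ≤
      K * √(∫ x in U, ‖fderiv ℝ (truncatedTest U ζ w ε) x‖ ^ 2) := by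
  set Ψ := truncatedTest U ζ w ε
  have hΨU : ContDiffOn ℝ ∞ Ψ U := contDiffOn_truncatedTest hζ.contDiffOn hw
  have hΨ0 : ∀ x ∉ truncationCore U ζ w ε, Ψ x = 0 := fun x hx => truncatedTest_eq_zero hx
  have hΨ := contDiff_of_eq_zero_off_isCompact hU hcore truncationCore_subset hΨU hΨ0
  have hΨt := tsupport_subset_of_eq_zero hcore.isClosed hΨ0
  have hdΨ0 : ∀ x ∉ truncationCore U ζ w ε, fderiv ℝ Ψ x = 0 := fun x hx =>
    fderiv_eq_zero_of_notMem_tsupport fun h => hx (hΨt h)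
  refine ⟨?_, integrableOn_of_eq_zero_off_isCompact hU hcore truncationCore_subset
      ((continuousOn_norm_fderiv hU hΨU).pow 2) fun x _ hx => by simp [hdΨ0 x hx], ?_⟩
  · refine integrableOn_of_eq_zero_off_isCompact hU hcore truncationCore_subset ?_ fun x _ hx => by
      rw [hdΨ0 x hx, zero_apply]
    simp_rw [fderiv_apply_gradient_eq_sum (stdOrthonormalBasis ℝ E)]
    exact continuousOn_finsetSum _ fun j _ => (contDiffOn_dirDeriv hU hΨU _).continuousOn.mul
      (contDiffOn_dirDeriv hU hw _).continuousOn
  · have htest := hK Ψ hΨ (HasCompactSupport.intro hcore hΨ0) (hΨt.trans truncationCore_subset)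
    rw [integral_mul_laplacian_eq_neg hU hw hΨ (HasCompactSupport.intro hcore hΨ0)
      (hΨt.trans truncationCore_subset), abs_neg,
      ← setIntegral_eq_integral_of_forall_compl_eq_zero (s := U) (fun x hx => by
        rw [hdΨ0 x fun h => hx h.1, zero_apply]),
      ← setIntegral_eq_integral_of_forall_compl_eq_zero (s := U) (f := fun x => ‖fderiv ℝ Ψ x‖ ^ 2)
        (fun x hx => by simp [hdΨ0 x fun h => hx h.1])] at htest
    exact (le_abs_self _).trans htest

lemma integral_truncatedEnergy_le (hU : IsOpen U) (hw : ContDiffOn ℝ ∞ w U)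
    (hζ : ContDiff ℝ ∞ ζ) (hζ1 : ∀ x, |ζ x| ≤ 1) (hcore : IsCompact (truncationCore U ζ w ε))
    {K M : ℝ} (hM1 : 1 ≤ M) (hM : ∀ s, deriv (softThreshold ε) s ≤ M)
    (hK : HasNegNormLE U (Δ w) K)
    (hB : IntegrableOn (fun x => ‖fderiv ℝ ζ x‖ ^ 2 * w x ^ 2) U) :
    ∫ x in U, ζ x ^ 2 * deriv (softThreshold ε) (w x) * ‖fderiv ℝ w x‖ ^ 2 ≤
      10 * (∫ x in U, ‖fderiv ℝ ζ x‖ ^ 2 * w x ^ 2) + 4 * M * K ^ 2 := by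
  have hA := integrableOn_truncatedEnergy hU hw hζ.continuous hcore
  obtain ⟨hpair, hX, htest⟩ := integral_fderiv_truncatedTest_apply_gradient_le hU hw hζ hcore hK
  refine le_of_le_mul_sqrt (integral_nonneg fun x => by positivity) hM1
    (integral_nonneg fun x => sq_nonneg _) ?_ (le_trans ?_ htest)
  · rw [← integral_const_mul, ← integral_const_mul, ← integral_add (hB.const_mul 8)
      (hA.const_mul (2 * M))]
    exact setIntegral_mono_on hX ((hB.const_mul 8).add (hA.const_mul _)) hU.measurableSet
      fun x hx => norm_fderiv_truncatedTest_sq_le hU hζ.contDiffOn hζ1 hw hM hx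
  · rw [← integral_const_mul, ← integral_const_mul, ← integral_sub (hA.const_mul _)
      (hB.const_mul 4)]
    exact setIntegral_mono_on ((hA.const_mul _).sub (hB.const_mul 4)) hpair hU.measurableSet
      fun x hx => le_fderiv_truncatedTest_apply_gradient hU hζ.contDiffOn hw hx

/-- The gradient of `w` vanishes almost everywhere on `{w = 0}`, so nothing is lost when the
truncation level tends to zero. -/
lemma lintegral_mul_norm_fderiv_sq_le_of_forall_truncated (hU : IsOpen U) (hw : ContDiffOn ℝ ∞ w U)
    (hζ : Continuous ζ) {C : ℝ≥0∞}
    (h : ∀ ε > 0, ∫⁻ x in U, ENNReal.ofReal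
      (ζ x ^ 2 * deriv (softThreshold ε) (w x) * ‖fderiv ℝ w x‖ ^ 2) ≤ C) :
    ∫⁻ x in U, ENNReal.ofReal (ζ x ^ 2 * ‖fderiv ℝ w x‖ ^ 2) ≤ C := by
  let F (m : ℕ) (x : E) := ENNReal.ofReal
    (ζ x ^ 2 * deriv (softThreshold (1 / ((m : ℝ) + 1))) (w x) * ‖fderiv ℝ w x‖ ^ 2)
  have hlim : ∀ᵐ x ∂volume.restrict U, ENNReal.ofReal (ζ x ^ 2 * ‖fderiv ℝ w x‖ ^ 2) ≤
      Filter.liminf (fun m => F m x) Filter.atTop := by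
    filter_upwards [ae_fderiv_eq_zero_of_eq_zero hU hw] with x hx
    by_cases hwx : w x = 0
    · simp [hx hwx]
    · refine (Filter.Tendsto.liminf_eq (tendsto_const_nhds.congr' ?_)).ge
      have hsmall : ∀ᶠ m : ℕ in Filter.atTop, 1 / ((m : ℝ) + 1) < |w x| / 2 :=
        tendsto_one_div_add_atTop_nhds_zero_nat.eventually_lt_const
          (half_pos (abs_pos.2 hwx))
      filter_upwards [hsmall] with m hm
      simp only [F]
      rw [deriv_softThreshold_eq_one Nat.one_div_pos_of_nat (by linarith), mul_one]
  have hmeas (m : ℕ) : AEMeasurable (F m) (volume.restrict U) := by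
    refine AEMeasurable.ennreal_ofReal (ContinuousOn.aemeasurable ?_ hU.measurableSet)
    exact ((hζ.continuousOn.pow 2).mul (((contDiff_softThreshold _).continuous_deriv
      (by simp)).comp_continuousOn hw.continuousOn)).mul ((continuousOn_norm_fderiv hU hw).pow 2)
  calc ∫⁻ x in U, ENNReal.ofReal (ζ x ^ 2 * ‖fderiv ℝ w x‖ ^ 2)
      ≤ ∫⁻ x in U, Filter.liminf (fun m => F m x) Filter.atTop := lintegral_mono_ae hlim
    _ ≤ Filter.liminf (fun m => ∫⁻ x in U, F m x) Filter.atTop := lintegral_liminf_le' hmeas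
    _ ≤ C := Filter.liminf_le_of_le (by isBoundedDefault) fun c hc => by
        obtain ⟨m, hm⟩ := hc.exists
        exact hm.trans (h _ Nat.one_div_pos_of_nat)

variable (E) in
/-- The boundary condition `w = 0` enters through the compactness of the sets
`{ε ≤ |w|} ∩ tsupport ζ`. -/
theorem exists_caccioppoli : ∃ C : ℝ, 0 < C ∧ ∀ {U : Set E} {w ζ : E → ℝ} {K : ℝ}, IsOpen U →
    ContDiffOn ℝ ∞ w U → ContDiff ℝ ∞ ζ → (∀ x, |ζ x| ≤ 1) →
    (∀ ε > 0, IsCompact (truncationCore U ζ w ε)) → HasNegNormLE U (Δ w) K →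
    ∫⁻ x in U, ENNReal.ofReal (ζ x ^ 2 * ‖fderiv ℝ w x‖ ^ 2) ≤ ENNReal.ofReal C *
      ((∫⁻ x in U, ENNReal.ofReal (‖fderiv ℝ ζ x‖ ^ 2 * w x ^ 2)) + ENNReal.ofReal (K ^ 2)) := by
  obtain ⟨M, hM1, hM⟩ := exists_deriv_softThreshold_le
  refine ⟨10 + 4 * M, by linarith, fun {U w ζ K} hU hw hζ hζ1 hcore hK => ?_⟩
  rcases eq_or_ne (∫⁻ x in U, ENNReal.ofReal (‖fderiv ℝ ζ x‖ ^ 2 * w x ^ 2)) ⊤ with htop | hfin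
  · rw [htop, top_add, ENNReal.mul_top (ENNReal.ofReal_pos.2 (by linarith)).ne']
    exact le_top
  have hpos : ∀ x, 0 ≤ ‖fderiv ℝ ζ x‖ ^ 2 * w x ^ 2 := fun x => by positivity
  have hB : IntegrableOn (fun x => ‖fderiv ℝ ζ x‖ ^ 2 * w x ^ 2) U :=
    (lintegral_ofReal_ne_top_iff_integrable
      ((((continuousOn_norm_fderiv hU hζ.contDiffOn).pow 2).mul
        (hw.continuousOn.pow 2)).aestronglyMeasurable hU.measurableSet) (.of_forall hpos)).1 hfin
  have hB0 : 0 ≤ ∫ x in U, ‖fderiv ℝ ζ x‖ ^ 2 * w x ^ 2 := integral_nonneg hpos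
  refine lintegral_mul_norm_fderiv_sq_le_of_forall_truncated hU hw hζ.continuous fun ε hε => ?_
  have hA := integrableOn_truncatedEnergy hU hw hζ.continuous (hcore ε hε)
  have hAle := integral_truncatedEnergy_le hU hw hζ hζ1 (hcore ε hε) hM1 (hM ε) hK hB
  rw [← ofReal_integral_eq_lintegral_ofReal hA (.of_forall fun x => by
      have := deriv_softThreshold_nonneg ε (w x); positivity),
    ← ofReal_integral_eq_lintegral_ofReal hB (.of_forall hpos),
    ← ENNReal.ofReal_add hB0 (sq_nonneg K), ← ENNReal.ofReal_mul (by linarith)]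
  exact ENNReal.ofReal_le_ofReal (by nlinarith [sq_nonneg K])

end Energy

section DifferenceQuotients

section CauchySchwarz

lemma ofReal_sq_eq_enorm_sq (a : ℝ) : ENNReal.ofReal (a ^ 2) = ‖a‖ₑ ^ 2 := by
  rw [Real.enorm_eq_ofReal_abs, ← ENNReal.ofReal_pow (abs_nonneg _), sq_abs]

lemma ofReal_integral_mul_sq_le {α : Type*} [MeasurableSpace α] {ν : Measure α} {f g : α → ℝ}
    (hf : AEMeasurable f ν) (hg : AEMeasurable g ν) :
    ENNReal.ofReal ((∫ x, f x * g x ∂ν) ^ 2) ≤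
      (∫⁻ x, ENNReal.ofReal (f x ^ 2) ∂ν) * ∫⁻ x, ENNReal.ofReal (g x ^ 2) ∂ν := by
  have holder : ‖∫ x, f x * g x ∂ν‖ₑ ≤ (∫⁻ x, ENNReal.ofReal (f x ^ 2) ∂ν) ^ (1 / 2 : ℝ) *
      (∫⁻ x, ENNReal.ofReal (g x ^ 2) ∂ν) ^ (1 / 2 : ℝ) := by
    refine (enorm_integral_le_lintegral_enorm _).trans ?_
    simpa [ofReal_sq_eq_enorm_sq, enorm_mul] using
      ENNReal.lintegral_mul_le_Lp_mul_Lq ν Real.HolderConjugate.two_two hf.enorm hg.enorm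
  calc ENNReal.ofReal ((∫ x, f x * g x ∂ν) ^ 2)
      = ‖∫ x, f x * g x ∂ν‖ₑ ^ 2 := ofReal_sq_eq_enorm_sq _
    _ ≤ ((∫⁻ x, ENNReal.ofReal (f x ^ 2) ∂ν) ^ (1 / 2 : ℝ) *
          (∫⁻ x, ENNReal.ofReal (g x ^ 2) ∂ν) ^ (1 / 2 : ℝ)) ^ 2 := pow_le_pow_left' holder 2
    _ = _ := by
        rw [mul_pow]
        simp only [← ENNReal.rpow_natCast, ← ENNReal.rpow_mul]
        norm_num

end CauchySchwarz

section DiffQuot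

variable {E : Type*} [NormedAddCommGroup E] [NormedSpace ℝ E] {U V : Set E} {g : E → ℝ} {h : ℝ}
  {v x : E}

/-- The difference quotient of `g` with step `h` in the direction `v`. -/
def diffQuot (h : ℝ) (v : E) (g : E → ℝ) : E → ℝ := fun x => (g (x + h • v) - g x) / h

/-- The iterated difference quotient with common step `h` along a list of directions, the
head of the list being applied last. -/
def iterDiffQuot (h : ℝ) (vs : List E) (g : E → ℝ) : E → ℝ := vs.foldr (diffQuot h) g

lemma iterDiffQuot_cons (h : ℝ) (v : E) (vs : List E) (g : E → ℝ) :
    iterDiffQuot h (v :: vs) g = diffQuot h v (iterDiffQuot h vs g) := rfl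

lemma diffQuot_eqOn {g' : E → ℝ} (hUV : U ⊆ V) (hshift : ∀ x ∈ U, x + h • v ∈ V)
    (hg : EqOn g g' V) : EqOn (diffQuot h v g) (diffQuot h v g') U := fun x hx => by
  simp only [diffQuot, hg (hUV hx), hg (hshift x hx)]

lemma continuousOn_diffQuot (hUV : U ⊆ V) (hshift : ∀ x ∈ U, x + h • v ∈ V)
    (hg : ContinuousOn g V) : ContinuousOn (diffQuot h v g) U :=
  ((hg.comp (by fun_prop) hshift).sub (hg.mono hUV)).div_const h

lemma contDiffOn_diffQuot (hUV : U ⊆ V) (hshift : ∀ x ∈ U, x + h • v ∈ V)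
    (hg : ContDiffOn ℝ ∞ g V) : ContDiffOn ℝ ∞ (diffQuot h v g) U :=
  ((hg.comp (by fun_prop) hshift).sub (hg.mono hUV)).div_const h

lemma dirDeriv_diffQuot_eqOn (hV : IsOpen V) (hUV : U ⊆ V) (hshift : ∀ x ∈ U, x + h • v ∈ V)
    (hg : ContDiffOn ℝ ∞ g V) (w : E) :
    EqOn (dirDeriv w (diffQuot h v g)) (diffQuot h v (dirDeriv w g)) U := fun x hx => by
  have hx0 := (differentiableAt_of_contDiffOn hV hg (hUV hx)).hasFDerivAt
  have hx1 := (differentiableAt_of_contDiffOn hV hg (hshift x hx)).hasFDerivAt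
  have hdq : HasFDerivAt (diffQuot h v g)
      (h⁻¹ • (fderiv ℝ g (x + h • v) - fderiv ℝ g x)) x :=
    (((hasFDerivAt_comp_add_right (h • v)).2 hx1).sub hx0).mul_const h⁻¹
  simp only [dirDeriv, diffQuot, hdq.fderiv, smul_apply, sub_apply, smul_eq_mul,
    div_eq_inv_mul]

lemma intervalIntegral_dirDeriv (hU : IsOpen U) (hg : ContDiffOn ℝ ∞ g U) (hh : 0 ≤ h)
    (hseg : ∀ t ∈ Icc 0 h, x + t • v ∈ U) :
    ∫ t in 0..h, dirDeriv v g (x + t • v) = g (x + h • v) - g x := by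
  rw [← uIcc_of_le hh] at hseg
  have hcont : ContinuousOn (fun t : ℝ => dirDeriv v g (x + t • v)) (uIcc 0 h) :=
    (contDiffOn_dirDeriv hU hg v).continuousOn.comp (by fun_prop) hseg
  simpa using intervalIntegral.integral_eq_sub_of_hasDerivAt
    (fun t ht => hasDerivAt_comp_add_smul hU hg (hseg t ht)) hcont.intervalIntegrable

lemma ofReal_diffQuot_sq_le (hU : IsOpen U) (hg : ContDiffOn ℝ ∞ g U) (hh : 0 < h)
    (hseg : ∀ t ∈ Icc 0 h, x + t • v ∈ U) :
    ENNReal.ofReal (diffQuot h v g x ^ 2) ≤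
      ENNReal.ofReal h⁻¹ * ∫⁻ t in Icc 0 h, ENNReal.ofReal (dirDeriv v g (x + t • v) ^ 2) := by
  have hcont : ContinuousOn (fun t : ℝ => dirDeriv v g (x + t • v)) (Icc 0 h) :=
    (contDiffOn_dirDeriv hU hg v).continuousOn.comp (by fun_prop) hseg
  have hcs := ofReal_integral_mul_sq_le (ν := volume.restrict (Icc (0 : ℝ) h))
    (f := fun _ => 1) aemeasurable_const (hcont.aemeasurable measurableSet_Icc)
  simp only [one_mul, one_pow, ENNReal.ofReal_one, lintegral_const, Measure.restrict_apply_univ,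
    Real.volume_Icc, sub_zero, integral_Icc_eq_integral_Ioc,
    ← intervalIntegral.integral_of_le hh.le, intervalIntegral_dirDeriv hU hg hh.le hseg] at hcs
  calc ENNReal.ofReal (diffQuot h v g x ^ 2)
      = ENNReal.ofReal ((h ^ 2)⁻¹) * ENNReal.ofReal ((g (x + h • v) - g x) ^ 2) := by
        rw [diffQuot, div_pow, div_eq_inv_mul, ENNReal.ofReal_mul (by positivity)]
    _ ≤ ENNReal.ofReal ((h ^ 2)⁻¹) * (ENNReal.ofReal h *
          ∫⁻ t in Icc 0 h, ENNReal.ofReal (dirDeriv v g (x + t • v) ^ 2)) := by gcongr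
    _ = _ := by
        rw [← mul_assoc, ← ENNReal.ofReal_mul (by positivity)]
        congr 2
        field_simp

lemma setLIntegral_diffQuot_sq_le [MeasurableSpace E] [BorelSpace E] [SecondCountableTopology E]
    {ν : Measure E} [SFinite ν] [ν.IsAddRightInvariant] (hU : MeasurableSet U) (hV : IsOpen V)
    (hg : ContDiffOn ℝ ∞ g V) (hh : 0 < h) (hseg : ∀ x ∈ U, ∀ t ∈ Icc 0 h, x + t • v ∈ V) :
    ∫⁻ x in U, ENNReal.ofReal (diffQuot h v g x ^ 2) ∂ν ≤
      ∫⁻ x in V, ENNReal.ofReal (dirDeriv v g x ^ 2) ∂ν := by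
  let Φ : E → ℝ≥0∞ := V.indicator fun x => ENNReal.ofReal (dirDeriv v g x ^ 2)
  have hΦ : Measurable Φ := by
    classical
    simp only [Φ, ← Set.piecewise_eq_indicator]
    exact ContinuousOn.measurable_piecewise (ENNReal.continuous_ofReal.comp_continuousOn
      ((contDiffOn_dirDeriv hV hg v).continuousOn.pow 2)) continuousOn_const hV.measurableSet
  calc ∫⁻ x in U, ENNReal.ofReal (diffQuot h v g x ^ 2) ∂ν
      ≤ ∫⁻ x in U, (ENNReal.ofReal h⁻¹ * ∫⁻ t in Icc 0 h, Φ (x + t • v)) ∂ν :=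
        setLIntegral_mono' hU fun x hx =>
          (ofReal_diffQuot_sq_le hV hg hh (hseg x hx)).trans_eq <| congrArg _ <|
            setLIntegral_congr_fun measurableSet_Icc fun t ht =>
              (indicator_of_mem (hseg x hx t ht) fun x => ENNReal.ofReal (dirDeriv v g x ^ 2)).symm
    _ ≤ ∫⁻ x, (ENNReal.ofReal h⁻¹ * ∫⁻ t in Icc 0 h, Φ (x + t • v)) ∂ν :=
        setLIntegral_le_lintegral _ _
    _ = ENNReal.ofReal h⁻¹ * ∫⁻ t in Icc 0 h, (∫⁻ x, Φ (x + t • v) ∂ν) := by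
        rw [lintegral_const_mul' _ _ ENNReal.ofReal_ne_top, lintegral_lintegral_swap]
        exact (hΦ.comp (by fun_prop : Measurable fun p : E × ℝ => p.1 + p.2 • v)).aemeasurable
    _ = ENNReal.ofReal h⁻¹ * ∫⁻ _ in Icc 0 h, (∫⁻ x, Φ x ∂ν) := by
        simp_rw [lintegral_add_right_eq_self Φ]
    _ = ∫⁻ x, Φ x ∂ν := by
        rw [lintegral_const, Measure.restrict_apply_univ, Real.volume_Icc, sub_zero,
          mul_comm (∫⁻ x, Φ x ∂ν), ← mul_assoc, ← ENNReal.ofReal_mul (by positivity),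
          inv_mul_cancel₀ hh.ne', ENNReal.ofReal_one, one_mul]
    _ = ∫⁻ x in V, ENNReal.ofReal (dirDeriv v g x ^ 2) ∂ν := lintegral_indicator hV.measurableSet _

end DiffQuot

section HalfBalls

variable {E : Type*} [NormedAddCommGroup E] [InnerProductSpace ℝ E] {ν y v w x : E} {c ρ R h t : ℝ}
  {vs : List E} {g : E → ℝ}

/-- The part of the ball `ball y ρ` in the open half space `⟪ν, ·⟫ > c`. It is the
whole ball if `c` is small enough, so that interior estimates are a case of boundary estimates. -/
def halfBall (ν : E) (c : ℝ) (y : E) (ρ : ℝ) : Set E := {x | c < ⟪ν, x⟫} ∩ ball y ρ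

/-- The half ball together with its flat boundary. -/
def relClosedHalfBall (ν : E) (c : ℝ) (y : E) (ρ : ℝ) : Set E := {x | c ≤ ⟪ν, x⟫} ∩ ball y ρ

lemma isOpen_halfBall (ν : E) (c : ℝ) (y : E) (ρ : ℝ) : IsOpen (halfBall ν c y ρ) :=
  (isOpen_lt continuous_const (by fun_prop)).inter isOpen_ball

lemma halfBall_subset_halfBall (h : ρ ≤ R) : halfBall ν c y ρ ⊆ halfBall ν c y R :=
  inter_subset_inter_right _ (ball_subset_ball h)

lemma relClosedHalfBall_subset_relClosedHalfBall (h : ρ ≤ R) :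
    relClosedHalfBall ν c y ρ ⊆ relClosedHalfBall ν c y R :=
  inter_subset_inter_right _ (ball_subset_ball h)

/-- `v` is a vector of length at most one tangential to the hyperplanes `⟪ν, ·⟫ = c`. -/
def IsTangential (ν v : E) : Prop := ‖v‖ ≤ 1 ∧ ⟪ν, v⟫ = 0

namespace IsTangential

lemma inner_add_smul (hv : IsTangential ν v) (x : E) (t : ℝ) : ⟪ν, x + t • v⟫ = ⟪ν, x⟫ := by
  rw [inner_add_right, inner_smul_right, hv.2, mul_zero, add_zero]

lemma dist_add_smul_le (hv : IsTangential ν v) (ht : t ∈ Icc 0 h) : dist (x + t • v) x ≤ h := by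
  rw [dist_self_add_left, norm_smul, Real.norm_of_nonneg ht.1]
  exact (mul_le_of_le_one_right ht.1 hv.1).trans ht.2

lemma add_smul_mem_ball (hv : IsTangential ν v) (ht : t ∈ Icc 0 h) (hx : x ∈ ball y ρ) :
    x + t • v ∈ ball y (ρ + h) :=
  mem_ball.2 <| (dist_triangle _ x y).trans_lt <| by
    linarith [hv.dist_add_smul_le (x := x) ht, mem_ball.1 hx]

lemma add_smul_mem_halfBall (hv : IsTangential ν v) (ht : t ∈ Icc 0 h)
    (hx : x ∈ halfBall ν c y ρ) : x + t • v ∈ halfBall ν c y (ρ + h) :=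
  ⟨by simpa only [mem_ofPred_eq, hv.inner_add_smul] using hx.1, hv.add_smul_mem_ball ht hx.2⟩

lemma add_smul_mem_relClosedHalfBall (hv : IsTangential ν v) (ht : t ∈ Icc 0 h)
    (hx : x ∈ relClosedHalfBall ν c y ρ) : x + t • v ∈ relClosedHalfBall ν c y (ρ + h) :=
  ⟨by simpa only [mem_ofPred_eq, hv.inner_add_smul] using hx.1, hv.add_smul_mem_ball ht hx.2⟩

end IsTangential

lemma add_add_length_mul_le {ι : Type*} {i : ι} {is : List ι}
    (hR : ρ + (i :: is).length * h ≤ R) : ρ + h + is.length * h ≤ R := by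
  push_cast [List.length_cons] at hR
  linarith

lemma contDiffOn_iterDiffQuot (hh : 0 ≤ h) (hvs : ∀ v ∈ vs, IsTangential ν v)
    (hR : ρ + vs.length * h ≤ R) (hg : ContDiffOn ℝ ∞ g (halfBall ν c y R)) :
    ContDiffOn ℝ ∞ (iterDiffQuot h vs g) (halfBall ν c y ρ) := by
  induction vs generalizing ρ with
  | nil => exact hg.mono (halfBall_subset_halfBall (by simpa using hR))
  | cons v vs ih =>
    obtain ⟨hv, hvs⟩ := List.forall_mem_cons.1 hvs
    exact contDiffOn_diffQuot (halfBall_subset_halfBall (by linarith))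
      (fun x hx => hv.add_smul_mem_halfBall ⟨hh, le_rfl⟩ hx) (ih hvs (add_add_length_mul_le hR))

lemma dirDeriv_iterDiffQuot_eqOn (hh : 0 ≤ h) (hvs : ∀ v ∈ vs, IsTangential ν v)
    (hR : ρ + vs.length * h ≤ R) (hg : ContDiffOn ℝ ∞ g (halfBall ν c y R)) (w : E) :
    EqOn (dirDeriv w (iterDiffQuot h vs g)) (iterDiffQuot h vs (dirDeriv w g))
      (halfBall ν c y ρ) := by
  induction vs generalizing ρ with
  | nil => exact fun _ _ => rfl
  | cons v vs ih =>
    obtain ⟨hv, hvs⟩ := List.forall_mem_cons.1 hvs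
    have hsub : halfBall ν c y ρ ⊆ halfBall ν c y (ρ + h) :=
      halfBall_subset_halfBall (by linarith)
    have hshift : ∀ x ∈ halfBall ν c y ρ, x + h • v ∈ halfBall ν c y (ρ + h) := fun x hx =>
      hv.add_smul_mem_halfBall ⟨hh, le_rfl⟩ hx
    exact (dirDeriv_diffQuot_eqOn (isOpen_halfBall _ _ _ _) hsub hshift
      (contDiffOn_iterDiffQuot hh hvs (add_add_length_mul_le hR) hg) w).trans
      (diffQuot_eqOn hsub hshift (ih hvs (add_add_length_mul_le hR)))

lemma exists_iterDiffQuot_eq_iterDirDeriv (hh : 0 < h) (hvs : ∀ v ∈ vs, IsTangential ν v)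
    (hR : ρ + vs.length * h ≤ R) (hg : ContDiffOn ℝ ∞ g (halfBall ν c y R))
    (hx : x ∈ halfBall ν c y ρ) :
    ∃ z ∈ halfBall ν c y R, dist z x ≤ vs.length * h ∧
      iterDiffQuot h vs g x = iterDirDeriv vs g z := by
  induction vs generalizing ρ g x with
  | nil => exact ⟨x, halfBall_subset_halfBall (by simpa using hR) hx, by simp, rfl⟩
  | cons v vs ih =>
    obtain ⟨hv, hvs⟩ := List.forall_mem_cons.1 hvs
    have hR' := add_add_length_mul_le hR
    have hderiv (t) (ht : t ∈ Icc 0 h) := hasDerivAt_comp_add_smul (isOpen_halfBall _ _ _ _)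
      (contDiffOn_iterDiffQuot hh.le hvs hR' hg) (hv.add_smul_mem_halfBall ht hx)
    obtain ⟨t, ht, hslope⟩ := exists_hasDerivAt_eq_slope _ _ hh
      (fun t ht => (hderiv t ht).continuousAt.continuousWithinAt)
      (fun t ht => hderiv t (Ioo_subset_Icc_self ht))
    replace ht := Ioo_subset_Icc_self ht
    have hxt := hv.add_smul_mem_halfBall ht hx
    obtain ⟨z, hz, hzx, hval⟩ := ih hvs hR'
      (contDiffOn_dirDeriv (isOpen_halfBall _ _ _ _) hg v) hxt
    refine ⟨z, hz, ?_, ?_⟩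
    · push_cast [List.length_cons]
      linarith [dist_triangle z (x + t • v) x, hv.dist_add_smul_le (x := x) ht]
    · rw [dirDeriv_iterDiffQuot_eqOn hh.le hvs hR' hg v hxt, hval] at hslope
      rw [iterDiffQuot_cons, iterDirDeriv_cons,
        dirDeriv_iterDirDeriv_comm (isOpen_halfBall _ _ _ _) hg vs v hz, hslope]
      simp [diffQuot]

lemma continuousOn_iterDiffQuot (hh : 0 ≤ h) (hvs : ∀ v ∈ vs, IsTangential ν v)
    (hR : ρ + vs.length * h ≤ R) (hg : ContinuousOn g (relClosedHalfBall ν c y R)) :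
    ContinuousOn (iterDiffQuot h vs g) (relClosedHalfBall ν c y ρ) := by
  induction vs generalizing ρ with
  | nil => exact hg.mono (relClosedHalfBall_subset_relClosedHalfBall (by simpa using hR))
  | cons v vs ih =>
    obtain ⟨hv, hvs⟩ := List.forall_mem_cons.1 hvs
    exact continuousOn_diffQuot (relClosedHalfBall_subset_relClosedHalfBall (by linarith))
      (fun x hx => hv.add_smul_mem_relClosedHalfBall ⟨hh, le_rfl⟩ hx)
      (ih hvs (add_add_length_mul_le hR))

lemma iterDiffQuot_eq_zero (hh : 0 ≤ h) (hvs : ∀ v ∈ vs, IsTangential ν v)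
    (hR : ρ + vs.length * h ≤ R) (hg : ∀ x ∈ ball y R, ⟪ν, x⟫ = c → g x = 0)
    (hx : x ∈ ball y ρ) (hxc : ⟪ν, x⟫ = c) : iterDiffQuot h vs g x = 0 := by
  induction vs generalizing ρ x with
  | nil => exact hg x (ball_subset_ball (by simpa using hR) hx) hxc
  | cons v vs ih =>
    obtain ⟨hv, hvs⟩ := List.forall_mem_cons.1 hvs
    have hR' := add_add_length_mul_le hR
    rw [iterDiffQuot_cons, diffQuot,
      ih hvs hR' (hv.add_smul_mem_ball ⟨hh, le_rfl⟩ hx) (by rw [hv.inner_add_smul, hxc]),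
      ih hvs hR' (ball_subset_ball (by linarith) hx) hxc, sub_zero, zero_div]

section FiniteDimensional

variable [FiniteDimensional ℝ E]

lemma laplacian_diffQuot_eqOn {U V : Set E} (hU : IsOpen U) (hV : IsOpen V) (hUV : U ⊆ V)
    (hshift : ∀ x ∈ U, x + h • v ∈ V) (hg : ContDiffOn ℝ ∞ g V) :
    EqOn (Δ (diffQuot h v g)) (diffQuot h v (Δ g)) U := fun x hx => by
  let b := stdOrthonormalBasis ℝ E
  have hsecond (j) : dirDeriv (b j) (dirDeriv (b j) (diffQuot h v g)) x =
      diffQuot h v (dirDeriv (b j) (dirDeriv (b j) g)) x :=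
    (dirDeriv_eqOn hU (dirDeriv_diffQuot_eqOn hV hUV hshift hg (b j)) (b j) hx).trans
      (dirDeriv_diffQuot_eqOn hV hUV hshift (contDiffOn_dirDeriv hV hg (b j)) (b j) hx)
  rw [laplacian_eqOn_sum_dirDeriv b hU (contDiffOn_diffQuot hUV hshift hg) hx, diffQuot,
    laplacian_eqOn_sum_dirDeriv b hV hg (hUV hx),
    laplacian_eqOn_sum_dirDeriv b hV hg (hshift x hx), ← Finset.sum_sub_distrib, Finset.sum_div]
  exact Finset.sum_congr rfl fun j _ => hsecond j

lemma laplacian_iterDiffQuot_eqOn (hh : 0 ≤ h) (hvs : ∀ v ∈ vs, IsTangential ν v)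
    (hR : ρ + vs.length * h ≤ R) (hg : ContDiffOn ℝ ∞ g (halfBall ν c y R)) :
    EqOn (Δ (iterDiffQuot h vs g)) (iterDiffQuot h vs (Δ g)) (halfBall ν c y ρ) := by
  induction vs generalizing ρ with
  | nil => exact fun _ _ => rfl
  | cons v vs ih =>
    obtain ⟨hv, hvs⟩ := List.forall_mem_cons.1 hvs
    have hsub : halfBall ν c y ρ ⊆ halfBall ν c y (ρ + h) :=
      halfBall_subset_halfBall (by linarith)
    have hshift : ∀ x ∈ halfBall ν c y ρ, x + h • v ∈ halfBall ν c y (ρ + h) := fun x hx =>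
      hv.add_smul_mem_halfBall ⟨hh, le_rfl⟩ hx
    exact (laplacian_diffQuot_eqOn (isOpen_halfBall _ _ _ _) (isOpen_halfBall _ _ _ _) hsub hshift
      (contDiffOn_iterDiffQuot hh hvs (add_add_length_mul_le hR) hg)).trans
      (diffQuot_eqOn hsub hshift (ih hvs (add_add_length_mul_le hR)))

lemma setLIntegral_iterDiffQuot_sq_le [MeasurableSpace E] [BorelSpace E] (hh : 0 < h)
    (hvs : ∀ v ∈ vs, IsTangential ν v) (hR : ρ + vs.length * h ≤ R)
    (hg : ContDiffOn ℝ ∞ g (halfBall ν c y R)) :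
    ∫⁻ x in halfBall ν c y ρ, ENNReal.ofReal (iterDiffQuot h vs g x ^ 2) ≤
      ∫⁻ x in halfBall ν c y R, ENNReal.ofReal (iterDirDeriv vs g x ^ 2) := by
  induction vs generalizing ρ g with
  | nil => exact lintegral_mono_set (halfBall_subset_halfBall (by simpa using hR))
  | cons v vs ih =>
    obtain ⟨hv, hvs⟩ := List.forall_mem_cons.1 hvs
    have hR' := add_add_length_mul_le hR
    calc ∫⁻ x in halfBall ν c y ρ, ENNReal.ofReal (iterDiffQuot h (v :: vs) g x ^ 2)
        ≤ ∫⁻ x in halfBall ν c y (ρ + h),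
            ENNReal.ofReal (dirDeriv v (iterDiffQuot h vs g) x ^ 2) :=
          setLIntegral_diffQuot_sq_le (isOpen_halfBall _ _ _ _).measurableSet
            (isOpen_halfBall _ _ _ _) (contDiffOn_iterDiffQuot hh.le hvs hR' hg) hh
            fun x hx t ht => hv.add_smul_mem_halfBall ht hx
      _ = ∫⁻ x in halfBall ν c y (ρ + h),
            ENNReal.ofReal (iterDiffQuot h vs (dirDeriv v g) x ^ 2) :=
          setLIntegral_congr_fun (isOpen_halfBall _ _ _ _).measurableSet fun x hx => by
            simp only [dirDeriv_iterDiffQuot_eqOn hh.le hvs hR' hg v hx]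
      _ ≤ ∫⁻ x in halfBall ν c y R, ENNReal.ofReal (iterDirDeriv vs (dirDeriv v g) x ^ 2) :=
          ih hvs hR' (contDiffOn_dirDeriv (isOpen_halfBall _ _ _ _) hg v)
      _ = ∫⁻ x in halfBall ν c y R, ENNReal.ofReal (iterDirDeriv (v :: vs) g x ^ 2) :=
          setLIntegral_congr_fun (isOpen_halfBall _ _ _ _).measurableSet fun x hx => by
            simp only [iterDirDeriv_cons,
              dirDeriv_iterDirDeriv_comm (isOpen_halfBall _ _ _ _) hg vs v hx]

end FiniteDimensional

end HalfBalls

end DifferenceQuotients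

section HalfBallEstimates

section Cutoff

variable (E : Type*) [NormedAddCommGroup E] [InnerProductSpace ℝ E] [FiniteDimensional ℝ E]

lemma exists_cutoff : ∃ C : ℝ, 0 < C ∧ ∀ (y : E) (r : ℝ), 0 < r → ∃ ζ : E → ℝ,
    ContDiff ℝ ∞ ζ ∧ (∀ x, |ζ x| ≤ 1) ∧ (∀ x ∈ ball y r, ζ x = 1) ∧
    tsupport ζ ⊆ closedBall y (5 * r / 4) ∧ ∀ x, ‖fderiv ℝ ζ x‖ ^ 2 ≤ C * r⁻¹ ^ 2 := by
  let f : ContDiffBump (0 : E) := ⟨1, 5 / 4, by norm_num, by norm_num⟩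
  have hf : ContDiff ℝ ∞ f := f.contDiff
  obtain ⟨B, hB⟩ := (f.hasCompactSupport.fderiv ℝ).exists_bound_of_continuous
    (hf.continuous_fderiv (by simp))
  refine ⟨B ^ 2 + 1, by positivity, fun y r hr => ?_⟩
  have hr' : 0 < r⁻¹ := inv_pos.2 hr
  have hscale (x : E) : ‖r⁻¹ • (x - y)‖ = r⁻¹ * dist x y := by
    rw [norm_smul, Real.norm_of_nonneg hr'.le, dist_eq_norm]
  refine ⟨fun x => f (r⁻¹ • (x - y)), hf.comp (by fun_prop),
    fun x => abs_le.2 ⟨by linarith [f.nonneg' (r⁻¹ • (x - y))], f.le_one⟩, fun x hx => ?_,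
    closure_minimal (fun x hx => ?_) isClosed_closedBall, fun x => ?_⟩
  · refine f.one_of_mem_closedBall (mem_closedBall_zero_iff.2 ?_)
    rw [hscale, inv_mul_le_iff₀ hr]
    simpa [f] using (mem_ball.1 hx).le
  · by_contra hfar
    refine hx (f.zero_of_le_dist ?_)
    rw [dist_zero_right, hscale, le_inv_mul_iff₀ hr]
    have hdist : 5 * r / 4 < dist x y := not_le.1 fun h => hfar (mem_closedBall.2 h)
    calc r * (5 / 4) = 5 * r / 4 := by ring
      _ ≤ dist x y := hdist.le
  · have hderiv : HasFDerivAt (fun x => f (r⁻¹ • (x - y)))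
        ((fderiv ℝ f (r⁻¹ • (x - y))).comp (r⁻¹ • ContinuousLinearMap.id ℝ E)) x :=
      (hf.differentiable (by simp) _).hasFDerivAt.comp x
        (((hasFDerivAt_id x).sub_const y).const_smul r⁻¹)
    have hnorm : ‖fderiv ℝ (fun x => f (r⁻¹ • (x - y))) x‖ ≤ r⁻¹ * B := by
      rw [hderiv.fderiv, ContinuousLinearMap.comp_smul, ContinuousLinearMap.comp_id, norm_smul,
        Real.norm_of_nonneg hr'.le]
      exact mul_le_mul_of_nonneg_left (hB _) hr'.le
    calc _ ≤ (r⁻¹ * B) ^ 2 := by gcongr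
      _ ≤ _ := by nlinarith [sq_nonneg r⁻¹]

end Cutoff

section NegativeNorm

variable {E : Type*} [NormedAddCommGroup E] [InnerProductSpace ℝ E] [FiniteDimensional ℝ E]
  [MeasurableSpace E] [BorelSpace E] {U V : Set E} {Ψ G u : E → ℝ} {ν y v : E}
  {c ρ R h K : ℝ} {vs : List E}

lemma integral_mul_diffQuot (hU : IsOpen U) (hUV : U ⊆ V) (hshift : ∀ x ∈ U, x + h • v ∈ V)
    (hG : ContinuousOn G V) (hΨ : Continuous Ψ) (hΨc : HasCompactSupport Ψ)
    (hΨU : tsupport Ψ ⊆ U) :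
    ∫ x, Ψ x * diffQuot h v G x = ∫ x, diffQuot h (-v) Ψ x * V.indicator G x := by
  have hΨ0 : ∀ x ∉ tsupport Ψ, Ψ x = 0 := fun x => image_eq_zero_of_notMem_tsupport
  have hint {g : E → ℝ} (hg : ContinuousOn g U) : Integrable fun x => Ψ x * g x :=
    integrable_of_eq_zero_off_isCompact hU hΨc hΨU (hΨ.continuousOn.mul hg) fun x hx => by
      rw [hΨ0 x hx, zero_mul]
  have hI := hint (hG.mono hUV)
  have hIshift : Integrable fun x => Ψ x * G (x + h • v) :=
    hint (hG.comp (by fun_prop) hshift)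
  have hIback : Integrable fun x => Ψ (x + h • -v) * G x := by
    simpa using hIshift.comp_add_right (h • -v)
  have htranslate : ∫ x, Ψ x * G (x + h • v) = ∫ x, Ψ (x + h • -v) * G x := by
    rw [← integral_add_right_eq_self (fun x => Ψ (x + h • -v) * G x) (h • v)]
    simp [add_assoc]
  have hindicator (x : E) : diffQuot h (-v) Ψ x * V.indicator G x =
      (Ψ (x + h • -v) * G x - Ψ x * G x) / h := by
    by_cases hx : x ∈ V
    · rw [indicator_of_mem hx, diffQuot]
      ring
    · rw [indicator_of_notMem hx, hΨ0 x fun hx' => hx (hUV (hΨU hx')),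
        hΨ0 (x + h • -v) fun hx' => hx (by simpa using hshift _ (hΨU hx'))]
      ring
  calc ∫ x, Ψ x * diffQuot h v G x = ∫ x, (Ψ x * G (x + h • v) - Ψ x * G x) / h := by
        congr 1 with x
        rw [diffQuot]
        ring
    _ = ∫ x, (Ψ (x + h • -v) * G x - Ψ x * G x) / h := by
        rw [integral_div, integral_div, integral_sub hIshift hI, integral_sub hIback hI,
          htranslate]
    _ = _ := by simp_rw [hindicator]

lemma lintegral_diffQuot_sq_le_integral_norm_fderiv_sq (hΨ : ContDiff ℝ ∞ Ψ)
    (hΨc : HasCompactSupport Ψ) (hh : 0 < h) (hv : ‖v‖ ≤ 1) :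
    ∫⁻ x, ENNReal.ofReal (diffQuot h v Ψ x ^ 2) ≤
      ENNReal.ofReal (∫ x, ‖fderiv ℝ Ψ x‖ ^ 2) := by
  have hint : Integrable fun x => ‖fderiv ℝ Ψ x‖ ^ 2 :=
    integrable_of_eq_zero_off_isCompact isOpen_univ hΨc (subset_univ _)
      ((continuousOn_norm_fderiv isOpen_univ hΨ.contDiffOn).pow 2) fun x hx => by
        simp [fderiv_eq_zero_of_notMem_tsupport hx]
  rw [ofReal_integral_eq_lintegral_ofReal hint (.of_forall fun x => sq_nonneg _)]
  calc ∫⁻ x, ENNReal.ofReal (diffQuot h v Ψ x ^ 2)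
      ≤ ∫⁻ x, ENNReal.ofReal (dirDeriv v Ψ x ^ 2) := by
        simpa using setLIntegral_diffQuot_sq_le (ν := volume) MeasurableSet.univ isOpen_univ
          hΨ.contDiffOn hh (v := v) fun _ _ _ _ => mem_univ _
    _ ≤ ∫⁻ x, ENNReal.ofReal (‖fderiv ℝ Ψ x‖ ^ 2) := by
        refine lintegral_mono fun x => ENNReal.ofReal_le_ofReal ?_
        rw [← sq_abs]
        gcongr
        exact abs_dirDeriv_le hv Ψ x

lemma hasNegNormLE_diffQuot (hU : IsOpen U) (hV : IsOpen V) (hUV : U ⊆ V)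
    (hshift : ∀ x ∈ U, x + h • v ∈ V) (hh : 0 < h) (hv : ‖v‖ ≤ 1) (hG : ContinuousOn G V)
    (hK : 0 ≤ K) (hGK : ∫⁻ x in V, ENNReal.ofReal (G x ^ 2) ≤ ENNReal.ofReal (K ^ 2)) :
    HasNegNormLE U (diffQuot h v G) K := fun Ψ hΨ hΨc hΨU => by
  have hGm : Measurable (V.indicator G) := by
    classical
    rw [← Set.piecewise_eq_indicator]
    exact hG.measurable_piecewise continuousOn_const hV.measurableSet
  have hquot : Continuous (diffQuot h (-v) Ψ) := by
    have := hΨ.continuous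
    unfold diffQuot
    fun_prop
  have hindicator : ∫⁻ x, ENNReal.ofReal (V.indicator G x ^ 2) ≤ ENNReal.ofReal (K ^ 2) := by
    refine le_of_eq_of_le ?_ hGK
    rw [← lintegral_indicator hV.measurableSet]
    congr 1 with x
    by_cases hx : x ∈ V <;> simp [hx]
  have hD0 : 0 ≤ ∫ x, ‖fderiv ℝ Ψ x‖ ^ 2 := integral_nonneg fun x => sq_nonneg _
  have hsq : ENNReal.ofReal ((∫ x, diffQuot h (-v) Ψ x * V.indicator G x) ^ 2) ≤
      ENNReal.ofReal ((∫ x, ‖fderiv ℝ Ψ x‖ ^ 2) * K ^ 2) := by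
    rw [ENNReal.ofReal_mul hD0]
    exact (ofReal_integral_mul_sq_le hquot.aemeasurable hGm.aemeasurable).trans <| mul_le_mul'
      (lintegral_diffQuot_sq_le_integral_norm_fderiv_sq hΨ hΨc hh (by rwa [norm_neg])) hindicator
  rw [integral_mul_diffQuot hU hUV hshift hG hΨ.continuous hΨc hΨU]
  refine abs_le_of_sq_le_sq ?_ (by positivity)
  rw [mul_pow, Real.sq_sqrt hD0, mul_comm]
  exact (ENNReal.ofReal_le_ofReal_iff (by positivity)).1 hsq

lemma HasNegNormLE.congr {f g : E → ℝ} (hf : HasNegNormLE U f K) (hfg : EqOn f g U) :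
    HasNegNormLE U g K := fun Ψ hΨ hΨc hΨU => by
  convert hf Ψ hΨ hΨc hΨU using 4 with x
  by_cases hx : x ∈ U
  · rw [hfg hx]
  · rw [image_eq_zero_of_notMem_tsupport fun hx' => hx (hΨU hx'), zero_mul, zero_mul]

lemma hasNegNormLE_laplacian_iterDiffQuot (hh : 0 < h) (hvs : ∀ w ∈ v :: vs, IsTangential ν w)
    (hR : ρ + (v :: vs).length * h ≤ R) (hu : ContDiffOn ℝ ∞ u (halfBall ν c y R)) (hK : 0 ≤ K)
    (huK : ∫⁻ x in halfBall ν c y R, ENNReal.ofReal (iterDirDeriv vs (Δ u) x ^ 2) ≤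
      ENNReal.ofReal (K ^ 2)) :
    HasNegNormLE (halfBall ν c y ρ) (Δ (iterDiffQuot h (v :: vs) u)) K := by
  obtain ⟨hv, hvs'⟩ := List.forall_mem_cons.1 hvs
  have hR' := add_add_length_mul_le hR
  have hΔu := contDiffOn_laplacian (isOpen_halfBall _ _ _ _) hu
  refine (hasNegNormLE_diffQuot (isOpen_halfBall _ _ _ _) (isOpen_halfBall ν c y (ρ + h))
    (halfBall_subset_halfBall (by linarith))
    (fun x hx => hv.add_smul_mem_halfBall ⟨hh.le, le_rfl⟩ hx) hh hv.1
    (contDiffOn_iterDiffQuot hh.le hvs' hR' hΔu).continuousOn hK ?_).congr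
    (laplacian_iterDiffQuot_eqOn hh.le hvs hR hu).symm
  exact (setLIntegral_iterDiffQuot_sq_le hh hvs' hR' hΔu).trans huK

end NegativeNorm

section Dirichlet

variable {E : Type*} [NormedAddCommGroup E] [InnerProductSpace ℝ E] {ν y : E} {c ρ R h : ℝ}
  {vs : List E} {u ζ : E → ℝ}

/-- `u` is smooth on the half ball and attains the boundary value zero on its flat boundary. -/
structure IsDirichletOnHalfBall (ν : E) (c : ℝ) (y : E) (R : ℝ) (u : E → ℝ) : Prop where
  contDiffOn : ContDiffOn ℝ ∞ u (halfBall ν c y R)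
  continuousOn : ContinuousOn u (relClosedHalfBall ν c y R)
  eq_zero : ∀ x ∈ ball y R, ⟪ν, x⟫ = c → u x = 0

namespace IsDirichletOnHalfBall

lemma iterDiffQuot (hu : IsDirichletOnHalfBall ν c y R u) (hh : 0 ≤ h)
    (hvs : ∀ v ∈ vs, IsTangential ν v) (hR : ρ + vs.length * h ≤ R) :
    IsDirichletOnHalfBall ν c y ρ (iterDiffQuot h vs u) where
  contDiffOn := contDiffOn_iterDiffQuot hh hvs hR hu.contDiffOn
  continuousOn := continuousOn_iterDiffQuot hh hvs hR hu.continuousOn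
  eq_zero _ hx hxc := iterDiffQuot_eq_zero hh hvs hR hu.eq_zero hx hxc

lemma isCompact_truncationCore [ProperSpace E] (hu : IsDirichletOnHalfBall ν c y R u) (hρ : ρ < R)
    (hζ : tsupport ζ ⊆ closedBall y ρ) {ε : ℝ} (hε : 0 < ε) :
    IsCompact (truncationCore (halfBall ν c y R) ζ u ε) := by
  have hball : tsupport ζ ⊆ ball y R := hζ.trans (closedBall_subset_ball hρ)
  have hcompact : IsCompact ({x | c ≤ ⟪ν, x⟫} ∩ tsupport ζ) :=
    (isCompact_closedBall y ρ).of_isClosed_subset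
      ((isClosed_le continuous_const (by fun_prop)).inter (isClosed_tsupport ζ))
      (inter_subset_right.trans hζ)
  have hcore : truncationCore (halfBall ν c y R) ζ u ε =
      ({x | c ≤ ⟪ν, x⟫} ∩ tsupport ζ) ∩ (fun x => |u x|) ⁻¹' Ici ε := by
    ext x
    constructor
    · exact fun ⟨hx, hux, hζx⟩ => ⟨⟨le_of_lt (mem_ofPred_eq ▸ hx.1), hζx⟩, hux⟩
    · rintro ⟨⟨hcx, hζx⟩, hux⟩
      refine ⟨⟨lt_of_le_of_ne (mem_ofPred_eq ▸ hcx) fun heq => ?_, hball hζx⟩, hux, hζx⟩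
      rw [mem_preimage, hu.eq_zero x (hball hζx) heq.symm, abs_zero, mem_Ici] at hux
      exact hε.not_ge hux
  rw [hcore]
  exact hcompact.of_isClosed_subset ((hu.continuousOn.mono
    (inter_subset_inter_right _ hball)).abs.preimage_isClosed_of_isClosed hcompact.isClosed
    isClosed_Ici) inter_subset_left

end IsDirichletOnHalfBall

variable (E) [FiniteDimensional ℝ E] [MeasurableSpace E] [BorelSpace E]

lemma exists_caccioppoli_halfBall : ∃ C : ℝ, 0 < C ∧ ∀ {ν y : E} {c r K : ℝ} {w : E → ℝ}, 0 < r →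
    IsDirichletOnHalfBall ν c y (3 * r / 2) w → HasNegNormLE (halfBall ν c y (3 * r / 2)) (Δ w) K →
    ∫⁻ x in halfBall ν c y r, ENNReal.ofReal (‖fderiv ℝ w x‖ ^ 2) ≤ ENNReal.ofReal C *
      (ENNReal.ofReal (r⁻¹ ^ 2) * (∫⁻ x in halfBall ν c y (3 * r / 2), ENNReal.ofReal (w x ^ 2)) +
        ENNReal.ofReal (K ^ 2)) := by
  obtain ⟨C₁, hC₁, hcacc⟩ := exists_caccioppoli E
  obtain ⟨C₂, hC₂, hcut⟩ := exists_cutoff E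
  refine ⟨C₁ * (C₂ + 1), by positivity, fun {ν y c r K w} hr hw hK => ?_⟩
  obtain ⟨ζ, hζ, hζ1, hζr, hζt, hζd⟩ := hcut y r hr
  set V := halfBall ν c y (3 * r / 2)
  have hgrad : ∫⁻ x in V, ENNReal.ofReal (‖fderiv ℝ ζ x‖ ^ 2 * w x ^ 2) ≤
      ENNReal.ofReal C₂ * (ENNReal.ofReal (r⁻¹ ^ 2) * ∫⁻ x in V, ENNReal.ofReal (w x ^ 2)) := by
    rw [← mul_assoc, ← ENNReal.ofReal_mul hC₂.le, ← lintegral_const_mul' _ _ ENNReal.ofReal_ne_top]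
    refine lintegral_mono fun x => ?_
    rw [← ENNReal.ofReal_mul (by positivity)]
    exact ENNReal.ofReal_le_ofReal (mul_le_mul_of_nonneg_right (hζd x) (sq_nonneg _))
  calc ∫⁻ x in halfBall ν c y r, ENNReal.ofReal (‖fderiv ℝ w x‖ ^ 2)
      = ∫⁻ x in halfBall ν c y r, ENNReal.ofReal (ζ x ^ 2 * ‖fderiv ℝ w x‖ ^ 2) :=
        setLIntegral_congr_fun (isOpen_halfBall _ _ _ _).measurableSet fun x hx => by
          simp only [hζr x hx.2, one_pow, one_mul]
    _ ≤ ∫⁻ x in V, ENNReal.ofReal (ζ x ^ 2 * ‖fderiv ℝ w x‖ ^ 2) :=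
        lintegral_mono_set (halfBall_subset_halfBall (by linarith))
    _ ≤ ENNReal.ofReal C₁ * ((∫⁻ x in V, ENNReal.ofReal (‖fderiv ℝ ζ x‖ ^ 2 * w x ^ 2)) +
          ENNReal.ofReal (K ^ 2)) :=
        hcacc (isOpen_halfBall _ _ _ _) hw.contDiffOn hζ hζ1
          (fun ε hε => hw.isCompact_truncationCore (by linarith) hζt hε) hK
    _ ≤ ENNReal.ofReal C₁ * (ENNReal.ofReal (C₂ + 1) * (ENNReal.ofReal (r⁻¹ ^ 2) *
          (∫⁻ x in V, ENNReal.ofReal (w x ^ 2)) + ENNReal.ofReal (K ^ 2))) := by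
        rw [mul_add (ENNReal.ofReal (C₂ + 1))]
        gcongr
        · exact hgrad.trans (mul_le_mul_left (ENNReal.ofReal_le_ofReal (by linarith)) _)
        · exact le_mul_of_one_le_left' (ENNReal.one_le_ofReal.2 (by linarith))
    _ = _ := by rw [ENNReal.ofReal_mul hC₁.le, mul_assoc]

lemma exists_lintegral_fderiv_iterDiffQuot_le : ∃ C : ℝ, 0 < C ∧ ∀ {ν y v : E} {c r h : ℝ}
    {vs : List E} {u : E → ℝ}, 0 < r → IsDirichletOnHalfBall ν c y (2 * r) u →
    (∀ w ∈ v :: vs, IsTangential ν w) → 0 < h → (v :: vs).length * h ≤ r / 2 →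
    ∫⁻ x in halfBall ν c y r, ENNReal.ofReal (‖fderiv ℝ (iterDiffQuot h (v :: vs) u) x‖ ^ 2) ≤
      ENNReal.ofReal C * (ENNReal.ofReal (r⁻¹ ^ 2) *
        (∫⁻ x in halfBall ν c y (2 * r), ENNReal.ofReal (iterDirDeriv (v :: vs) u x ^ 2)) +
        ∫⁻ x in halfBall ν c y (2 * r), ENNReal.ofReal (iterDirDeriv vs (Δ u) x ^ 2)) := by
  obtain ⟨C, hC, hcacc⟩ := exists_caccioppoli_halfBall E
  refine ⟨C, hC, fun {ν y v c r h vs u} hr hu hvs hh hhr => ?_⟩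
  set J := ∫⁻ x in halfBall ν c y (2 * r), ENNReal.ofReal (iterDirDeriv vs (Δ u) x ^ 2) with hJ
  rcases eq_or_ne J ⊤ with htop | hfin
  · rw [htop, add_top, ENNReal.mul_top (ENNReal.ofReal_pos.2 hC).ne']
    exact le_top
  have hKsq : ENNReal.ofReal (√J.toReal ^ 2) = J := by
    rw [Real.sq_sqrt ENNReal.toReal_nonneg, ENNReal.ofReal_toReal hfin]
  have hR : 3 * r / 2 + (v :: vs).length * h ≤ 2 * r := by linarith
  refine (hcacc hr (hu.iterDiffQuot hh.le hvs hR) (hasNegNormLE_laplacian_iterDiffQuot hh hvs hR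
    hu.contDiffOn (Real.sqrt_nonneg _) (hKsq ▸ hJ.ge))).trans ?_
  rw [hKsq]
  gcongr _ * (_ * ?_ + _)
  exact setLIntegral_iterDiffQuot_sq_le hh hvs hR hu.contDiffOn

end Dirichlet

end HalfBallEstimates

section TangentialEstimates

variable {E : Type*} [NormedAddCommGroup E] [InnerProductSpace ℝ E] {ν y v w x : E}
  {c r : ℝ} {vs : List E} {u : E → ℝ}

lemma tendsto_dirDeriv_iterDiffQuot {h : ℕ → ℝ} {R : ℝ} (hh : ∀ m, 0 < h m)
    (hlim : Filter.Tendsto h Filter.atTop (nhds 0)) (hvs : ∀ v ∈ vs, IsTangential ν v)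
    (hR : ∀ m, r + vs.length * h m ≤ R) (hrR : r ≤ R)
    (hu : ContDiffOn ℝ ∞ u (halfBall ν c y R)) (w : E) (hx : x ∈ halfBall ν c y r) :
    Filter.Tendsto (fun m => dirDeriv w (iterDiffQuot (h m) vs u) x) Filter.atTop
      (nhds (dirDeriv w (iterDirDeriv vs u) x)) := by
  have hopen := isOpen_halfBall ν c y R
  have hwu := contDiffOn_dirDeriv hopen hu w
  have hxR := halfBall_subset_halfBall hrR hx
  choose z _ hzx hz using fun m => exists_iterDiffQuot_eq_iterDirDeriv (hh m) hvs (hR m) hwu hx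
  have hztend : Filter.Tendsto z Filter.atTop (nhds x) :=
    tendsto_iff_dist_tendsto_zero.2 <| squeeze_zero (fun _ => dist_nonneg) hzx
      (by simpa using hlim.const_mul (vs.length : ℝ))
  rw [dirDeriv_iterDirDeriv_comm hopen hu vs w hxR]
  simp_rw [fun m => dirDeriv_iterDiffQuot_eqOn (hh m).le hvs (hR m) hu w hx, hz]
  exact ((contDiffOn_iterDirDeriv hopen hwu vs).continuousOn.continuousAt
    (hopen.mem_nhds hxR)).tendsto.comp hztend

variable [FiniteDimensional ℝ E] [MeasurableSpace E] [BorelSpace E]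

lemma lintegral_sq_le_of_tendsto {α : Type*} [MeasurableSpace α] {μ : Measure α}
    {F : ℕ → α → ℝ} {f : α → ℝ} {M : ℝ≥0∞} (hF : ∀ m, AEMeasurable (F m) μ)
    (hlim : ∀ᵐ x ∂μ, Filter.Tendsto (fun m => F m x) Filter.atTop (nhds (f x)))
    (hM : ∀ m, ∫⁻ x, ENNReal.ofReal (F m x ^ 2) ∂μ ≤ M) :
    ∫⁻ x, ENNReal.ofReal (f x ^ 2) ∂μ ≤ M :=
  calc ∫⁻ x, ENNReal.ofReal (f x ^ 2) ∂μ
      = ∫⁻ x, Filter.liminf (fun m => ENNReal.ofReal (F m x ^ 2)) Filter.atTop ∂μ :=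
        lintegral_congr_ae <| hlim.mono fun x hx =>
          ((ENNReal.continuous_ofReal.tendsto _).comp (hx.pow 2)).liminf_eq.symm
    _ ≤ Filter.liminf (fun m => ∫⁻ x, ENNReal.ofReal (F m x ^ 2) ∂μ) Filter.atTop :=
        lintegral_liminf_le' fun m => ((hF m).pow_const 2).ennreal_ofReal
    _ ≤ M := Filter.liminf_le_of_le (by isBoundedDefault) fun a ha =>
        ha.exists.elim fun m hm => hm.trans (hM m)

variable (E) in
lemma exists_lintegral_dirDeriv_iterDirDeriv_le : ∃ C : ℝ, 0 < C ∧ ∀ {ν y v w : E} {c r : ℝ}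
    {vs : List E} {u : E → ℝ}, 0 < r → IsDirichletOnHalfBall ν c y (2 * r) u →
    (∀ v' ∈ v :: vs, IsTangential ν v') → ‖w‖ ≤ 1 →
    ∫⁻ x in halfBall ν c y r, ENNReal.ofReal (dirDeriv w (iterDirDeriv (v :: vs) u) x ^ 2) ≤
      ENNReal.ofReal C * (ENNReal.ofReal (r⁻¹ ^ 2) *
        (∫⁻ x in halfBall ν c y (2 * r), ENNReal.ofReal (iterDirDeriv (v :: vs) u x ^ 2)) +
        ∫⁻ x in halfBall ν c y (2 * r), ENNReal.ofReal (iterDirDeriv vs (Δ u) x ^ 2)) := by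
  obtain ⟨C, hC, hquot⟩ := exists_lintegral_fderiv_iterDiffQuot_le E
  refine ⟨C, hC, fun {ν y v w c r vs u} hr hu hvs hw => ?_⟩
  let h (m : ℕ) : ℝ := r / (2 * (v :: vs).length) * (1 / ((m : ℝ) + 1))
  have hlen : (0 : ℝ) < (v :: vs).length :=
    Nat.cast_pos.2 (List.length_pos_of_mem List.mem_cons_self)
  have hh (m) : 0 < h m := by positivity
  have hhr (m) : (v :: vs).length * h m ≤ r / 2 := by
    have hone : 1 / ((m : ℝ) + 1) ≤ 1 := (div_le_one (by positivity)).2 (by simp)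
    calc (v :: vs).length * h m = r / 2 * (1 / ((m : ℝ) + 1)) := by
          simp only [h]
          field_simp
      _ ≤ r / 2 := mul_le_of_le_one_right (by positivity) hone
  have hlim : Filter.Tendsto h Filter.atTop (nhds 0) := by
    simpa [h] using tendsto_one_div_add_atTop_nhds_zero_nat.const_mul (r / (2 * (v :: vs).length))
  have hR (m) : r + (v :: vs).length * h m ≤ 2 * r := by linarith [hhr m]
  have hopen := isOpen_halfBall ν c y r
  refine lintegral_sq_le_of_tendsto
    (F := fun m => dirDeriv w (iterDiffQuot (h m) (v :: vs) u)) (fun m => ?_)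
    ((ae_restrict_iff' hopen.measurableSet).2 <| .of_forall fun x hx =>
      tendsto_dirDeriv_iterDiffQuot hh hlim hvs hR (by linarith) hu.contDiffOn w hx)
    fun m => (lintegral_mono fun x => ENNReal.ofReal_le_ofReal ?_).trans
      (hquot hr hu hvs (hh m) (hhr m))
  · exact (contDiffOn_dirDeriv hopen (contDiffOn_iterDiffQuot (hh m).le hvs (hR m)
      hu.contDiffOn) w).continuousOn.aemeasurable hopen.measurableSet
  · rw [← sq_abs]
    gcongr
    exact abs_dirDeriv_le hw _ x

lemma lintegral_sum_sq_le {α ι : Type*} [MeasurableSpace α] {μ : Measure α} {s : Finset ι}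
    {F : ι → α → ℝ} {M : ℝ≥0∞} (hF : ∀ i ∈ s, AEMeasurable (F i) μ)
    (hM : ∀ i ∈ s, ∫⁻ x, ENNReal.ofReal (F i x ^ 2) ∂μ ≤ M) :
    ∫⁻ x, ENNReal.ofReal ((∑ i ∈ s, F i x) ^ 2) ∂μ ≤ (s.card : ℝ≥0∞) ^ 2 * M :=
  calc ∫⁻ x, ENNReal.ofReal ((∑ i ∈ s, F i x) ^ 2) ∂μ
      ≤ ∫⁻ x, (s.card : ℝ≥0∞) * ∑ i ∈ s, ENNReal.ofReal (F i x ^ 2) ∂μ := by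
        refine lintegral_mono fun x => ?_
        rw [← ENNReal.ofReal_sum_of_nonneg fun i _ => sq_nonneg _, ← ENNReal.ofReal_natCast,
          ← ENNReal.ofReal_mul (Nat.cast_nonneg _)]
        exact ENNReal.ofReal_le_ofReal sq_sum_le_card_mul_sum_sq
    _ = (s.card : ℝ≥0∞) * ∑ i ∈ s, ∫⁻ x, ENNReal.ofReal (F i x ^ 2) ∂μ := by
        rw [lintegral_const_mul' _ _ (ENNReal.natCast_ne_top _), lintegral_finsetSum']
        exact fun i hi => ((hF i hi).pow_const 2).ennreal_ofReal
    _ ≤ (s.card : ℝ≥0∞) * ∑ _i ∈ s, M := by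
        gcongr with i hi
        exact hM i hi
    _ = _ := by rw [Finset.sum_const, nsmul_eq_mul, ← mul_assoc, sq]

lemma lintegral_tangentialGradNorm_sq_le {ι : Type*} [Fintype ι] [DecidableEq ι] {U : Set E}
    (b : OrthonormalBasis ι ℝ E) (hU : IsOpen U) (hu : ContDiffOn ℝ ∞ u U) (i₀ : ι) (k : ℕ)
    {M : ℝ≥0∞} (hM : ∀ js : List ι, js.length = k → (∀ j ∈ js, j ≠ i₀) → ∀ i,
      ∫⁻ x in U, ENNReal.ofReal (dirDeriv (b i) (iterDirDeriv (js.map b) u) x ^ 2) ≤ M) :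
    ∫⁻ x in U, ENNReal.ofReal (tangentialGradNorm b i₀ k u x ^ 2) ≤
      ((Fintype.card ι : ℝ≥0∞) ^ 2) ^ (k + 1) * M := by
  induction k generalizing u with
  | zero =>
    have hsum := lintegral_sum_sq_le (s := Finset.univ) (F := fun j x => |dirDeriv (b j) u x|)
      (fun j _ => (contDiffOn_dirDeriv hU hu (b j)).continuousOn.abs.aemeasurable
        hU.measurableSet) fun j _ => by
        simp only [sq_abs]
        exact hM [] rfl (by simp) j
    refine le_trans (lintegral_mono fun x => ENNReal.ofReal_le_ofReal ?_) (hsum.trans_eq (by simp))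
    exact pow_le_pow_left₀ (norm_nonneg _) (norm_fderiv_le_sum_abs_dirDeriv b u x) 2
  | succ k ih =>
    refine (lintegral_sum_sq_le
      (fun j _ => (continuousOn_tangentialGradNorm b hU (contDiffOn_dirDeriv hU hu (b j)) i₀
        k).aemeasurable hU.measurableSet)
      (fun j hj => ih (contDiffOn_dirDeriv hU hu (b j)) fun js hjs hne i => ?_)).trans ?_
    · have hcomm : EqOn (dirDeriv (b i) (iterDirDeriv (js.map b) (dirDeriv (b j) u)))
          (dirDeriv (b i) (iterDirDeriv ((j :: js).map b) u)) U :=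
        dirDeriv_eqOn hU (dirDeriv_iterDirDeriv_comm hU hu (js.map b) (b j)).symm (b i)
      rw [setLIntegral_congr_fun hU.measurableSet fun x hx => by rw [hcomm hx]]
      exact hM (j :: js) (by simp [hjs])
        (List.forall_mem_cons.2 ⟨Finset.ne_of_mem_erase hj, hne⟩) i
    · rw [pow_succ _ (k + 1), mul_comm _ ((Fintype.card ι : ℝ≥0∞) ^ 2), mul_assoc]
      gcongr
      exact Finset.card_le_univ _

lemma lintegral_norm_iteratedFDeriv_sq_le_tangentialGradNorm_add {ι : Type*} [Fintype ι]
    [DecidableEq ι] {U : Set E} (b : OrthonormalBasis ι ℝ E) (hU : IsOpen U)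
    (hu : ContDiffOn ℝ ∞ u U) (i₀ : ι) (k : ℕ) :
    ∫⁻ x in U, ENNReal.ofReal (‖iteratedFDeriv ℝ (k + 2) u x‖ ^ 2) ≤
      ENNReal.ofReal (2 * (3 ^ (k + 1)) ^ 2 * (1 + ((Fintype.card ι : ℝ) ^ k) ^ 2)) *
        ((∫⁻ x in U, ENNReal.ofReal (tangentialGradNorm b i₀ (k + 1) u x ^ 2)) +
          ∫⁻ x in U, ENNReal.ofReal (‖iteratedFDeriv ℝ k (Δ u) x‖ ^ 2)) := by
  have hT : AEMeasurable (fun x => ENNReal.ofReal (tangentialGradNorm b i₀ (k + 1) u x ^ 2))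
      (volume.restrict U) :=
    ((continuousOn_tangentialGradNorm b hU hu i₀ (k + 1)).aemeasurable
      hU.measurableSet).pow_const 2 |>.ennreal_ofReal
  rw [← lintegral_add_left' hT, ← lintegral_const_mul' _ _ ENNReal.ofReal_ne_top]
  refine setLIntegral_mono' hU.measurableSet fun x hx => ?_
  rw [← ENNReal.ofReal_add (sq_nonneg _) (sq_nonneg _), ← ENNReal.ofReal_mul (by positivity)]
  exact ENNReal.ofReal_le_ofReal (sq_norm_iteratedFDeriv_le_tangentialGradNorm_add b hU hu hx i₀ k)

lemma exists_orthonormalBasis_apply_eq {F : Type*} [NormedAddCommGroup F] [InnerProductSpace ℝ F]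
    [FiniteDimensional ℝ F] {ν : F} (hν : ‖ν‖ = 1) :
    ∃ (b : OrthonormalBasis (Fin (Module.finrank ℝ F)) ℝ F) (i₀ : _), b i₀ = ν := by
  have : Nontrivial F := ⟨ν, 0, norm_ne_zero_iff.1 (by rw [hν]; exact one_ne_zero)⟩
  let i₀ : Fin (Module.finrank ℝ F) := ⟨0, Module.finrank_pos⟩
  obtain ⟨b, hb⟩ := Orthonormal.exists_orthonormalBasis_extension_of_card_eq (𝕜 := ℝ) (by simp)
    (v := fun _ => ν) (s := {i₀}) ⟨fun _ => hν, fun i j hij => absurd (Subsingleton.elim i j) hij⟩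
  exact ⟨b, i₀, hb i₀ (mem_singleton _)⟩

variable (E) in
lemma exists_lintegral_tangentialGradNorm_sq_le (k : ℕ) : ∃ C : ℝ, 0 < C ∧
    ∀ (b : OrthonormalBasis (Fin (Module.finrank ℝ E)) ℝ E) (i₀ : _) {y : E} {c r : ℝ} {u : E → ℝ},
    0 < r → IsDirichletOnHalfBall (b i₀) c y (2 * r) u →
    ∫⁻ x in halfBall (b i₀) c y r, ENNReal.ofReal (tangentialGradNorm b i₀ (k + 1) u x ^ 2) ≤
      ENNReal.ofReal C * (ENNReal.ofReal (r⁻¹ ^ 2) *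
        (∫⁻ x in halfBall (b i₀) c y (2 * r),
          ENNReal.ofReal (‖iteratedFDeriv ℝ (k + 1) u x‖ ^ 2)) +
        ∫⁻ x in halfBall (b i₀) c y (2 * r),
          ENNReal.ofReal (‖iteratedFDeriv ℝ k (Δ u) x‖ ^ 2)) := by
  obtain ⟨C, hC, hest⟩ := exists_lintegral_dirDeriv_iterDirDeriv_le E
  refine ⟨((Module.finrank ℝ E : ℝ) ^ 2) ^ (k + 2) * C + 1, by positivity,
    fun b i₀ {y c r u} hr hu => ?_⟩
  have hopen (ρ) := isOpen_halfBall (b i₀) c y ρ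
  have hnorm {m : ℕ} {js : List (Fin (Module.finrank ℝ E))} {g : E → ℝ} (hjs : js.length = m)
      (hg : ContDiffOn ℝ ∞ g (halfBall (b i₀) c y (2 * r))) :
      ∫⁻ x in halfBall (b i₀) c y (2 * r), ENNReal.ofReal (iterDirDeriv (js.map b) g x ^ 2) ≤
        ∫⁻ x in halfBall (b i₀) c y (2 * r), ENNReal.ofReal (‖iteratedFDeriv ℝ m g x‖ ^ 2) :=
    setLIntegral_mono' (hopen _).measurableSet fun x hx => ENNReal.ofReal_le_ofReal <| by
      have hle := abs_iterDirDeriv_le (hopen _) hg hx (vs := js.map b)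
        (List.forall_mem_map.2 fun j _ => (b.norm_eq_one j).le)
      rw [List.length_map, hjs] at hle
      rw [← sq_abs]
      gcongr
  have hTT := lintegral_tangentialGradNorm_sq_le b (hopen r)
    (hu.contDiffOn.mono (halfBall_subset_halfBall (by linarith))) i₀ (k + 1)
    (M := ENNReal.ofReal C * (ENNReal.ofReal (r⁻¹ ^ 2) * (∫⁻ x in halfBall (b i₀) c y (2 * r),
      ENNReal.ofReal (‖iteratedFDeriv ℝ (k + 1) u x‖ ^ 2)) + ∫⁻ x in halfBall (b i₀) c y (2 * r),
        ENNReal.ofReal (‖iteratedFDeriv ℝ k (Δ u) x‖ ^ 2))) fun js hjs hne i => by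
    obtain ⟨j, js, rfl⟩ := List.exists_cons_of_length_eq_add_one hjs
    have htan : ∀ w ∈ (j :: js).map b, IsTangential (b i₀) w :=
      List.forall_mem_map.2 fun j hj => ⟨(b.norm_eq_one j).le, b.inner_eq_zero (hne j hj).symm⟩
    refine (hest hr hu htan (b.norm_eq_one i).le).trans ?_
    gcongr _ * (_ * ?_ + ?_)
    · exact hnorm hjs hu.contDiffOn
    · exact hnorm (Nat.succ_injective hjs) (contDiffOn_laplacian (hopen _) hu.contDiffOn)
  refine hTT.trans ?_
  rw [← mul_assoc, Fintype.card_fin, ← ENNReal.ofReal_natCast, ← ENNReal.ofReal_pow (by positivity),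
    ← ENNReal.ofReal_pow (by positivity), ← ENNReal.ofReal_mul (by positivity)]
  gcongr
  linarith

variable (E) in
theorem exists_lintegral_iteratedFDeriv_halfBall_le (k : ℕ) : ∃ C : ℝ, 0 < C ∧
    ∀ {ν y : E} {c r : ℝ} {u : E → ℝ}, ‖ν‖ = 1 → 0 < r → IsDirichletOnHalfBall ν c y (2 * r) u →
    ∫⁻ x in halfBall ν c y r, ENNReal.ofReal (‖iteratedFDeriv ℝ (k + 2) u x‖ ^ 2) ≤
      ENNReal.ofReal C * (ENNReal.ofReal (r⁻¹ ^ 2) *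
        (∫⁻ x in halfBall ν c y (2 * r), ENNReal.ofReal (‖iteratedFDeriv ℝ (k + 1) u x‖ ^ 2)) +
        ∫⁻ x in halfBall ν c y (2 * r), ENNReal.ofReal (‖iteratedFDeriv ℝ k (Δ u) x‖ ^ 2)) := by
  obtain ⟨C, hC, htan⟩ := exists_lintegral_tangentialGradNorm_sq_le E k
  set A : ℝ := 2 * (3 ^ (k + 1)) ^ 2 * (1 + ((Module.finrank ℝ E : ℝ) ^ k) ^ 2) with hA
  refine ⟨A * (C + 1), by positivity, fun {ν y c r u} hν hr hu => ?_⟩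
  obtain ⟨b, i₀, rfl⟩ := exists_orthonormalBasis_apply_eq hν
  have hsub : halfBall (b i₀) c y r ⊆ halfBall (b i₀) c y (2 * r) :=
    halfBall_subset_halfBall (by linarith)
  have hnormal := lintegral_norm_iteratedFDeriv_sq_le_tangentialGradNorm_add b
    (isOpen_halfBall (b i₀) c y r) (hu.contDiffOn.mono hsub) i₀ k
  rw [Fintype.card_fin, ← hA] at hnormal
  refine hnormal.trans ?_
  rw [ENNReal.ofReal_mul (p := A) (by positivity), mul_assoc, ENNReal.ofReal_add hC.le one_pos.le,
    ENNReal.ofReal_one, add_mul, one_mul]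
  gcongr
  exacts [htan b i₀ hr hu, (lintegral_mono_set hsub).trans le_add_self]

end TangentialEstimates

section HalfBallGeometry

variable {E : Type*} [NormedAddCommGroup E] [InnerProductSpace ℝ E] {Ω : Set E} {ν x y : E}
  {c R : ℝ}

lemma mem_closure_halfBall (hν : ν ≠ 0) (hx : x ∈ ball y R) (hxc : c ≤ ⟪ν, x⟫) :
    x ∈ closure (halfBall ν c y R) := by
  have hline : Continuous fun t : ℝ => x + t • ν := by fun_prop
  have htend : Filter.Tendsto (fun t : ℝ => x + t • ν) (nhdsWithin 0 (Ioi 0)) (nhds x) := by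
    simpa using (hline.tendsto 0).mono_left nhdsWithin_le_nhds
  refine mem_closure_of_tendsto htend ?_
  filter_upwards [htend (isOpen_ball.mem_nhds hx), self_mem_nhdsWithin] with t htball htpos
  have hinner : 0 < t * ⟪ν, ν⟫ := mul_pos htpos (real_inner_self_pos.2 hν)
  have hgt : c < ⟪ν, x + t • ν⟫ := by
    rw [inner_add_right, inner_smul_right]
    linarith
  exact ⟨hgt, htball⟩

lemma convex_halfBall (ν : E) (c : ℝ) (y : E) (R : ℝ) : Convex ℝ (halfBall ν c y R) :=
  (convex_halfSpace_gt (innerₛₗ ℝ ν).isLinear c).inter (convex_ball y R)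

lemma halfBall_eq_ball (hν : ‖ν‖ = 1) (hc : c + R ≤ ⟪ν, y⟫) : halfBall ν c y R = ball y R := by
  refine inter_eq_right.2 fun x hx => ?_
  have hle := neg_le_of_abs_le (abs_real_inner_le_norm ν (x - y))
  rw [hν, one_mul, inner_sub_right] at hle
  have hlt : c < ⟪ν, x⟫ := by linarith [mem_ball_iff_norm.1 hx]
  exact hlt

lemma lt_inner_of_disjoint_halfBall_neg (hΩ : IsOpen Ω) (hν : ν ≠ 0)
    (h : Disjoint (halfBall (-ν) (-c) y R) Ω) (hx : x ∈ ball y R) (hxΩ : x ∈ Ω) :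
    c < ⟪ν, x⟫ := by
  by_contra! hle
  exact disjoint_left.1 (h.closure_left hΩ) (mem_closure_halfBall (neg_ne_zero.2 hν) hx
    (by rw [inner_neg_left]; exact neg_le_neg hle)) hxΩ

lemma mem_frontier_of_inter_ball_eq_halfBall (hΩ : IsOpen Ω) (hν : ν ≠ 0)
    (h : Ω ∩ ball y R = halfBall ν c y R) (hx : x ∈ ball y R) (hxc : ⟪ν, x⟫ = c) :
    x ∈ frontier Ω := by
  rw [hΩ.frontier_eq]
  refine ⟨closure_mono (h.ge.trans inter_subset_left) (mem_closure_halfBall hν hx hxc.ge),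
    fun hxΩ => ?_⟩
  have hgt : c < ⟪ν, x⟫ := (h.le ⟨hxΩ, hx⟩).1
  exact hgt.ne' hxc

lemma subset_or_disjoint_of_disjoint_frontier {X : Type*} [TopologicalSpace X] {A V : Set X}
    (hA : IsPreconnected A) (hV : IsOpen V) (h : Disjoint A (frontier V)) :
    A ⊆ V ∨ Disjoint A V := by
  refine or_iff_not_imp_right.2 fun hAV => hA.subset_of_closure_inter_subset hV
    (not_disjoint_iff_nonempty_inter.1 hAV) fun x ⟨hx, hxA⟩ => ?_
  by_contra hxV
  exact disjoint_left.1 h hxA (hV.frontier_eq ▸ ⟨hx, hxV⟩)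

lemma inter_ball_eq_halfBall_or_of_frontier_subset (hΩ : IsOpen Ω)
    (hfr : frontier Ω = frontier (closure Ω)) (hν : ν ≠ 0)
    (hsub : ∀ x ∈ ball y R, x ∈ frontier Ω → ⟪ν, x⟫ = c)
    (hne : (frontier Ω ∩ ball y R).Nonempty) :
    Ω ∩ ball y R = halfBall ν c y R ∨ Ω ∩ ball y R = halfBall (-ν) (-c) y R := by
  have hν' := neg_ne_zero.2 hν
  have hpos : halfBall ν c y R ⊆ Ω ∨ Disjoint (halfBall ν c y R) Ω :=
    subset_or_disjoint_of_disjoint_frontier (convex_halfBall _ _ _ _).isPreconnected hΩ <|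
      disjoint_left.2 fun x hx hxf => hx.1.ne' (hsub x hx.2 hxf)
  have hneg : halfBall (-ν) (-c) y R ⊆ Ω ∨ Disjoint (halfBall (-ν) (-c) y R) Ω :=
    subset_or_disjoint_of_disjoint_frontier (convex_halfBall _ _ _ _).isPreconnected hΩ <|
      disjoint_left.2 fun x hx hxf => by
        have hgt : -c < ⟪-ν, x⟫ := hx.1
        rw [inner_neg_left, hsub x hx.2 hxf] at hgt
        exact hgt.false
  obtain ⟨w, hwf, hwb⟩ := hne
  rcases hpos with hpos | hpos <;> rcases hneg with hneg | hneg
  · have hclosure : ball y R ⊆ closure Ω := fun x hx => by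
      rcases le_total c ⟪ν, x⟫ with hle | hle
      · exact closure_mono hpos (mem_closure_halfBall hν hx hle)
      · exact closure_mono hneg (mem_closure_halfBall hν' hx
          (by rw [inner_neg_left]; exact neg_le_neg hle))
    rw [hfr] at hwf
    exact absurd (interior_maximal hclosure isOpen_ball hwb) hwf.2
  · exact .inl <| Subset.antisymm
      (fun x hx => ⟨lt_inner_of_disjoint_halfBall_neg hΩ hν hneg hx.2 hx.1, hx.2⟩)
      (subset_inter hpos inter_subset_right)
  · have hpos' : Disjoint (halfBall (- -ν) (- -c) y R) Ω := by simpa only [neg_neg] using hpos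
    exact .inr <| Subset.antisymm
      (fun x hx => ⟨lt_inner_of_disjoint_halfBall_neg hΩ hν' hpos' hx.2 hx.1, hx.2⟩)
      (subset_inter hneg inter_subset_right)
  · obtain ⟨z, hzb, hzΩ⟩ := mem_closure_iff.1 (frontier_subset_closure hwf) _ isOpen_ball hwb
    have hgt := lt_inner_of_disjoint_halfBall_neg hΩ hν hneg hzb hzΩ
    exact (disjoint_left.1 hpos ⟨hgt, hzb⟩ hzΩ).elim

lemma exists_pos_forall_finset {ι : Type*} {s : Finset ι} {P : ι → ℝ → Prop}
    (h : ∀ i ∈ s, ∃ c > 0, ∀ c' ∈ Ioc 0 c, P i c') : ∃ c > 0, ∀ i ∈ s, P i c := by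
  have hev : ∀ᶠ c in nhdsWithin (0 : ℝ) (Ioi 0), ∀ i ∈ s, P i c :=
    (Finset.eventually_all s).2 fun i hi =>
      let ⟨_, hc, hP⟩ := h i hi
      Filter.mem_of_superset (Ioc_mem_nhdsGT hc) hP
  obtain ⟨c, hP, hc⟩ := (hev.and self_mem_nhdsWithin).exists
  exact ⟨c, hc, hP⟩

lemma exists_mem_inter_mul_dist_le {a b z : E} {α : ℝ} (ha : ‖a‖ = 1) (hb : ‖b‖ = 1)
    (hab : b - ⟪a, b⟫ • a ≠ 0) (hy : ⟪a, y⟫ = α) :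
    ∃ w, ⟪a, w⟫ = α ∧ ⟪b, w⟫ = ⟪b, z⟫ ∧ ‖b - ⟪a, b⟫ • a‖ * dist y w ≤ dist z y := by
  set p := b - ⟪a, b⟫ • a
  have hp : ‖p‖ ≠ 0 := norm_ne_zero_iff.2 hab
  have hap : ⟪a, p⟫ = 0 := by
    rw [inner_sub_right, inner_smul_right, real_inner_self_eq_norm_sq, ha]
    ring
  have hbp : ⟪b, p⟫ = ‖p‖ ^ 2 := by
    rw [← real_inner_self_eq_norm_sq, ← sub_eq_zero, ← inner_sub_left, sub_sub_cancel,
      real_inner_smul_left, hap, mul_zero]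
  refine ⟨y + (⟪b, z - y⟫ / ‖p‖ ^ 2) • p, ?_, ?_, ?_⟩
  · rw [inner_add_right, inner_smul_right, hap, hy, mul_zero, add_zero]
  · rw [inner_add_right, inner_smul_right, hbp, div_mul_cancel₀ _ (pow_ne_zero 2 hp),
      ← inner_add_right, add_sub_cancel]
  · calc ‖p‖ * dist y (y + (⟪b, z - y⟫ / ‖p‖ ^ 2) • p) = |⟪b, z - y⟫| := by
          rw [dist_self_add_right, norm_smul, norm_div, norm_pow, norm_norm, Real.norm_eq_abs]
          field_simp
      _ ≤ ‖b‖ * ‖z - y‖ := abs_real_inner_le_norm _ _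
      _ = dist z y := by rw [hb, one_mul, dist_eq_norm]

lemma exists_ball_subset_of_mem_closure {F : Type*} [NormedAddCommGroup F] [NormedSpace ℝ F]
    {Q B : Set F} (hQ : Convex ℝ Q) (hne : (interior Q).Nonempty) (hB : Bornology.IsBounded B) :
    ∃ κ > 0, ∀ y ∈ B, y ∈ closure Q → ∀ r ∈ Ioc (0 : ℝ) 1,
      ∃ z, dist z y ≤ r ∧ ball z (κ * r) ⊆ Q := by
  obtain ⟨x₀, hx₀⟩ := hne
  obtain ⟨ρ, hρ, hball⟩ := Metric.isOpen_iff.1 isOpen_interior x₀ hx₀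
  obtain ⟨D, hD⟩ := hB.subset_closedBall x₀
  set M := max D 1
  have hM : 1 ≤ M := le_max_right _ _
  refine ⟨ρ / M, by positivity, fun y hyB hyQ r ⟨hr, hr1⟩ => ?_⟩
  set t := r / M
  have ht : 0 < t := by positivity
  have ht1 : t ≤ 1 := (div_le_one (by positivity)).2 (hr1.trans hM)
  refine ⟨y + t • (x₀ - y), ?_, fun w hw => ?_⟩
  · calc dist (y + t • (x₀ - y)) y = t * dist y x₀ := by
          rw [dist_self_add_left, norm_smul, Real.norm_of_nonneg ht.le, ← dist_eq_norm, dist_comm]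
      _ ≤ t * M := by
          gcongr
          exact (mem_closedBall.1 (hD hyB)).trans (le_max_left _ _)
      _ = r := div_mul_cancel₀ _ (by positivity)
  · set q := x₀ + t⁻¹ • (w - (y + t • (x₀ - y))) with hq
    have hqQ : q ∈ interior Q := hball <| by
      rw [mem_ball, hq, dist_self_add_left, norm_smul, norm_inv, Real.norm_of_nonneg ht.le,
        inv_mul_lt_iff₀ ht, ← dist_eq_norm]
      exact (mem_ball.1 hw).trans_eq (by ring)
    have hwq : (1 - t) • y + t • q = w := by
      rw [hq, smul_add, smul_smul, mul_inv_cancel₀ ht.ne', one_smul, sub_smul, one_smul, smul_sub]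
      abel
    exact hwq ▸ interior_subset (hQ.combo_closure_interior_mem_interior hyQ hqQ
      (sub_nonneg.2 ht1) ht (sub_add_cancel _ _))

end HalfBallGeometry

section PolyhedralDomain

variable {n : ℕ} {Ω H H' : Set (EuclideanSpace ℝ (Fin n))}
  {𝓗 : Finset (Set (EuclideanSpace ℝ (Fin n)))} {x y : EuclideanSpace ℝ (Fin n)}

namespace IsAffineHyperplane

lemma exists_norm_eq_one (h : IsAffineHyperplane H) :
    ∃ (ν : EuclideanSpace ℝ (Fin n)) (c : ℝ), ‖ν‖ = 1 ∧ H = {x | ⟪ν, x⟫ = c} := by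
  obtain ⟨v, c, hv, rfl⟩ := h
  have hv' : ‖v‖⁻¹ ≠ 0 := inv_ne_zero (norm_ne_zero_iff.2 hv)
  refine ⟨‖v‖⁻¹ • v, ‖v‖⁻¹ * c, norm_smul_inv_norm (𝕜 := ℝ) hv, ?_⟩
  ext x
  simp only [mem_ofPred_eq, real_inner_smul_left, mul_right_inj' hv']

lemma isClosed (h : IsAffineHyperplane H) : IsClosed H := by
  obtain ⟨ν, c, -, rfl⟩ := h
  exact isClosed_eq (by fun_prop) continuous_const

lemma dense_compl (h : IsAffineHyperplane H) : Dense Hᶜ := fun x => by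
  obtain ⟨ν, c, hν, rfl⟩ := h
  by_cases hx : ⟪ν, x⟫ = c
  · refine closure_mono (fun z hz => ?_)
      (mem_closure_halfBall hν (mem_ball_self one_pos) hx.ge)
    exact hz.1.ne'
  · exact subset_closure hx

lemma exists_dist_dichotomy (h : IsAffineHyperplane H) (h' : IsAffineHyperplane H')
    (hne : H ≠ H') : ∃ d > 0, ∀ y ∈ H, ∀ z ∈ H',
      d ≤ dist z y ∨ ∃ w ∈ H ∩ H', d * dist y w ≤ dist z y := by
  obtain ⟨a, α, ha, rfl⟩ := h.exists_norm_eq_one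
  obtain ⟨b, β, hb, rfl⟩ := h'.exists_norm_eq_one
  by_cases hab : b - ⟪a, b⟫ • a = 0
  · set s := ⟪a, b⟫
    have hbs : b = s • a := sub_eq_zero.1 hab
    have hs : s ≠ 0 := fun hs => one_ne_zero (hb.symm.trans (by rw [hbs, hs, zero_smul, norm_zero]))
    have hd : β - s * α ≠ 0 := fun hd => hne <| by
      ext x
      simp only [mem_ofPred_eq, hbs, real_inner_smul_left, sub_eq_zero.1 hd, mul_right_inj' hs]
    refine ⟨|β - s * α|, abs_pos.2 hd, fun y (hy : ⟪a, y⟫ = α) z (hz : ⟪b, z⟫ = β) => .inl ?_⟩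
    have hby : ⟪b, y⟫ = s * α := by rw [hbs, real_inner_smul_left, hy]
    calc |β - s * α| = |⟪b, z - y⟫| := by rw [inner_sub_right, hz, hby]
      _ ≤ ‖b‖ * ‖z - y‖ := abs_real_inner_le_norm _ _
      _ = dist z y := by rw [hb, one_mul, dist_eq_norm]
  · refine ⟨_, norm_pos_iff.2 hab, fun y hy z hz => .inr ?_⟩
    obtain ⟨w, haw, hbw, hle⟩ := exists_mem_inter_mul_dist_le ha hb hab hy
    exact ⟨w, ⟨haw, hbw.trans hz⟩, hle⟩

end IsAffineHyperplane

lemma dense_compl_biUnion_hyperplanes (h𝓗 : ∀ H ∈ 𝓗, IsAffineHyperplane H) :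
    Dense (⋃ H ∈ 𝓗, H)ᶜ := by
  rw [compl_iUnion₂]
  exact dense_biInter_of_isOpen (fun H hH => (h𝓗 H hH).isClosed.isOpen_compl)
    𝓗.countable_toSet fun H hH => (h𝓗 H hH).dense_compl

lemma exists_finite_cells (h𝓗 : ∀ H ∈ 𝓗, IsAffineHyperplane H) :
    ∃ 𝓠 : Set (Set (EuclideanSpace ℝ (Fin n))), 𝓠.Finite ∧ (∀ Q ∈ 𝓠, IsOpen Q ∧ Convex ℝ Q) ∧
      ⋃₀ 𝓠 = (⋃ H ∈ 𝓗, H)ᶜ := by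
  classical
  induction 𝓗 using Finset.induction_on with
  | empty => exact ⟨{univ}, by simp [isOpen_univ, convex_univ]⟩
  | insert H 𝓗 _ ih =>
    obtain ⟨hH, h𝓗'⟩ := (Finset.forall_mem_insert _ _ _).1 h𝓗
    obtain ⟨ν, c, -, rfl⟩ := hH
    obtain ⟨𝓠, hfin, hQ, hcover⟩ := ih h𝓗'
    refine ⟨(· ∩ {x | ⟪ν, x⟫ < c}) '' 𝓠 ∪ (· ∩ {x | c < ⟪ν, x⟫}) '' 𝓠,
      (hfin.image _).union (hfin.image _), ?_, ?_⟩
    · rintro _ (⟨Q, hQ𝓠, rfl⟩ | ⟨Q, hQ𝓠, rfl⟩)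
      · exact ⟨(hQ Q hQ𝓠).1.inter (isOpen_lt (by fun_prop) continuous_const),
          (hQ Q hQ𝓠).2.inter (convex_halfSpace_lt (innerₛₗ ℝ ν).isLinear c)⟩
      · exact ⟨(hQ Q hQ𝓠).1.inter (isOpen_lt continuous_const (by fun_prop)),
          (hQ Q hQ𝓠).2.inter (convex_halfSpace_gt (innerₛₗ ℝ ν).isLinear c)⟩
    · rw [sUnion_union, sUnion_image, sUnion_image, ← iUnion₂_inter, ← iUnion₂_inter,
        ← sUnion_eq_biUnion, hcover, ← inter_union_distrib_left, Finset.set_biUnion_insert,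
        compl_union, inter_comm]
      congr 1
      ext x
      simp only [mem_union, mem_ofPred_eq, mem_compl_iff, lt_or_lt_iff_ne]

lemma isClosed_polySingularSet (h𝓗 : ∀ H ∈ 𝓗, IsAffineHyperplane H) :
    IsClosed (polySingularSet Ω 𝓗) := by
  have heq : polySingularSet Ω 𝓗 =
      frontier Ω ∩ ⋃ H₁ ∈ 𝓗, ⋃ H₂ ∈ 𝓗, {x | H₁ ≠ H₂ ∧ x ∈ H₁ ∧ x ∈ H₂} := by
    ext x
    simp only [polySingularSet, mem_ofPred_eq, mem_inter_iff, mem_iUnion, exists_prop]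
  rw [heq]
  refine isClosed_frontier.inter (isClosed_biUnion_finset fun H₁ h₁ =>
    isClosed_biUnion_finset fun H₂ h₂ => isClosed_const.and ?_)
  exact (h𝓗 H₁ h₁).isClosed.inter (h𝓗 H₂ h₂).isClosed

namespace IsPolyhedralDomain

lemma exists_mem_hyperplane (hΩ : IsPolyhedralDomain Ω 𝓗) (hx : x ∈ frontier Ω) :
    ∃ H ∈ 𝓗, x ∈ H := by
  simpa using hΩ.subset_union hx

lemma infDist_pos (hΩ : IsPolyhedralDomain Ω 𝓗) (hS : (polySingularSet Ω 𝓗).Nonempty)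
    (hx : x ∈ Ω) : 0 < infDist x (polySingularSet Ω 𝓗) :=
  ((isClosed_polySingularSet hΩ.hyperplane).notMem_iff_infDist_pos hS).1 fun hxS =>
    (hΩ.isOpen.frontier_eq ▸ hxS.1).2 hx

lemma exists_infDist_le (hΩ : IsPolyhedralDomain Ω 𝓗) (hS : (polySingularSet Ω 𝓗).Nonempty) :
    ∃ D : ℝ, 1 ≤ D ∧ ∀ y ∈ closure Ω, infDist y (polySingularSet Ω 𝓗) ≤ D := by
  obtain ⟨s, hs⟩ := hS
  obtain ⟨D, hD⟩ := hΩ.isBounded.closure.subset_closedBall s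
  exact ⟨max D 1, le_max_right _ _, fun y hy =>
    (infDist_le_dist_of_mem hs).trans ((mem_closedBall.1 (hD hy)).trans (le_max_left _ _))⟩

lemma exists_hyperplane_inter_ball_subset_frontier (hΩ : IsPolyhedralDomain Ω 𝓗) (hH : H ∈ 𝓗)
    (hy : y ∈ frontier Ω) (hyH : y ∈ H) (hyS : y ∉ polySingularSet Ω 𝓗) :
    ∃ R > 0, H ∩ ball y R ⊆ frontier Ω := by
  classical
  have hopen : IsOpen (⋃ K ∈ 𝓗.erase H, K)ᶜ :=
    (isClosed_biUnion_finset fun K hK =>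
      (hΩ.hyperplane K (Finset.mem_of_mem_erase hK)).isClosed).isOpen_compl
  have hynot : y ∈ (⋃ K ∈ 𝓗.erase H, K)ᶜ := fun hmem => by
    obtain ⟨K, hK, hyK⟩ := mem_iUnion₂.1 hmem
    exact hyS ⟨hy, H, hH, K, Finset.mem_of_mem_erase hK, (Finset.ne_of_mem_erase hK).symm, hyH, hyK⟩
  obtain ⟨R, hR, hball⟩ := Metric.isOpen_iff.1 hopen y hynot
  obtain ⟨ν, c, hν, rfl⟩ := hΩ.hyperplane H hH
  have hsub : ∀ x ∈ ball y R, x ∈ frontier Ω → ⟪ν, x⟫ = c := fun x hx hxf => by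
    obtain ⟨K, hK, hxK⟩ := hΩ.exists_mem_hyperplane hxf
    by_contra hxH
    exact hball hx (mem_iUnion₂.2 ⟨K, Finset.mem_erase.2 ⟨fun h => hxH (h.le hxK), hK⟩, hxK⟩)
  refine ⟨R, hR, fun x ⟨hxH, hx⟩ => ?_⟩
  rcases inter_ball_eq_halfBall_or_of_frontier_subset hΩ.isOpen hΩ.frontier_closure hν hsub
    ⟨y, hy, mem_ball_self hR⟩ with h | h
  · exact mem_frontier_of_inter_ball_eq_halfBall hΩ.isOpen hν h hx hxH
  · exact mem_frontier_of_inter_ball_eq_halfBall hΩ.isOpen (neg_ne_zero.2 hν) h hx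
      (by rw [inner_neg_left]; exact congrArg Neg.neg hxH)

lemma subset_frontier_of_isPreconnected (hΩ : IsPolyhedralDomain Ω 𝓗) (hH : H ∈ 𝓗)
    {A : Set (EuclideanSpace ℝ (Fin n))} (hA : IsPreconnected A) (hAH : A ⊆ H)
    (hAS : Disjoint A (polySingularSet Ω 𝓗)) (hne : (A ∩ frontier Ω).Nonempty) :
    A ⊆ frontier Ω := by
  have := isPreconnected_iff_preconnectedSpace.1 hA
  have hclopen : IsClopen ((↑) ⁻¹' frontier Ω : Set A) := by
    refine ⟨isClosed_frontier.preimage continuous_subtype_val, isOpen_iff_mem_nhds.2 fun x hx => ?_⟩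
    obtain ⟨R, hR, hsub⟩ := hΩ.exists_hyperplane_inter_ball_subset_frontier hH hx (hAH x.2)
      (disjoint_left.1 hAS x.2)
    exact Filter.mem_of_superset (ball_mem_nhds x hR) fun z hz => hsub ⟨hAH z.2, hz⟩
  have huniv := hclopen.eq_univ (hne.elim fun x hx => ⟨⟨x, hx.1⟩, hx.2⟩)
  exact fun x hx => huniv.ge (mem_univ ⟨x, hx⟩)

lemma infDist_le_dist_of_mem_inter (hΩ : IsPolyhedralDomain Ω 𝓗) (hH : H ∈ 𝓗) (hH' : H' ∈ 𝓗)
    (hne : H ≠ H') {z : EuclideanSpace ℝ (Fin n)} (hy : y ∈ frontier Ω) (hyH : y ∈ H)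
    (hz : z ∈ H ∩ H') : infDist y (polySingularSet Ω 𝓗) ≤ dist y z := by
  by_contra! hlt
  have hconvex : Convex ℝ H := by
    obtain ⟨ν, c, -, rfl⟩ := hΩ.hyperplane H hH
    exact convex_hyperplane (innerₛₗ ℝ ν).isLinear c
  have hdisj : Disjoint (segment ℝ y z) (polySingularSet Ω 𝓗) := disjoint_left.2 fun x hx hxS => by
    have hyx := infDist_le_dist_of_mem (x := y) hxS
    linarith [dist_add_dist_of_mem_segment hx, dist_nonneg (x := x) (y := z)]
  have hsub := hΩ.subset_frontier_of_isPreconnected hH (convex_segment y z).isPreconnected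
    (hconvex.segment_subset hyH hz.1) hdisj ⟨y, left_mem_segment ℝ y z, hy⟩
  have hzseg := right_mem_segment ℝ y z
  exact disjoint_left.1 hdisj hzseg ⟨hsub hzseg, H, hH, H', hH', hne, hz⟩

lemma exists_mul_infDist_le_dist (hΩ : IsPolyhedralDomain Ω 𝓗)
    (hS : (polySingularSet Ω 𝓗).Nonempty) :
    ∃ c > 0, ∀ H ∈ 𝓗, ∀ H' ∈ 𝓗, H ≠ H' → ∀ y ∈ frontier Ω, y ∈ H → ∀ z ∈ H',
      c * infDist y (polySingularSet Ω 𝓗) ≤ dist z y := by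
  obtain ⟨D, hD, hηD⟩ := hΩ.exists_infDist_le hS
  have hDpos : 0 < D := one_pos.trans_le hD
  suffices h : ∀ p ∈ 𝓗 ×ˢ 𝓗, ∃ c > 0, ∀ c' ∈ Ioc 0 c, p.1 ≠ p.2 → ∀ y ∈ frontier Ω, y ∈ p.1 →
      ∀ z ∈ p.2, c' * infDist y (polySingularSet Ω 𝓗) ≤ dist z y by
    obtain ⟨c, hc, hall⟩ := exists_pos_forall_finset h
    exact ⟨c, hc, fun H hH H' hH' => hall (H, H') (Finset.mem_product.2 ⟨hH, hH'⟩)⟩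
  rintro ⟨H, H'⟩ hp
  obtain ⟨hH, hH'⟩ := Finset.mem_product.1 hp
  by_cases hne : H = H'
  · exact ⟨1, one_pos, fun _ _ h => absurd hne h⟩
  obtain ⟨d, hd, hdich⟩ := (hΩ.hyperplane H hH).exists_dist_dichotomy (hΩ.hyperplane H' hH') hne
  refine ⟨d / D, by positivity, fun c' hc' _ y hy hyH z hz => ?_⟩
  have hc'D : c' * D ≤ d := (le_div_iff₀ hDpos).1 hc'.2
  rcases hdich y hyH z hz with hle | ⟨w, hw, hle⟩
  · exact (mul_le_mul_of_nonneg_left (hηD y (frontier_subset_closure hy)) hc'.1.le).trans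
      (hc'D.trans hle)
  · exact (mul_le_mul ((le_mul_of_one_le_right hc'.1.le hD).trans hc'D)
      (hΩ.infDist_le_dist_of_mem_inter hH hH' hne hy hyH hw) infDist_nonneg hd.le).trans hle

lemma exists_inter_ball_eq_halfBall (hΩ : IsPolyhedralDomain Ω 𝓗)
    (hS : (polySingularSet Ω 𝓗).Nonempty) :
    ∃ κ > 0, κ ≤ 1 / 4 ∧ ∀ y R, 0 < R → R ≤ κ * infDist y (polySingularSet Ω 𝓗) →
      Disjoint (ball y R) Ω ∨ ∃ (ν : EuclideanSpace ℝ (Fin n)) (c : ℝ), ‖ν‖ = 1 ∧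
        Ω ∩ ball y R = halfBall ν c y R := by
  obtain ⟨c₁, hc₁, hsep⟩ := hΩ.exists_mul_infDist_le_dist hS
  set η := fun x => infDist x (polySingularSet Ω 𝓗)
  refine ⟨min (c₁ / 4) (1 / 4), by positivity, min_le_right _ _, fun y R hR hRη => ?_⟩
  have hη : 0 ≤ η y := infDist_nonneg
  have hR4 : R ≤ 1 / 4 * η y := hRη.trans (by gcongr; exact min_le_right _ _)
  have hRc : R ≤ c₁ / 4 * η y := hRη.trans (by gcongr; exact min_le_left _ _)
  by_cases hne : (frontier Ω ∩ ball y R).Nonempty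
  · obtain ⟨w, hwf, hwb⟩ := id hne
    obtain ⟨H, hH, hwH⟩ := hΩ.exists_mem_hyperplane hwf
    have hηw : η y ≤ 2 * η w := by
      have hlip : η y ≤ η w + dist y w := infDist_le_infDist_add_dist
      linarith [mem_ball'.1 hwb]
    have hsub : ∀ x ∈ ball y R, x ∈ frontier Ω → x ∈ H := fun x hx hxf => by
      obtain ⟨K, hK, hxK⟩ := hΩ.exists_mem_hyperplane hxf
      by_contra hxH
      have hle := hsep H hH K hK (fun h => hxH (h.ge hxK)) w hwf hwH x hxK
      have hmul := mul_le_mul_of_nonneg_left hηw hc₁.le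
      linarith [dist_triangle_right x w y, mem_ball.1 hx, mem_ball.1 hwb]
    obtain ⟨ν, c, hν, rfl⟩ := (hΩ.hyperplane H hH).exists_norm_eq_one
    rcases inter_ball_eq_halfBall_or_of_frontier_subset hΩ.isOpen hΩ.frontier_closure
      (norm_ne_zero_iff.1 (hν.trans_ne one_ne_zero)) hsub hne with h | h
    · exact .inr ⟨ν, c, hν, h⟩
    · exact .inr ⟨-ν, -c, (norm_neg ν).trans hν, h⟩
  · have hdisj : Disjoint (ball y R) (frontier Ω) :=
      disjoint_left.2 fun x hx hxf => hne ⟨x, hxf, hx⟩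
    refine (subset_or_disjoint_of_disjoint_frontier (convex_ball y R).isPreconnected hΩ.isOpen
      hdisj).symm.imp_right fun hball => ?_
    obtain ⟨s, -, H, hH, -⟩ := hS
    obtain ⟨ν, -, hν, -⟩ := (hΩ.hyperplane H hH).exists_norm_eq_one
    exact ⟨ν, ⟪ν, y⟫ - R, hν, by
      rw [halfBall_eq_ball hν (sub_add_cancel _ _).le, inter_eq_right.2 hball]⟩

lemma exists_ball_disjoint (hΩ : IsPolyhedralDomain Ω 𝓗) :
    ∃ κ > 0, ∀ y ∈ frontier Ω, ∀ r ∈ Ioc (0 : ℝ) 1,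
      ∃ z, dist z y ≤ r ∧ Disjoint (ball z (κ * r)) Ω := by
  obtain ⟨𝓠, hfin, hQ, hcover⟩ := exists_finite_cells hΩ.hyperplane
  have hcell : ∀ Q ∈ 𝓠, Q ⊆ Ω ∨ Disjoint Q Ω := fun Q hQ𝓠 =>
    subset_or_disjoint_of_disjoint_frontier (hQ Q hQ𝓠).2.isPreconnected hΩ.isOpen <|
      disjoint_left.2 fun x hx hxf => (hcover.le ⟨Q, hQ𝓠, hx⟩ :) (hΩ.subset_union hxf)
  have hball : ∀ Q ∈ hfin.toFinset, ∃ κ > 0, ∀ κ' ∈ Ioc 0 κ, ∀ y ∈ frontier Ω, y ∈ closure Q →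
      ∀ r ∈ Ioc (0 : ℝ) 1, ∃ z, dist z y ≤ r ∧ ball z (κ' * r) ⊆ Q := fun Q hQ𝓠 => by
    obtain ⟨hopen, hconvex⟩ := hQ Q (hfin.mem_toFinset.1 hQ𝓠)
    rcases Q.eq_empty_or_nonempty with rfl | hne
    · exact ⟨1, one_pos, by simp⟩
    · obtain ⟨κ, hκ, h⟩ := exists_ball_subset_of_mem_closure hconvex
        (hopen.interior_eq.symm ▸ hne) (hΩ.isBounded.closure.subset frontier_subset_closure)
      refine ⟨κ, hκ, fun κ' hκ' y hy hyQ r hr => (h y hy hyQ r hr).imp fun z hz => ⟨hz.1, ?_⟩⟩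
      exact (ball_subset_ball (mul_le_mul_of_nonneg_right hκ'.2 hr.1.le)).trans hz.2
  obtain ⟨κ, hκ, hall⟩ := exists_pos_forall_finset hball
  refine ⟨κ, hκ, fun y hy r hr => ?_⟩
  have hyext : y ∈ closure (closure Ω)ᶜ := by
    rw [hΩ.frontier_closure] at hy
    rw [closure_compl]
    exact hy.2
  have hycells : y ∈ closure (⋃₀ {Q ∈ 𝓠 | Disjoint Q Ω}) := by
    have hdense := (dense_compl_biUnion_hyperplanes hΩ.hyperplane).open_subset_closure_inter
      (isClosed_closure (s := Ω)).isOpen_compl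
    have hsub : (closure Ω)ᶜ ∩ (⋃ H ∈ 𝓗, H)ᶜ ⊆ ⋃₀ {Q ∈ 𝓠 | Disjoint Q Ω} := fun x ⟨hxΩ, hx⟩ => by
      obtain ⟨Q, hQ𝓠, hxQ⟩ := hcover.ge hx
      exact ⟨Q, ⟨hQ𝓠, (hcell Q hQ𝓠).resolve_left fun h => hxΩ (subset_closure (h hxQ))⟩, hxQ⟩
    exact closure_minimal (hdense.trans (closure_mono hsub)) isClosed_closure hyext
  rw [(hfin.subset (sep_subset _ _)).closure_sUnion] at hycells
  obtain ⟨Q, ⟨hQ𝓠, hdisj⟩, hyQ⟩ := mem_iUnion₂.1 hycells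
  obtain ⟨z, hz, hzQ⟩ := hall Q (hfin.mem_toFinset.2 hQ𝓠) y hy hyQ r hr
  exact ⟨z, hz, hdisj.mono_left hzQ⟩

lemma exists_finset_directions (hΩ : IsPolyhedralDomain Ω 𝓗)
    (hS : (polySingularSet Ω 𝓗).Nonempty) :
    ∃ V : Finset (EuclideanSpace ℝ (Fin n)), (∀ e ∈ V, ‖e‖ = 1) ∧ ∀ x ∈ Ω, ∃ e ∈ V,
      ∃ t ∈ Ioc 0 (2 * infDist x (polySingularSet Ω 𝓗)), x + t • e ∉ Ω := by
  obtain ⟨κ, hκ, hext⟩ := hΩ.exists_ball_disjoint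
  obtain ⟨D, hD, hηD⟩ := hΩ.exists_infDist_le hS
  have hDpos : 0 < D := one_pos.trans_le hD
  set δ := κ / (2 * D)
  have hδ : 0 < δ := by positivity
  obtain ⟨V, hV, hfin, hcover⟩ :=
    (isCompact_sphere (0 : EuclideanSpace ℝ (Fin n)) 1).finite_cover_balls hδ
  refine ⟨hfin.toFinset, fun e he => by simpa using hV (hfin.mem_toFinset.1 he), fun x hx => ?_⟩
  set η := infDist x (polySingularSet Ω 𝓗)
  have hη : 0 < η := hΩ.infDist_pos hS hx
  obtain ⟨s, hs, hxs⟩ := (isClosed_polySingularSet hΩ.hyperplane).exists_infDist_eq_dist hS x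
  have hrη : η / D ≤ η := div_le_self hη.le hD
  obtain ⟨z, hzs, hdisj⟩ := hext s hs.1 (η / D)
    ⟨by positivity, (div_le_one hDpos).2 (hηD x (subset_closure hx))⟩
  have hzx : 0 < ‖z - x‖ := norm_pos_iff.2 <| sub_ne_zero.2 fun h =>
    disjoint_left.1 hdisj (mem_ball_self (by positivity)) (h ▸ hx)
  have hle : ‖z - x‖ ≤ 2 * η := by
    rw [← dist_eq_norm]
    linarith [dist_triangle z s x, dist_comm s x]
  set e₀ := ‖z - x‖⁻¹ • (z - x)
  have hze₀ : z = x + ‖z - x‖ • e₀ := by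
    rw [smul_inv_smul₀ hzx.ne', add_sub_cancel]
  obtain ⟨e, heV, he⟩ := mem_iUnion₂.1 <| hcover <|
    mem_sphere_zero_iff_norm.2 (norm_smul_inv_norm (𝕜 := ℝ) (norm_pos_iff.1 hzx))
  refine ⟨e, hfin.mem_toFinset.2 heV, ‖z - x‖, ⟨hzx, hle⟩, disjoint_left.1 hdisj ?_⟩
  calc dist (x + ‖z - x‖ • e) z = ‖z - x‖ * dist e₀ e := by
        nth_rw 2 [hze₀]
        rw [dist_add_left, dist_smul₀, norm_norm, dist_comm]
    _ < ‖z - x‖ * δ := by gcongr; exact he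
    _ ≤ 2 * η * δ := by gcongr
    _ = κ * (η / D) := by
        simp only [δ]
        field_simp

end IsPolyhedralDomain

end PolyhedralDomain

section ExitTime

variable {E : Type*} [NormedAddCommGroup E] [NormedSpace ℝ E] {U : Set E} {e x : E} {s t : ℝ}

/-- The time at which the ray from `x` in the direction `e` first leaves `U`. -/
def exitTime (U : Set E) (e x : E) : ℝ := sInf {t | 0 ≤ t ∧ x + t • e ∉ U}

lemma exitTime_nonneg : 0 ≤ exitTime U e x := Real.sInf_nonneg fun _ ht => ht.1

lemma exitTime_le (ht : 0 ≤ t) (h : x + t • e ∉ U) : exitTime U e x ≤ t :=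
  csInf_le ⟨0, fun _ hs => hs.1⟩ ⟨ht, h⟩

lemma add_smul_mem_of_lt_exitTime (ht : 0 ≤ t) (h : t < exitTime U e x) : x + t • e ∈ U :=
  not_not.1 fun hmem => h.not_ge (exitTime_le ht hmem)

lemma add_exitTime_smul_notMem (hU : IsOpen U) (hUb : Bornology.IsBounded U) (he : e ≠ 0) (x : E) :
    x + exitTime U e x • e ∉ U := by
  have hclosed : IsClosed {t : ℝ | 0 ≤ t ∧ x + t • e ∉ U} :=
    isClosed_Ici.inter (hU.isClosed_compl.preimage (f := fun t : ℝ => x + t • e) (by fun_prop))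
  have hne : {t : ℝ | 0 ≤ t ∧ x + t • e ∉ U}.Nonempty := by
    obtain ⟨D, hD⟩ := hUb.subset_closedBall x
    have hnorm : 0 < ‖e‖ := norm_pos_iff.2 he
    refine ⟨(|D| + 1) / ‖e‖, by positivity, fun hmem => ?_⟩
    have hdist := mem_closedBall.1 (hD hmem)
    rw [dist_eq_norm, add_sub_cancel_left, norm_smul, Real.norm_of_nonneg (by positivity),
      div_mul_cancel₀ _ hnorm.ne'] at hdist
    linarith [le_abs_self D]
  exact (hclosed.csInf_mem hne ⟨0, fun _ ht => ht.1⟩).2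

lemma exitTime_pos (hU : IsOpen U) (hUb : Bornology.IsBounded U) (he : e ≠ 0) (hx : x ∈ U) :
    0 < exitTime U e x :=
  exitTime_nonneg.lt_of_ne fun h0 => add_exitTime_smul_notMem hU hUb he x (by simpa [← h0])

lemma exitTime_add_smul (hU : IsOpen U) (hUb : Bornology.IsBounded U) (he : e ≠ 0) (hs : 0 ≤ s)
    (hsx : s ≤ exitTime U e x) : exitTime U e (x + s • e) = exitTime U e x - s := by
  have hadd (r : ℝ) : x + s • e + r • e = x + (s + r) • e := by rw [add_assoc, ← add_smul]
  apply le_antisymm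
  · refine exitTime_le (sub_nonneg.2 hsx) ?_
    rw [hadd, add_sub_cancel]
    exact add_exitTime_smul_notMem hU hUb he x
  · have hexit := add_exitTime_smul_notMem hU hUb he (x + s • e)
    rw [hadd] at hexit
    linarith [exitTime_le (add_nonneg hs exitTime_nonneg) hexit]

lemma add_exitTime_smul_mem_frontier (hU : IsOpen U) (hUb : Bornology.IsBounded U) (he : e ≠ 0)
    (hx : x ∈ U) : x + exitTime U e x • e ∈ frontier U := by
  rw [hU.frontier_eq]
  refine ⟨?_, add_exitTime_smul_notMem hU hUb he x⟩
  have hline : Continuous fun t : ℝ => x + t • e := by fun_prop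
  refine mem_closure_of_tendsto (b := nhdsWithin _ (Iio (exitTime U e x)))
    ((hline.tendsto _).mono_left nhdsWithin_le_nhds) ?_
  filter_upwards [Ioo_mem_nhdsLT (exitTime_pos hU hUb he hx)] with t ht
  exact add_smul_mem_of_lt_exitTime ht.1.le ht.2

open scoped Pointwise in
lemma exitTime_preimage_Iic (hU : IsOpen U) (hUb : Bornology.IsBounded U) (he : e ≠ 0) (a : ℝ) :
    exitTime U e ⁻¹' Iic a = Uᶜ + (fun t : ℝ => -(t • e)) '' Icc 0 a := by
  ext x
  constructor
  · intro hx
    exact ⟨x + exitTime U e x • e, add_exitTime_smul_notMem hU hUb he x, -(exitTime U e x • e),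
      ⟨_, ⟨exitTime_nonneg, hx⟩, rfl⟩, by simp⟩
  · rintro ⟨z, hz, _, ⟨t, ht, rfl⟩, rfl⟩
    exact (exitTime_le ht.1 (by simpa using hz)).trans ht.2

lemma measurable_exitTime [MeasurableSpace E] [BorelSpace E] (hU : IsOpen U)
    (hUb : Bornology.IsBounded U) (he : e ≠ 0) : Measurable (exitTime U e) := by
  refine measurable_of_Iic fun a => ?_
  rw [exitTime_preimage_Iic hU hUb he]
  exact (hU.isClosed_compl.add_right_of_isCompact
    (isCompact_Icc.image (by fun_prop))).measurableSet

end ExitTime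

section Hardy

lemma lintegral_Ioc_inv_sqrt_sub_le {T s : ℝ} (hs : 0 ≤ s) (hsT : s < T) :
    ∫⁻ r in Ioc 0 s, ENNReal.ofReal (1 / √(T - r)) ≤ ENNReal.ofReal (2 * √T) := by
  have hcont : ContinuousOn (fun r => 1 / √(T - r)) (Icc 0 s) :=
    continuousOn_const.div (by fun_prop) fun r hr => (Real.sqrt_pos.2 (by linarith [hr.2])).ne'
  have hderiv : ∀ r ∈ uIcc 0 s, HasDerivAt (fun r => -2 * √(T - r)) (1 / √(T - r)) r := by
    intro r hr
    rw [uIcc_of_le hs] at hr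
    exact ((((hasDerivAt_id r).const_sub T).sqrt (by simp; linarith [hr.2])).const_mul
      (-2)).congr_deriv (by simp only [id]; ring)
  rw [← ofReal_integral_eq_lintegral_ofReal (hcont.integrableOn_Icc.mono_set Ioc_subset_Icc_self)
      (.of_forall fun r => by positivity), ← intervalIntegral.integral_of_le hs,
    intervalIntegral.integral_eq_sub_of_hasDerivAt hderiv
      (by rw [← uIcc_of_le hs] at hcont; exact hcont.intervalIntegrable), sub_zero]
  exact ENNReal.ofReal_le_ofReal (by linarith [Real.sqrt_nonneg (T - s)])

lemma lintegral_Ioi_add_rpow {T : ℝ} (hT : 0 < T) :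
    ∫⁻ s in Ioi (0 : ℝ), ENNReal.ofReal ((s + T) ^ (-3 / 2 : ℝ)) =
      ENNReal.ofReal (2 * T ^ (-1 / 2 : ℝ)) := by
  have htranslate : ∫⁻ s in Ioi (0 : ℝ), ENNReal.ofReal ((s + T) ^ (-3 / 2 : ℝ)) =
      ∫⁻ s in Ioi T, ENNReal.ofReal (s ^ (-3 / 2 : ℝ)) := by
    rw [← lintegral_indicator measurableSet_Ioi, ← lintegral_indicator measurableSet_Ioi,
      ← lintegral_add_right_eq_self ((Ioi T).indicator _) T]
    refine lintegral_congr fun s => ?_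
    by_cases hs : 0 < s <;> simp [indicator, hs]
  rw [htranslate, ← ofReal_integral_eq_lintegral_ofReal
      (integrableOn_Ioi_rpow_of_lt (by norm_num) hT)
      ((ae_restrict_iff' measurableSet_Ioi).2 (.of_forall fun s hs =>
        Real.rpow_nonneg (hT.le.trans (le_of_lt hs)) _)),
    integral_Ioi_rpow_of_lt (by norm_num) hT]
  congr 1
  norm_num
  ring

variable {E : Type*} [NormedAddCommGroup E] [NormedSpace ℝ E] {U : Set E} {e x : E} {g : E → ℝ}

lemma ofReal_sub_sq_le_of_segment {T s : ℝ} (hU : IsOpen U) (hg : ContDiffOn ℝ ∞ g U)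
    (hs : 0 ≤ s) (hsT : s < T) (hseg : ∀ r ∈ Icc 0 s, x + r • e ∈ U) :
    ENNReal.ofReal ((g (x + s • e) - g x) ^ 2) ≤ ENNReal.ofReal (2 * √T) *
      ∫⁻ r in Ioc 0 s, ENNReal.ofReal (√(T - r) * dirDeriv e g (x + r • e) ^ 2) := by
  have hcont : ContinuousOn (fun r : ℝ => dirDeriv e g (x + r • e)) (Icc 0 s) :=
    (contDiffOn_dirDeriv hU hg e).continuousOn.comp (by fun_prop) hseg
  have hweights : g (x + s • e) - g x =
      ∫ r in Ioc 0 s, (1 / √√(T - r)) * (√√(T - r) * dirDeriv e g (x + r • e)) := by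
    rw [← intervalIntegral_dirDeriv hU hg hs hseg, intervalIntegral.integral_of_le hs]
    refine setIntegral_congr_fun measurableSet_Ioc fun r hr => ?_
    have : 0 < T - r := by linarith [hr.2]
    field_simp
  rw [hweights]
  refine (ofReal_integral_mul_sq_le (g := fun r => √√(T - r) * dirDeriv e g (x + r • e))
    (Measurable.aemeasurable (by fun_prop)) (AEMeasurable.mul (Measurable.aemeasurable
      (by fun_prop)) ((hcont.mono Ioc_subset_Icc_self).aemeasurable measurableSet_Ioc))).trans ?_
  simp only [mul_pow, div_pow, one_pow, Real.sq_sqrt (Real.sqrt_nonneg _)]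
  exact mul_le_mul_left (lintegral_Ioc_inv_sqrt_sub_le hs hsT) _

lemma ofReal_sq_le_exitTime (hU : IsOpen U) (hUb : Bornology.IsBounded U) (he : e ≠ 0)
    (hg : ContDiffOn ℝ ∞ g U) (hgc : ContinuousOn g (closure U)) (hg0 : ∀ x ∈ frontier U, g x = 0)
    (hx : x ∈ U) :
    ENNReal.ofReal (g x ^ 2) ≤ ENNReal.ofReal (2 * √(exitTime U e x)) *
      ∫⁻ s in Ioo 0 (exitTime U e x),
        ENNReal.ofReal (√(exitTime U e x - s) * dirDeriv e g (x + s • e) ^ 2) := by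
  set T := exitTime U e x
  have hT0 : 0 < T := exitTime_pos hU hUb he hx
  have hmem (s : ℝ) (h0 : 0 ≤ s) (hsT : s < T) : x + s • e ∈ U := add_smul_mem_of_lt_exitTime h0 hsT
  have hend : x + T • e ∈ frontier U := add_exitTime_smul_mem_frontier hU hUb he hx
  have hcont : ContinuousWithinAt (fun s : ℝ => g (x + s • e)) (Ioo 0 T) T :=
    ContinuousWithinAt.comp (hgc _ (frontier_subset_closure hend))
      (Continuous.continuousWithinAt (by fun_prop))
      fun s hs => subset_closure (hmem s hs.1.le hs.2)
  have hlim : Filter.Tendsto (fun s : ℝ => g (x + s • e)) (nhdsWithin T (Iio T)) (nhds 0) := by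
    rw [← hg0 _ hend, ← nhdsWithin_Ioo_eq_nhdsLT hT0]
    exact hcont
  have hlimsq : Filter.Tendsto (fun s : ℝ => ENNReal.ofReal ((g (x + s • e) - g x) ^ 2))
      (nhdsWithin T (Iio T)) (nhds (ENNReal.ofReal (g x ^ 2))) := by
    simpa using ENNReal.tendsto_ofReal ((hlim.sub_const (g x)).pow 2)
  refine le_of_tendsto hlimsq ?_
  filter_upwards [Ioo_mem_nhdsLT hT0] with s hs
  exact (ofReal_sub_sq_le_of_segment hU hg hs.1.le hs.2
      fun r hr => hmem r hr.1 (hr.2.trans_lt hs.2)).trans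
    (mul_le_mul_right (lintegral_mono_set (Ioc_subset_Ioo_right hs.2)) _)

/-- The integrand of the double integral in the proof of Hardy's inequality: the contribution of
the value of `F` at the point `p.1` to the Hardy quotient at the point `p.1 - p.2 • e`. -/
def hardyKernel (U : Set E) (e : E) (F : E → ℝ≥0∞) (p : E × ℝ) : ℝ≥0∞ :=
  (Ioi (0 : ℝ)).indicator (fun s => ENNReal.ofReal ((s + exitTime U e p.1) ^ (-3 / 2 : ℝ))) p.2 *
    (ENNReal.ofReal (2 * √(exitTime U e p.1)) * F p.1)

lemma lintegral_hardyKernel {F : E → ℝ≥0∞} (hx : 0 < exitTime U e x) :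
    ∫⁻ s, hardyKernel U e F (x, s) = 4 * F x := by
  have hmeas : Measurable fun s : ℝ => (Ioi (0 : ℝ)).indicator
      (fun s => ENNReal.ofReal ((s + exitTime U e x) ^ (-3 / 2 : ℝ))) s :=
    Measurable.indicator (by fun_prop) measurableSet_Ioi
  have hcancel : exitTime U e x ^ (-1 / 2 : ℝ) * √(exitTime U e x) = 1 := by
    rw [Real.sqrt_eq_rpow, ← Real.rpow_add hx]
    norm_num
  simp only [hardyKernel]
  rw [lintegral_mul_const _ hmeas, lintegral_indicator measurableSet_Ioi,
    lintegral_Ioi_add_rpow hx, ← mul_assoc, ← ENNReal.ofReal_mul (by positivity),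
    show 2 * exitTime U e x ^ (-1 / 2 : ℝ) * (2 * √(exitTime U e x)) = 4 by
      linear_combination 4 * hcancel, ENNReal.ofReal_ofNat]

lemma ofReal_sq_div_exitTime_sq_le (hU : IsOpen U) (hUb : Bornology.IsBounded U) (he : e ≠ 0)
    (hg : ContDiffOn ℝ ∞ g U) (hgc : ContinuousOn g (closure U)) (hg0 : ∀ x ∈ frontier U, g x = 0)
    (hx : x ∈ U) :
    ENNReal.ofReal (g x ^ 2 / exitTime U e x ^ 2) ≤ ∫⁻ s, hardyKernel U e
      (U.indicator fun y => ENNReal.ofReal (dirDeriv e g y ^ 2)) (x + s • e, s) := by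
  set T := exitTime U e x with hT
  have hT0 : 0 < T := exitTime_pos hU hUb he hx
  have hpow : (T ^ 2)⁻¹ * √T = T ^ (-3 / 2 : ℝ) := by
    rw [Real.sqrt_eq_rpow, ← Real.rpow_natCast, ← Real.rpow_neg hT0.le, ← Real.rpow_add hT0]
    norm_num
  rw [div_eq_inv_mul, ENNReal.ofReal_mul (by positivity)]
  refine (mul_le_mul_right (ofReal_sq_le_exitTime hU hUb he hg hgc hg0 hx) _).trans ?_
  rw [← lintegral_const_mul' _ _ ENNReal.ofReal_ne_top,
    ← lintegral_const_mul' _ _ ENNReal.ofReal_ne_top, ← lintegral_indicator measurableSet_Ioo]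
  refine lintegral_mono fun s => indicator_apply_le' (fun hs => le_of_eq ?_) fun _ => zero_le
  have hmem : x + s • e ∈ U := add_smul_mem_of_lt_exitTime hs.1.le hs.2
  rw [hardyKernel, indicator_of_mem (mem_Ioi.2 hs.1), indicator_of_mem hmem,
    exitTime_add_smul hU hUb he hs.1.le hs.2.le, ← hT, add_sub_cancel, ← hpow,
    ← ENNReal.ofReal_mul (by positivity), ← ENNReal.ofReal_mul (by positivity),
    ← ENNReal.ofReal_mul (by positivity), ← ENNReal.ofReal_mul (by positivity)]
  congr 1
  ring

lemma measurable_hardyKernel [MeasurableSpace E] [BorelSpace E] {F : E → ℝ≥0∞} (hU : IsOpen U)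
    (hUb : Bornology.IsBounded U) (he : e ≠ 0) (hF : Measurable F) :
    Measurable (hardyKernel U e F) := by
  have hτ : Measurable (exitTime U e) := measurable_exitTime hU hUb he
  have htail : Measurable ((Prod.snd ⁻¹' Ioi (0 : ℝ)).indicator fun p : E × ℝ =>
      ENNReal.ofReal ((p.2 + exitTime U e p.1) ^ (-3 / 2 : ℝ))) :=
    Measurable.indicator (by fun_prop) (measurable_snd measurableSet_Ioi)
  exact htail.mul (Measurable.mul (by fun_prop) (by fun_prop))

section Measure

variable [FiniteDimensional ℝ E] [MeasurableSpace E] [BorelSpace E] {ν : Measure E}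
  [ν.IsAddHaarMeasure]

lemma lintegral_lintegral_comp_add_smul {K : E × ℝ → ℝ≥0∞} (hK : Measurable K) (e : E) :
    ∫⁻ x, (∫⁻ s, K (x + s • e, s)) ∂ν = ∫⁻ x, (∫⁻ s, K (x, s)) ∂ν := by
  have hshift : Measurable fun p : E × ℝ => (p.1 + p.2 • e, p.2) := by fun_prop
  rw [lintegral_lintegral_swap (f := fun x s => K (x + s • e, s)) (hK.comp hshift).aemeasurable,
    lintegral_lintegral_swap (f := fun x s => K (x, s)) hK.aemeasurable]
  exact lintegral_congr fun s => lintegral_add_right_eq_self (fun x => K (x, s)) (s • e)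

lemma lintegral_sq_div_exitTime_sq_le (hU : IsOpen U) (hUb : Bornology.IsBounded U) (he : e ≠ 0)
    (hg : ContDiffOn ℝ ∞ g U) (hgc : ContinuousOn g (closure U))
    (hg0 : ∀ x ∈ frontier U, g x = 0) :
    ∫⁻ x in U, ENNReal.ofReal (g x ^ 2 / exitTime U e x ^ 2) ∂ν ≤
      4 * ∫⁻ x in U, ENNReal.ofReal (dirDeriv e g x ^ 2) ∂ν := by
  set F : E → ℝ≥0∞ := U.indicator fun y => ENNReal.ofReal (dirDeriv e g y ^ 2) with hFdef
  have hF : Measurable F := by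
    rw [hFdef]
    classical
    rw [← Set.piecewise_eq_indicator]
    exact ContinuousOn.measurable_piecewise (ENNReal.continuous_ofReal.comp_continuousOn
      ((contDiffOn_dirDeriv hU hg e).continuousOn.pow 2)) continuousOn_const hU.measurableSet
  calc ∫⁻ x in U, ENNReal.ofReal (g x ^ 2 / exitTime U e x ^ 2) ∂ν
      ≤ ∫⁻ x in U, (∫⁻ s, hardyKernel U e F (x + s • e, s)) ∂ν :=
        setLIntegral_mono' hU.measurableSet fun x hx =>
          ofReal_sq_div_exitTime_sq_le hU hUb he hg hgc hg0 hx
    _ ≤ ∫⁻ x, (∫⁻ s, hardyKernel U e F (x + s • e, s)) ∂ν := setLIntegral_le_lintegral _ _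
    _ = ∫⁻ x, (∫⁻ s, hardyKernel U e F (x, s)) ∂ν :=
        lintegral_lintegral_comp_add_smul (measurable_hardyKernel hU hUb he hF) e
    _ = ∫⁻ x, 4 * F x ∂ν := lintegral_congr fun x => by
        by_cases hx : x ∈ U
        · exact lintegral_hardyKernel (exitTime_pos hU hUb he hx)
        · simp [hardyKernel, hFdef, hx]
    _ = 4 * ∫⁻ x in U, ENNReal.ofReal (dirDeriv e g x ^ 2) ∂ν := by
        rw [lintegral_const_mul _ hF, lintegral_indicator hU.measurableSet]

theorem lintegral_sq_div_sq_le_of_exitTime_le {δ : E → ℝ} {M : ℝ} {V : Finset E} (hU : IsOpen U)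
    (hUb : Bornology.IsBounded U) (hV : ∀ e ∈ V, ‖e‖ = 1)
    (hδ : ∀ x ∈ U, ∃ e ∈ V, exitTime U e x ≤ M * δ x) (hg : ContDiffOn ℝ ∞ g U)
    (hgc : ContinuousOn g (closure U)) (hg0 : ∀ x ∈ frontier U, g x = 0) :
    ∫⁻ x in U, ENNReal.ofReal (g x ^ 2 / δ x ^ 2) ∂ν ≤ ENNReal.ofReal (4 * M ^ 2 * V.card) *
      ∫⁻ x in U, ENNReal.ofReal (‖fderiv ℝ g x‖ ^ 2) ∂ν := by
  have hne : ∀ e ∈ V, e ≠ 0 := fun e he => norm_ne_zero_iff.1 (by rw [hV e he]; exact one_ne_zero)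
  have hpoint : ∀ x ∈ U, ENNReal.ofReal (g x ^ 2 / δ x ^ 2) ≤
      ∑ e ∈ V, ENNReal.ofReal (M ^ 2) * ENNReal.ofReal (g x ^ 2 / exitTime U e x ^ 2) := by
    intro x hx
    obtain ⟨e, he, hτ⟩ := hδ x hx
    have hτ0 := exitTime_pos hU hUb (hne e he) hx
    have hδ0 : δ x ≠ 0 := fun h => by rw [h, mul_zero] at hτ; exact hτ0.not_ge hτ
    refine le_trans ?_ (Finset.single_le_sum (fun _ _ => zero_le) he)
    rw [← ENNReal.ofReal_mul (sq_nonneg M)]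
    refine ENNReal.ofReal_le_ofReal ?_
    rw [← mul_div_assoc, div_le_div_iff₀ (by positivity) (by positivity)]
    calc g x ^ 2 * exitTime U e x ^ 2 ≤ g x ^ 2 * (M * δ x) ^ 2 := by gcongr
      _ = M ^ 2 * g x ^ 2 * δ x ^ 2 := by ring
  calc ∫⁻ x in U, ENNReal.ofReal (g x ^ 2 / δ x ^ 2) ∂ν
      ≤ ∫⁻ x in U, ∑ e ∈ V, ENNReal.ofReal (M ^ 2) *
          ENNReal.ofReal (g x ^ 2 / exitTime U e x ^ 2) ∂ν :=
        setLIntegral_mono' hU.measurableSet hpoint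
    _ = ∑ e ∈ V, ENNReal.ofReal (M ^ 2) *
          ∫⁻ x in U, ENNReal.ofReal (g x ^ 2 / exitTime U e x ^ 2) ∂ν := by
        rw [lintegral_finsetSum' _ fun e he => ?_]
        · simp only [lintegral_const_mul' _ _ ENNReal.ofReal_ne_top]
        · have hτ := (measurable_exitTime hU hUb (hne e he)).pow_const 2
          exact (((hg.continuousOn.pow 2).aemeasurable hU.measurableSet).div
            hτ.aemeasurable).ennreal_ofReal.const_mul _
    _ ≤ ∑ e ∈ V, ENNReal.ofReal (M ^ 2) *
          (4 * ∫⁻ x in U, ENNReal.ofReal (‖fderiv ℝ g x‖ ^ 2) ∂ν) := by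
        gcongr with e he
        refine (lintegral_sq_div_exitTime_sq_le hU hUb (hne e he) hg hgc hg0).trans ?_
        gcongr 4 * ∫⁻ x in U, ENNReal.ofReal ?_ ∂ν with x
        exact sq_le_sq.2 ((abs_dirDeriv_le (hV e he).le g x).trans (le_abs_self _))
    _ = ENNReal.ofReal (4 * M ^ 2 * V.card) *
          ∫⁻ x in U, ENNReal.ofReal (‖fderiv ℝ g x‖ ^ 2) ∂ν := by
        rw [Finset.sum_const, nsmul_eq_mul, ENNReal.ofReal_mul (by positivity),
          ENNReal.ofReal_mul (by positivity), ENNReal.ofReal_natCast, ENNReal.ofReal_ofNat]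
        ring

end Measure

end Hardy

section EnergyEstimate

lemma isCompact_truncationCore_one {E : Type*} [NormedAddCommGroup E] [ProperSpace E] {U : Set E}
    {u : E → ℝ} (hU : IsOpen U) (hUb : Bornology.IsBounded U)
    (huc : ContinuousOn u (closure U)) (hu0 : ∀ x ∈ frontier U, u x = 0) {ε : ℝ} (hε : 0 < ε) :
    IsCompact (truncationCore U (fun _ => 1) u ε) := by
  have hcore : truncationCore U (fun _ => 1) u ε = closure U ∩ (fun x => |u x|) ⁻¹' Ici ε := by
    ext x
    refine ⟨fun hx => ⟨subset_closure hx.1, hx.2.1⟩, fun hx => ⟨?_, hx.2, subset_closure (by simp)⟩⟩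
    by_contra hxU
    have hεu : ε ≤ |u x| := hx.2
    rw [hu0 x (by rw [hU.frontier_eq]; exact ⟨hx.1, hxU⟩), abs_zero] at hεu
    exact hε.not_ge hεu
  rw [hcore]
  exact hUb.isCompact_closure.of_isClosed_subset
    (huc.abs.preimage_isClosed_of_isClosed isClosed_closure isClosed_Ici) inter_subset_left

variable {E : Type*} [NormedAddCommGroup E] [InnerProductSpace ℝ E] [FiniteDimensional ℝ E]
  [MeasurableSpace E] [BorelSpace E] {U : Set E} {δ f : E → ℝ} {C : ℝ}

lemma hasNegNormLE_of_hardy (hU : IsOpen U) (hδc : ContinuousOn δ U) (hδ : ∀ x ∈ U, 0 < δ x)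
    (hf : ContinuousOn f U) (hC : 0 ≤ C)
    (hardy : ∀ Ψ : E → ℝ, ContDiff ℝ ∞ Ψ → tsupport Ψ ⊆ U →
      ∫⁻ x in U, ENNReal.ofReal (Ψ x ^ 2 / δ x ^ 2) ≤
        ENNReal.ofReal C * ∫⁻ x in U, ENNReal.ofReal (‖fderiv ℝ Ψ x‖ ^ 2))
    (hJ : ∫⁻ x in U, ENNReal.ofReal ((δ x * f x) ^ 2) ≠ ⊤) :
    HasNegNormLE U f √(C * (∫⁻ x in U, ENNReal.ofReal ((δ x * f x) ^ 2)).toReal) := by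
  intro Ψ hΨ hΨc hΨU
  have hdΨ : Integrable fun x => ‖fderiv ℝ Ψ x‖ ^ 2 :=
    integrable_of_eq_zero_off_isCompact hU hΨc hΨU
      ((continuousOn_norm_fderiv hU hΨ.contDiffOn).pow 2) fun x hx => by
        simp [fderiv_eq_zero_of_notMem_tsupport hx]
  have hweight : ∫ x, Ψ x * f x = ∫ x in U, Ψ x / δ x * (δ x * f x) := by
    rw [← setIntegral_eq_integral_of_forall_compl_eq_zero (s := U) fun x hx => by
      rw [image_eq_zero_of_notMem_tsupport fun h => hx (hΨU h), zero_mul]]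
    refine setIntegral_congr_fun hU.measurableSet fun x hx => ?_
    have := (hδ x hx).ne'
    field_simp
  rw [← abs_of_nonneg (Real.sqrt_nonneg (∫ x, ‖fderiv ℝ Ψ x‖ ^ 2)), ← abs_of_nonneg
    (Real.sqrt_nonneg (C * _)), ← abs_mul, ← sq_le_sq, mul_pow, Real.sq_sqrt (by positivity),
    Real.sq_sqrt (by positivity), ← ENNReal.ofReal_le_ofReal_iff (by positivity), hweight,
    ENNReal.ofReal_mul (by positivity), ENNReal.ofReal_mul hC, ENNReal.ofReal_toReal hJ,
    ofReal_integral_eq_lintegral_ofReal hdΨ (.of_forall fun x => by positivity)]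
  refine (ofReal_integral_mul_sq_le ((hΨ.continuous.continuousOn.div hδc fun x hx =>
    (hδ x hx).ne').aemeasurable hU.measurableSet)
    ((hδc.mul hf).aemeasurable hU.measurableSet)).trans ?_
  simp only [Pi.div_apply, Pi.mul_apply, div_pow]
  rw [mul_right_comm]
  exact mul_le_mul_left
    ((hardy Ψ hΨ hΨU).trans (mul_le_mul_right (setLIntegral_le_lintegral _ _) _)) _

variable (E) in
theorem exists_lintegral_norm_fderiv_sq_le_of_hardy : ∃ C₀ : ℝ, 0 < C₀ ∧
    ∀ {U : Set E} {δ u : E → ℝ} {C : ℝ}, IsOpen U → Bornology.IsBounded U →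
    ContinuousOn δ U → (∀ x ∈ U, 0 < δ x) → 0 < C →
    (∀ Ψ : E → ℝ, ContDiff ℝ ∞ Ψ → tsupport Ψ ⊆ U →
      ∫⁻ x in U, ENNReal.ofReal (Ψ x ^ 2 / δ x ^ 2) ≤
        ENNReal.ofReal C * ∫⁻ x in U, ENNReal.ofReal (‖fderiv ℝ Ψ x‖ ^ 2)) →
    ContDiffOn ℝ ∞ u U → ContinuousOn u (closure U) → (∀ x ∈ frontier U, u x = 0) →
    ∫⁻ x in U, ENNReal.ofReal (‖fderiv ℝ u x‖ ^ 2) ≤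
      ENNReal.ofReal (C₀ * C) * ∫⁻ x in U, ENNReal.ofReal ((δ x * Δ u x) ^ 2) := by
  obtain ⟨C₀, hC₀, hcaccioppoli⟩ := exists_caccioppoli E
  refine ⟨C₀, hC₀, fun {U δ u C} hU hUb hδc hδ hC hardy hu huc hu0 => ?_⟩
  rcases eq_or_ne (∫⁻ x in U, ENNReal.ofReal ((δ x * Δ u x) ^ 2)) ⊤ with hJ | hJ
  · rw [hJ, ENNReal.mul_top (ENNReal.ofReal_pos.2 (by positivity)).ne']
    exact le_top
  have henergy := hcaccioppoli hU hu (contDiff_const (c := (1 : ℝ))) (by simp)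
    (fun ε hε => isCompact_truncationCore_one hU hUb huc hu0 hε)
    (hasNegNormLE_of_hardy hU hδc hδ (contDiffOn_laplacian hU hu).continuousOn hC.le hardy hJ)
  rw [Real.sq_sqrt (by positivity), ENNReal.ofReal_mul hC.le, ENNReal.ofReal_toReal hJ] at henergy
  rw [ENNReal.ofReal_mul hC₀.le, mul_assoc]
  simpa using henergy

end EnergyEstimate

section PolyhedralDomain

variable {n : ℕ} {Ω : Set (EuclideanSpace ℝ (Fin n))} {𝓗 : Finset (Set (EuclideanSpace ℝ (Fin n)))}

namespace IsPolyhedralDomain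

lemma exists_hardy (hΩ : IsPolyhedralDomain Ω 𝓗) (hS : (polySingularSet Ω 𝓗).Nonempty) :
    ∃ C : ℝ, 0 < C ∧ ∀ g : EuclideanSpace ℝ (Fin n) → ℝ, ContDiffOn ℝ ∞ g Ω →
      ContinuousOn g (closure Ω) → (∀ x ∈ frontier Ω, g x = 0) →
      ∫⁻ x in Ω, ENNReal.ofReal (g x ^ 2 / infDist x (polySingularSet Ω 𝓗) ^ 2) ≤
        ENNReal.ofReal C * ∫⁻ x in Ω, ENNReal.ofReal (‖fderiv ℝ g x‖ ^ 2) := by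
  obtain ⟨V, hV, hexit⟩ := hΩ.exists_finset_directions hS
  refine ⟨4 * 2 ^ 2 * V.card + 1, by positivity, fun g hg hgc hg0 => ?_⟩
  refine (lintegral_sq_div_sq_le_of_exitTime_le hΩ.isOpen hΩ.isBounded hV (fun x hx => ?_)
    hg hgc hg0).trans (mul_le_mul_left (ENNReal.ofReal_le_ofReal (lt_add_one _).le) _)
  obtain ⟨e, he, t, ht, hout⟩ := hexit x hx
  exact ⟨e, he, (exitTime_le ht.1.le hout).trans ht.2⟩

lemma exists_lintegral_norm_fderiv_sq_le (hΩ : IsPolyhedralDomain Ω 𝓗)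
    (hS : (polySingularSet Ω 𝓗).Nonempty) :
    ∃ C : ℝ, 0 < C ∧ ∀ u : EuclideanSpace ℝ (Fin n) → ℝ, ContDiffOn ℝ ∞ u Ω →
      ContinuousOn u (closure Ω) → (∀ x ∈ frontier Ω, u x = 0) →
      ∫⁻ x in Ω, ENNReal.ofReal (‖fderiv ℝ u x‖ ^ 2) ≤ ENNReal.ofReal C *
        ∫⁻ x in Ω, ENNReal.ofReal ((infDist x (polySingularSet Ω 𝓗) * Δ u x) ^ 2) := by
  obtain ⟨C₀, hC₀, henergy⟩ :=
    exists_lintegral_norm_fderiv_sq_le_of_hardy (EuclideanSpace ℝ (Fin n))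
  obtain ⟨C, hC, hardy⟩ := hΩ.exists_hardy hS
  refine ⟨C₀ * C, by positivity, fun u hu huc hu0 => ?_⟩
  refine henergy hΩ.isOpen hΩ.isBounded (continuous_infDist_pt _).continuousOn
    (fun x hx => hΩ.infDist_pos hS hx) hC (fun Ψ hΨ hΨU => ?_) hu huc hu0
  refine hardy Ψ hΨ.contDiffOn hΨ.continuous.continuousOn fun x hx => ?_
  rw [hΩ.isOpen.frontier_eq] at hx
  exact image_eq_zero_of_notMem_tsupport fun h => hx.2 (hΨU h)

end IsPolyhedralDomain

end PolyhedralDomain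

section Averaging

open Module

lemma infDist_mem_Icc_of_mem_ball {E : Type*} [PseudoMetricSpace E] {S : Set E} {x y : E} {a : ℝ}
    (ha : a ≤ 1 / 4) (hx : x ∈ ball y (a * infDist y S)) :
    infDist x S ∈ Icc (infDist y S / 2) (2 * infDist y S) := by
  have hxy : dist x y < a * infDist y S := hx
  have hle : a * infDist y S ≤ 1 / 4 * infDist y S :=
    mul_le_mul_of_nonneg_right ha infDist_nonneg
  have hup : infDist x S ≤ infDist y S + dist x y := infDist_le_infDist_add_dist
  have hlow : infDist y S ≤ infDist x S + dist y x := infDist_le_infDist_add_dist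
  rw [dist_comm y x] at hlow
  constructor <;> linarith [infDist_nonneg (x := y) (s := S)]

lemma measurableSet_infDist_pos {E : Type*} [PseudoMetricSpace E] [MeasurableSpace E]
    [OpensMeasurableSpace E] (S : Set E) : MeasurableSet {x | 0 < infDist x S} :=
  (isOpen_lt continuous_const (continuous_infDist_pt S)).measurableSet

variable {E : Type*} [NormedAddCommGroup E] [NormedSpace ℝ E] {S : Set E} {a l : ℝ} {x y : E}

/-- The kernel `η(y)⁻ᵈ 1_{|x - y| < a η(y)}`, where `η` is the distance to `S` and `d` is the
dimension, used to average estimates over the balls `B(y, a η(y))`. -/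
def averagingKernel (S : Set E) (a : ℝ) (x y : E) : ℝ≥0∞ :=
  (ball y (a * infDist y S)).indicator
    (fun _ => ENNReal.ofReal ((infDist y S ^ finrank ℝ E)⁻¹)) x

lemma averagingKernel_eq_zero (hl : l ≤ 1 / 4) (hx : ¬0 < infDist x S) (y : E) :
    averagingKernel S l x y = 0 := by
  refine indicator_of_notMem (fun hxy => hx ?_) _
  have hy : 0 < l * infDist y S := dist_nonneg.trans_lt hxy
  have hne : infDist y S ≠ 0 := right_ne_zero_of_mul hy.ne'
  have hpos : 0 < infDist y S := infDist_nonneg.lt_of_ne hne.symm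
  exact (half_pos hpos).trans_le (infDist_mem_Icc_of_mem_ball hl hxy).1

variable [MeasurableSpace E] [BorelSpace E] {ν : Measure E}

lemma lintegral_mul_averagingKernel (F : E → ℝ≥0∞) (y : E) :
    ∫⁻ x, F x * averagingKernel S a x y ∂ν = ENNReal.ofReal ((infDist y S ^ finrank ℝ E)⁻¹) *
      ∫⁻ x in ball y (a * infDist y S), F x ∂ν := by
  rw [← lintegral_const_mul' _ _ ENNReal.ofReal_ne_top, ← lintegral_indicator measurableSet_ball]
  refine lintegral_congr fun x => ?_
  by_cases hx : x ∈ ball y (a * infDist y S)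
  · rw [averagingKernel, indicator_of_mem hx, indicator_of_mem hx, mul_comm]
  · rw [averagingKernel, indicator_of_notMem hx, indicator_of_notMem hx, mul_zero]

variable [FiniteDimensional ℝ E]

lemma measurable_averagingKernel (S : Set E) (a : ℝ) :
    Measurable fun p : E × E => averagingKernel S a p.1 p.2 := by
  have hη : Continuous fun p : E × E => infDist p.2 S :=
    (continuous_infDist_pt S).comp continuous_snd
  have hopen : IsOpen {p : E × E | dist p.1 p.2 < a * infDist p.2 S} :=
    isOpen_lt continuous_dist (hη.const_mul a)
  exact ((hη.measurable.pow_const (finrank ℝ E)).inv.ennreal_ofReal).indicator hopen.measurableSet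

variable [ν.IsAddHaarMeasure]

lemma lintegral_mul_lintegral_averagingKernel (S : Set E) (a : ℝ) {F : E → ℝ≥0∞}
    (hF : Measurable F) :
    ∫⁻ x, F x * ∫⁻ y, averagingKernel S a x y ∂ν ∂ν =
      ∫⁻ y, ∫⁻ x, F x * averagingKernel S a x y ∂ν ∂ν := by
  have hK := measurable_averagingKernel S a
  have hconst (x : E) : F x * ∫⁻ y, averagingKernel S a x y ∂ν =
      ∫⁻ y, F x * averagingKernel S a x y ∂ν :=
    (lintegral_const_mul _ (hK.comp measurable_prodMk_left)).symm
  simp only [hconst]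
  exact lintegral_lintegral_swap (f := fun x y => F x * averagingKernel S a x y)
    ((hF.comp measurable_fst).mul hK).aemeasurable

lemma ofReal_mul_measure_ball_eq {r s t : ℝ} (hr : 0 ≤ r) (hs : 0 < s) (hrs : r * s = t) (x : E) :
    ENNReal.ofReal (r ^ finrank ℝ E) * ν (ball x s) =
      ENNReal.ofReal (t ^ finrank ℝ E) * ν (ball 0 1) := by
  rw [Measure.addHaar_ball_of_pos _ _ hs, ← mul_assoc, ← ENNReal.ofReal_mul (by positivity),
    ← mul_pow, hrs]

lemma le_lintegral_averagingKernel (hl : 0 < l) (hl4 : l ≤ 1 / 4) (hx : 0 < infDist x S) :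
    ENNReal.ofReal ((l / 8) ^ finrank ℝ E) * ν (ball 0 1) ≤
      ∫⁻ y, averagingKernel S (l / 2) x y ∂ν := by
  set d := infDist x S
  calc ENNReal.ofReal ((l / 8) ^ finrank ℝ E) * ν (ball 0 1)
      = ENNReal.ofReal (((2 * d)⁻¹) ^ finrank ℝ E) * ν (ball x (l / 4 * d)) := by
        refine (ofReal_mul_measure_ball_eq (by positivity) (by positivity) ?_ x).symm
        field_simp
        norm_num
    _ = ∫⁻ _ in ball x (l / 4 * d), ENNReal.ofReal (((2 * d)⁻¹) ^ finrank ℝ E) ∂ν := by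
        rw [setLIntegral_const]
    _ ≤ ∫⁻ y in ball x (l / 4 * d), averagingKernel S (l / 2) x y ∂ν := by
        refine setLIntegral_mono' measurableSet_ball fun y hy => ?_
        obtain ⟨hlow, hup⟩ := infDist_mem_Icc_of_mem_ball (by linarith) hy
        have hpos : 0 < infDist y S := (half_pos hx).trans_le hlow
        have hrad : l / 4 * d ≤ l / 2 * infDist y S := by nlinarith
        have hxy : x ∈ ball y (l / 2 * infDist y S) :=
          ball_subset_ball hrad (mem_ball_comm.1 hy)
        rw [averagingKernel, indicator_of_mem hxy, inv_pow]
        gcongr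
    _ ≤ ∫⁻ y, averagingKernel S (l / 2) x y ∂ν := setLIntegral_le_lintegral _ _

lemma lintegral_averagingKernel_le (hl : 0 < l) (hl4 : l ≤ 1 / 4) (hx : 0 < infDist x S) :
    ∫⁻ y, averagingKernel S l x y ∂ν ≤
      ENNReal.ofReal ((4 * l) ^ finrank ℝ E) * ν (ball 0 1) := by
  set d := infDist x S
  calc ∫⁻ y, averagingKernel S l x y ∂ν
      ≤ ∫⁻ _ in ball x (2 * l * d), ENNReal.ofReal (((d / 2)⁻¹) ^ finrank ℝ E) ∂ν := by
        rw [← lintegral_indicator measurableSet_ball]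
        refine lintegral_mono fun y => indicator_apply_le' (fun hxy => ?_) fun _ => zero_le
        obtain ⟨hlow, hup⟩ := infDist_mem_Icc_of_mem_ball hl4 hxy
        have hrad : l * infDist y S ≤ 2 * l * d := by nlinarith
        have hyx : y ∈ ball x (2 * l * d) := ball_subset_ball hrad (mem_ball_comm.1 hxy)
        rw [indicator_of_mem hyx, inv_pow]
        gcongr
        linarith
    _ = ENNReal.ofReal (((d / 2)⁻¹) ^ finrank ℝ E) * ν (ball x (2 * l * d)) := by
        rw [setLIntegral_const]
    _ = ENNReal.ofReal ((4 * l) ^ finrank ℝ E) * ν (ball 0 1) :=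
        ofReal_mul_measure_ball_eq (by positivity) (by positivity) (by field_simp; norm_num) x

lemma mul_setLIntegral_le_lintegral_averagingKernel (hl : 0 < l) (hl4 : l ≤ 1 / 4) {F : E → ℝ≥0∞}
    (hF : Measurable F) :
    ENNReal.ofReal ((l / 8) ^ finrank ℝ E) * ν (ball 0 1) * ∫⁻ x in {x | 0 < infDist x S}, F x ∂ν ≤
      ∫⁻ y, ∫⁻ x, F x * averagingKernel S (l / 2) x y ∂ν ∂ν := by
  rw [← lintegral_mul_lintegral_averagingKernel S _ hF, ← lintegral_const_mul _ hF]
  refine (setLIntegral_mono' (measurableSet_infDist_pos S) fun x hx => ?_).trans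
    (setLIntegral_le_lintegral _ _)
  rw [mul_comm]
  exact mul_le_mul' le_rfl (le_lintegral_averagingKernel hl hl4 hx)

lemma lintegral_averagingKernel_le_mul_setLIntegral (hl : 0 < l) (hl4 : l ≤ 1 / 4) {G : E → ℝ≥0∞}
    (hG : Measurable G) :
    ∫⁻ y, ∫⁻ x, G x * averagingKernel S l x y ∂ν ∂ν ≤
      ENNReal.ofReal ((4 * l) ^ finrank ℝ E) * ν (ball 0 1) *
        ∫⁻ x in {x | 0 < infDist x S}, G x ∂ν := by
  rw [← lintegral_mul_lintegral_averagingKernel S _ hG, ← lintegral_const_mul _ hG,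
    ← lintegral_indicator (measurableSet_infDist_pos S)]
  refine lintegral_mono fun x => ?_
  by_cases hx : 0 < infDist x S
  · rw [indicator_of_mem (mem_ofPred_eq ▸ hx), mul_comm]
    exact mul_le_mul_left (lintegral_averagingKernel_le hl hl4 hx) _
  · simp [averagingKernel_eq_zero hl4 hx]

theorem setLIntegral_infDist_pos_le_of_forall_ball (hl : 0 < l) (hl4 : l ≤ 1 / 4)
    {F G : E → ℝ≥0∞} (hF : Measurable F) (hG : Measurable G) {C : ℝ≥0∞} (hC : C ≠ ⊤)
    (h : ∀ y, 0 < infDist y S → ∫⁻ x in ball y (l / 2 * infDist y S), F x ∂ν ≤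
      C * ∫⁻ x in ball y (l * infDist y S), G x ∂ν) :
    ∫⁻ x in {x | 0 < infDist x S}, F x ∂ν ≤
      ENNReal.ofReal (32 ^ finrank ℝ E) * C * ∫⁻ x in {x | 0 < infDist x S}, G x ∂ν := by
  have hc0 : ENNReal.ofReal ((l / 8) ^ finrank ℝ E) * ν (ball 0 1) ≠ 0 :=
    mul_ne_zero (ENNReal.ofReal_pos.2 (by positivity)).ne' (measure_ball_pos ν 0 one_pos).ne'
  have hct : ENNReal.ofReal ((l / 8) ^ finrank ℝ E) * ν (ball 0 1) ≠ ⊤ :=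
    ENNReal.mul_ne_top ENNReal.ofReal_ne_top measure_ball_lt_top.ne
  have haverage (y : E) : ∫⁻ x, F x * averagingKernel S (l / 2) x y ∂ν ≤
      C * ∫⁻ x, G x * averagingKernel S l x y ∂ν := by
    rw [lintegral_mul_averagingKernel, lintegral_mul_averagingKernel, mul_left_comm]
    rcases (infDist_nonneg (x := y) (s := S)).eq_or_lt with hy | hy
    · simp [← hy]
    · exact mul_le_mul' le_rfl (h y hy)
  refine (ENNReal.mul_le_mul_iff_right hc0 hct).1 ?_
  calc ENNReal.ofReal ((l / 8) ^ finrank ℝ E) * ν (ball 0 1) *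
        ∫⁻ x in {x | 0 < infDist x S}, F x ∂ν
      ≤ ∫⁻ y, C * ∫⁻ x, G x * averagingKernel S l x y ∂ν ∂ν :=
        (mul_setLIntegral_le_lintegral_averagingKernel hl hl4 hF).trans (lintegral_mono haverage)
    _ ≤ C * (ENNReal.ofReal ((4 * l) ^ finrank ℝ E) * ν (ball 0 1) *
          ∫⁻ x in {x | 0 < infDist x S}, G x ∂ν) := by
        rw [lintegral_const_mul' _ _ hC]
        exact mul_le_mul' le_rfl (lintegral_averagingKernel_le_mul_setLIntegral hl hl4 hG)
    _ = ENNReal.ofReal ((l / 8) ^ finrank ℝ E) * ν (ball 0 1) *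
          (ENNReal.ofReal (32 ^ finrank ℝ E) * C * ∫⁻ x in {x | 0 < infDist x S}, G x ∂ν) := by
        rw [show 4 * l = l / 8 * 32 by ring, mul_pow, ENNReal.ofReal_mul (by positivity)]
        ring

end Averaging

section WeightedEstimates

lemma setLIntegral_ofReal_le_mul {α : Type*} [MeasurableSpace α] {μ : Measure α} {A : Set α}
    (hA : MeasurableSet A) {f g : α → ℝ} {M : ℝ} (hM : 0 ≤ M) (h : ∀ x ∈ A, f x ≤ M * g x) :
    ∫⁻ x in A, ENNReal.ofReal (f x) ∂μ ≤
      ENNReal.ofReal M * ∫⁻ x in A, ENNReal.ofReal (g x) ∂μ := by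
  rw [← lintegral_const_mul' _ _ ENNReal.ofReal_ne_top]
  refine setLIntegral_mono' hA fun x hx => ?_
  rw [← ENNReal.ofReal_mul hM]
  exact ENNReal.ofReal_le_ofReal (h x hx)

lemma ofReal_two_mul_pow_mul_le {C d l : ℝ} (hC : 0 < C) (hd : 0 < d) (hl : 0 < l) (hl1 : l ≤ 1)
    (k : ℕ) {X Y Z P Q : ℝ≥0∞}
    (hZ : Z ≤ ENNReal.ofReal C * (ENNReal.ofReal ((l / 2 * d)⁻¹ ^ 2) * X + Y))
    (hX : ENNReal.ofReal (d ^ (2 * k)) * X ≤ ENNReal.ofReal (2 ^ (2 * k)) * P)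
    (hY : ENNReal.ofReal (d ^ (2 * k + 2)) * Y ≤ ENNReal.ofReal (2 ^ (2 * k + 2)) * Q) :
    ENNReal.ofReal ((2 * d) ^ (2 * k + 2)) * Z ≤
      ENNReal.ofReal (2 ^ (2 * k + 2) * C * ((2 / l) ^ 2 * 2 ^ (2 * k))) * (P + Q) := by
  have hscale : d ^ (2 * k + 2) * (l / 2 * d)⁻¹ ^ 2 = (2 / l) ^ 2 * d ^ (2 * k) := by
    rw [pow_add]
    field_simp
  have hl2 : (2 : ℝ) ^ (2 * k + 2) ≤ (2 / l) ^ 2 * 2 ^ (2 * k) := by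
    have : 2 ≤ 2 / l := by rw [le_div_iff₀ hl]; linarith
    rw [pow_add, mul_comm]
    gcongr
  calc ENNReal.ofReal ((2 * d) ^ (2 * k + 2)) * Z
      ≤ ENNReal.ofReal ((2 * d) ^ (2 * k + 2)) *
          (ENNReal.ofReal C * (ENNReal.ofReal ((l / 2 * d)⁻¹ ^ 2) * X + Y)) := by gcongr
    _ = ENNReal.ofReal (2 ^ (2 * k + 2) * C) *
          (ENNReal.ofReal (d ^ (2 * k + 2) * (l / 2 * d)⁻¹ ^ 2) * X +
            ENNReal.ofReal (d ^ (2 * k + 2)) * Y) := by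
        rw [mul_pow, ENNReal.ofReal_mul (by positivity), ENNReal.ofReal_mul (by positivity),
          ENNReal.ofReal_mul (by positivity)]
        ring
    _ ≤ ENNReal.ofReal (2 ^ (2 * k + 2) * C) *
          (ENNReal.ofReal ((2 / l) ^ 2) * (ENNReal.ofReal (2 ^ (2 * k)) * P) +
            ENNReal.ofReal (2 ^ (2 * k + 2)) * Q) := by
        rw [hscale, ENNReal.ofReal_mul (p := (2 / l) ^ 2) (by positivity), mul_assoc]
        exact mul_le_mul' le_rfl (add_le_add (mul_le_mul' le_rfl hX) hY)
    _ ≤ ENNReal.ofReal (2 ^ (2 * k + 2) * C * ((2 / l) ^ 2 * 2 ^ (2 * k))) * (P + Q) := by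
        rw [← mul_assoc (ENNReal.ofReal _) (ENNReal.ofReal _) P,
          ← ENNReal.ofReal_mul (by positivity),
          ENNReal.ofReal_mul (p := 2 ^ (2 * k + 2) * C) (by positivity), mul_assoc, mul_add _ P Q]
        exact mul_le_mul' le_rfl (add_le_add le_rfl
          (mul_le_mul' (ENNReal.ofReal_le_ofReal hl2) le_rfl))

variable {E : Type*} [NormedAddCommGroup E] [InnerProductSpace ℝ E] {Ω S : Set E} {ν y : E}
  {c l : ℝ} {u : E → ℝ}

lemma isDirichletOnHalfBall_of_inter_ball_eq (hΩ : IsOpen Ω) (hν : ν ≠ 0) {R : ℝ}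
    (h : Ω ∩ ball y R = halfBall ν c y R) (hu : ContDiffOn ℝ ∞ u Ω)
    (huc : ContinuousOn u (closure Ω)) (hu0 : ∀ x ∈ frontier Ω, u x = 0) :
    IsDirichletOnHalfBall ν c y R u where
  contDiffOn := hu.mono (h ▸ inter_subset_left)
  continuousOn := huc.mono fun _ hx => closure_mono (h ▸ inter_subset_left)
    (mem_closure_halfBall hν hx.2 hx.1)
  eq_zero x hx hxc := hu0 x (mem_frontier_of_inter_ball_eq_halfBall hΩ hν h hx hxc)

section Measure

variable [MeasurableSpace E] [BorelSpace E]

lemma measurable_indicator_ofReal_infDist_pow_mul (hΩ : IsOpen Ω) {f : E → ℝ}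
    (hf : ContDiffOn ℝ ∞ f Ω) (S : Set E) (m k : ℕ) : Measurable (Ω.indicator fun x =>
      ENNReal.ofReal (infDist x S ^ m * ‖iteratedFDeriv ℝ k f x‖ ^ 2)) := by
  classical
  rw [← piecewise_eq_indicator]
  refine ContinuousOn.measurable_piecewise (ENNReal.continuous_ofReal.comp_continuousOn ?_)
    continuousOn_const hΩ.measurableSet
  exact ((continuous_infDist_pt S).continuousOn.pow m).mul
    ((continuousOn_norm_iteratedFDeriv hΩ hf k).pow 2)

variable {μ : Measure E} {g : E → ℝ}

lemma setLIntegral_halfBall_infDist_pow_mul_sq_le (hl4 : l ≤ 1 / 4) (m : ℕ) :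
    ∫⁻ x in halfBall ν c y (l * infDist y S), ENNReal.ofReal (infDist x S ^ m * g x ^ 2) ∂μ ≤
      ENNReal.ofReal ((2 * infDist y S) ^ m) *
        ∫⁻ x in halfBall ν c y (l * infDist y S), ENNReal.ofReal (g x ^ 2) ∂μ := by
  refine setLIntegral_ofReal_le_mul (isOpen_halfBall ν c y _).measurableSet
    (pow_nonneg (by linarith [infDist_nonneg (x := y) (s := S)]) m) fun x hx => ?_
  exact mul_le_mul_of_nonneg_right
    (pow_le_pow_left₀ infDist_nonneg (infDist_mem_Icc_of_mem_ball hl4 hx.2).2 m) (sq_nonneg _)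

lemma ofReal_infDist_pow_mul_setLIntegral_halfBall_le (hl4 : l ≤ 1 / 4) (m : ℕ) :
    ENNReal.ofReal (infDist y S ^ m) *
        ∫⁻ x in halfBall ν c y (l * infDist y S), ENNReal.ofReal (g x ^ 2) ∂μ ≤
      ENNReal.ofReal (2 ^ m) * ∫⁻ x in halfBall ν c y (l * infDist y S),
        ENNReal.ofReal (infDist x S ^ m * g x ^ 2) ∂μ := by
  rw [← lintegral_const_mul' _ _ ENNReal.ofReal_ne_top]
  simp only [← ENNReal.ofReal_mul (pow_nonneg infDist_nonneg m)]
  refine setLIntegral_ofReal_le_mul (isOpen_halfBall ν c y _).measurableSet (by positivity)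
    fun x hx => ?_
  have hη := (infDist_mem_Icc_of_mem_ball hl4 hx.2).1
  rw [← mul_assoc, ← mul_pow]
  exact mul_le_mul_of_nonneg_right (pow_le_pow_left₀ infDist_nonneg (by linarith) m) (sq_nonneg _)

end Measure

variable [FiniteDimensional ℝ E] [MeasurableSpace E] [BorelSpace E]

variable (E) in
theorem exists_lintegral_infDist_pow_mul_iteratedFDeriv_halfBall_le (hl : 0 < l) (hl4 : l ≤ 1 / 4)
    (k : ℕ) : ∃ C : ℝ, 0 < C ∧ ∀ {S : Set E} {ν y : E} {c : ℝ} {u : E → ℝ}, ‖ν‖ = 1 →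
      0 < infDist y S → IsDirichletOnHalfBall ν c y (l * infDist y S) u →
      ∫⁻ x in halfBall ν c y (l / 2 * infDist y S),
          ENNReal.ofReal (infDist x S ^ (2 * k + 2) * ‖iteratedFDeriv ℝ (k + 2) u x‖ ^ 2) ≤
        ENNReal.ofReal C * ((∫⁻ x in halfBall ν c y (l * infDist y S),
            ENNReal.ofReal (infDist x S ^ (2 * k) * ‖iteratedFDeriv ℝ (k + 1) u x‖ ^ 2)) +
          ∫⁻ x in halfBall ν c y (l * infDist y S),
            ENNReal.ofReal (infDist x S ^ (2 * k + 2) * ‖iteratedFDeriv ℝ k (Δ u) x‖ ^ 2)) := by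
  obtain ⟨C, hC, hhalf⟩ := exists_lintegral_iteratedFDeriv_halfBall_le E k
  refine ⟨2 ^ (2 * k + 2) * C * ((2 / l) ^ 2 * 2 ^ (2 * k)), by positivity,
    fun {S ν y c u} hν hy hu => ?_⟩
  have hbound := hhalf hν (r := l / 2 * infDist y S) (by positivity) (c := c) (y := y) (u := u)
    (by rwa [← mul_assoc, mul_div_cancel₀ l two_ne_zero])
  rw [← mul_assoc 2, mul_div_cancel₀ l two_ne_zero] at hbound
  exact (setLIntegral_halfBall_infDist_pow_mul_sq_le (by linarith) (2 * k + 2)).trans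
    (ofReal_two_mul_pow_mul_le hC hy hl (by linarith) k hbound
      (ofReal_infDist_pow_mul_setLIntegral_halfBall_le hl4 (2 * k))
      (ofReal_infDist_pow_mul_setLIntegral_halfBall_le hl4 (2 * k + 2)))

theorem exists_lintegral_infDist_pow_mul_iteratedFDeriv_le (hΩ : IsOpen Ω) (hl : 0 < l)
    (hl4 : l ≤ 1 / 4) (hpos : Ω ⊆ {x | 0 < infDist x S})
    (hloc : ∀ y, 0 < infDist y S → Disjoint (ball y (l * infDist y S)) Ω ∨
      ∃ (ν : E) (c : ℝ), ‖ν‖ = 1 ∧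
        Ω ∩ ball y (l * infDist y S) = halfBall ν c y (l * infDist y S)) (k : ℕ) :
    ∃ C : ℝ, 0 < C ∧ ∀ u : E → ℝ, ContDiffOn ℝ ∞ u Ω → ContinuousOn u (closure Ω) →
      (∀ x ∈ frontier Ω, u x = 0) →
      ∫⁻ x in Ω, ENNReal.ofReal (infDist x S ^ (2 * k + 2) * ‖iteratedFDeriv ℝ (k + 2) u x‖ ^ 2) ≤
        ENNReal.ofReal C * ((∫⁻ x in Ω,
            ENNReal.ofReal (infDist x S ^ (2 * k) * ‖iteratedFDeriv ℝ (k + 1) u x‖ ^ 2)) +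
          ∫⁻ x in Ω,
            ENNReal.ofReal (infDist x S ^ (2 * k + 2) * ‖iteratedFDeriv ℝ k (Δ u) x‖ ^ 2)) := by
  obtain ⟨C, hC, hhalf⟩ :=
    exists_lintegral_infDist_pow_mul_iteratedFDeriv_halfBall_le E hl hl4 k
  refine ⟨32 ^ Module.finrank ℝ E * C, by positivity, fun u hu huc hu0 => ?_⟩
  have hmeas {f : E → ℝ} (hf : ContDiffOn ℝ ∞ f Ω) (m k : ℕ) :=
    measurable_indicator_ofReal_infDist_pow_mul hΩ hf S m k
  have haverage := setLIntegral_infDist_pos_le_of_forall_ball (ν := volume) (S := S) hl hl4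
    (hmeas hu (2 * k + 2) (k + 2))
    ((hmeas hu (2 * k) (k + 1)).add (hmeas (contDiffOn_laplacian hΩ hu) (2 * k + 2) k))
    (C := ENNReal.ofReal C) ENNReal.ofReal_ne_top
  simp only [Pi.add_apply, lintegral_add_left (hmeas hu (2 * k) (k + 1)),
    setLIntegral_indicator hΩ.measurableSet, inter_eq_left.2 hpos] at haverage
  rw [ENNReal.ofReal_mul (by positivity)]
  refine haverage fun y hy => ?_
  have hsub : ball y (l / 2 * infDist y S) ⊆ ball y (l * infDist y S) :=
    ball_subset_ball (by nlinarith)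
  rcases hloc y hy with hdisj | ⟨ν, c, hν, heq⟩
  · simp [(hdisj.symm.mono_right hsub).inter_eq]
  · have heq' : Ω ∩ ball y (l / 2 * infDist y S) = halfBall ν c y (l / 2 * infDist y S) := by
      rw [← inter_eq_right.2 hsub, ← inter_assoc, heq, halfBall, halfBall, inter_assoc,
        inter_eq_right.2 hsub]
    rw [heq, heq']
    exact hhalf hν hy (isDirichletOnHalfBall_of_inter_ball_eq hΩ (norm_ne_zero_iff.1 (by simp [hν]))
      heq hu huc hu0)

end WeightedEstimates

section IteratedDerivativeWords

variable {E ι : Type*} [NormedAddCommGroup E] [InnerProductSpace ℝ E] [Fintype ι]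
  [MeasurableSpace E] [BorelSpace E] {μ : Measure E} {U : Set E} {f w : E → ℝ} {M : ℝ≥0∞}

lemma lintegral_mul_norm_iteratedFDeriv_sq_le_of_forall_iterDirDeriv (b : OrthonormalBasis ι ℝ E)
    (hU : IsOpen U) (hw : ContinuousOn w U) (hf : ContDiffOn ℝ ∞ f U) (k : ℕ)
    (hM : ∀ is : List ι, is.length = k →
      ∫⁻ x in U, ENNReal.ofReal ((w x * iterDirDeriv (is.map b) f x) ^ 2) ∂μ ≤ M) :
    ∫⁻ x in U, ENNReal.ofReal ((w x * ‖iteratedFDeriv ℝ k f x‖) ^ 2) ∂μ ≤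
      ((Fintype.card ι : ℝ≥0∞) ^ 2) ^ k * M := by
  induction k generalizing f with
  | zero => simpa [mul_pow, iterDirDeriv] using hM [] rfl
  | succ k ih =>
    have hj (j : ι) := ih (contDiffOn_dirDeriv hU hf (b j)) fun is his => by
      simpa [iterDirDeriv] using hM (is ++ [j]) (by simp [his])
    have hsum := lintegral_sum_sq_le (s := Finset.univ)
      (fun j _ => (hw.mul (continuousOn_norm_iteratedFDeriv hU
        (contDiffOn_dirDeriv hU hf (b j)) k)).aemeasurable hU.measurableSet) fun j _ => hj j
    rw [Finset.card_univ, ← mul_assoc, ← pow_succ'] at hsum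
    simp only [Pi.mul_apply, ← Finset.mul_sum] at hsum
    refine (setLIntegral_mono' hU.measurableSet fun x hx => ENNReal.ofReal_le_ofReal ?_).trans hsum
    rw [mul_pow, mul_pow]
    exact mul_le_mul_of_nonneg_left (pow_le_pow_left₀ (norm_nonneg _)
      (norm_iteratedFDeriv_succ_le_sum b hU hf hx k) 2) (sq_nonneg _)

end IteratedDerivativeWords

section MultiIndices

variable {n m : ℕ} {U S : Set (EuclideanSpace ℝ (Fin n))}
  {f g u : EuclideanSpace ℝ (Fin n) → ℝ}

lemma derivAlong_eq_iterDirDeriv (is : List (Fin n)) (u : EuclideanSpace ℝ (Fin n) → ℝ) :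
    derivAlong is u = iterDirDeriv (is.map (EuclideanSpace.basisFun (Fin n) ℝ)) u := by
  induction is with
  | nil => rfl
  | cons i is ih =>
    rw [List.map_cons, iterDirDeriv_cons, ← ih, EuclideanSpace.basisFun_apply]
    rfl

lemma laplaceOp_eqOn_laplacian (hU : IsOpen U) (hu : ContDiffOn ℝ ∞ u U) :
    EqOn (laplaceOp u) (Δ u) U := fun x hx => by
  rw [laplacian_eqOn_sum_dirDeriv (EuclideanSpace.basisFun (Fin n) ℝ) hU hu hx]
  simp only [laplaceOp, derivAlong_eq_iterDirDeriv]
  rfl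

/-- The word `0⋯0 1⋯1 ⋯` of coordinate directions that spells the multi-index `β`, along which
`pderivMulti β` differentiates. -/
def multiIndexWord (β : Fin n → ℕ) : List (Fin n) :=
  (List.finRange n).flatMap fun i => List.replicate (β i) i

lemma length_multiIndexWord (β : Fin n → ℕ) : (multiIndexWord β).length = ∑ i, β i := by
  simp [multiIndexWord, List.length_flatMap, Fin.sum_univ_def]

lemma count_multiIndexWord (β : Fin n → ℕ) (i : Fin n) : (multiIndexWord β).count i = β i := by
  have hcount : (List.count i ∘ fun j => List.replicate (β j) j) =
      fun j => if j = i then β j else 0 := by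
    funext j
    simp [List.count_replicate]
  rw [multiIndexWord, List.count_flatMap, hcount, ← Fin.sum_univ_def]
  simp

lemma perm_multiIndexWord_count (is : List (Fin n)) : is.Perm (multiIndexWord (is.count ·)) := by
  simp [List.perm_iff_count, count_multiIndexWord]

lemma pderivMulti_eq_iterDirDeriv (β : Fin n → ℕ) (u : EuclideanSpace ℝ (Fin n) → ℝ) :
    pderivMulti β u =
      iterDirDeriv ((multiIndexWord β).map (EuclideanSpace.basisFun (Fin n) ℝ)) u :=
  derivAlong_eq_iterDirDeriv (multiIndexWord β) u

lemma abs_pderivMulti_le (hU : IsOpen U) (hu : ContDiffOn ℝ ∞ u U) (β : Fin n → ℕ)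
    {x : EuclideanSpace ℝ (Fin n)} (hx : x ∈ U) :
    |pderivMulti β u x| ≤ ‖iteratedFDeriv ℝ (∑ i, β i) u x‖ := by
  have h := abs_iterDirDeriv_le hU hu hx
    (vs := (multiIndexWord β).map (EuclideanSpace.basisFun (Fin n) ℝ)) (by simp)
  rwa [List.length_map, length_multiIndexWord, ← pderivMulti_eq_iterDirDeriv] at h

lemma mem_multiIndicesLE {β : Fin n → ℕ} : β ∈ multiIndicesLE n m ↔ ∑ i, β i ≤ m := by
  simp only [multiIndicesLE, Finset.mem_image, Finset.mem_filter, Finset.mem_univ, true_and]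
  refine ⟨by rintro ⟨γ, hγ, rfl⟩; exact hγ, fun hβ => ⟨fun i => ⟨β i, ?_⟩, hβ, rfl⟩⟩
  exact Nat.lt_succ_of_le
    ((Finset.single_le_sum_of_canonicallyOrdered (Finset.mem_univ i)).trans hβ)

lemma KnormSq_congr (hU : IsOpen U) (h : EqOn f g U) (a : ℝ) :
    KnormSq U S m a f = KnormSq U S m a g :=
  Finset.sum_congr rfl fun β _ => setLIntegral_congr_fun hU.measurableSet fun x hx => by
    simp only [pderivMulti_eq_iterDirDeriv, iterDirDeriv_eqOn hU h _ hx]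

lemma lintegral_infDist_pow_mul_iterDirDeriv_sq_le_KnormSq (hU : IsOpen U)
    (hf : ContDiffOn ℝ ∞ f U) {is : List (Fin n)} (his : is.length ≤ m) :
    ∫⁻ x in U, ENNReal.ofReal ((infDist x S ^ (is.length + 1) *
        iterDirDeriv (is.map (EuclideanSpace.basisFun (Fin n) ℝ)) f x) ^ 2) ≤
      KnormSq U S m (-1) f := by
  have hperm := perm_multiIndexWord_count is
  have hlength : ∑ i, is.count i = is.length := by
    rw [← length_multiIndexWord, hperm.length_eq]
  have hexp : 2 * ((is.length : ℝ) - -1) = (2 * (is.length + 1) : ℕ) := by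
    push_cast
    ring
  have hterm := Finset.single_le_sum_of_canonicallyOrdered (f := fun β : Fin n → ℕ =>
    ∫⁻ x in U, ENNReal.ofReal
      (infDist x S ^ (2 * (((∑ i, β i : ℕ) : ℝ) - -1)) * pderivMulti β f x ^ 2))
    (mem_multiIndicesLE.2 (hlength.trans_le his))
  refine (setLIntegral_congr_fun hU.measurableSet fun x hx => ?_).trans_le hterm
  simp only [pderivMulti_eq_iterDirDeriv, hlength, hexp, Real.rpow_natCast,
    iterDirDeriv_perm hU hf (hperm.map _) hx, mul_pow, ← pow_mul, mul_comm 2]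

lemma lintegral_infDist_pow_mul_iteratedFDeriv_le_KnormSq (hU : IsOpen U)
    (hf : ContDiffOn ℝ ∞ f U) {k : ℕ} (hk : k ≤ m) :
    ∫⁻ x in U, ENNReal.ofReal (infDist x S ^ (2 * k + 2) * ‖iteratedFDeriv ℝ k f x‖ ^ 2) ≤
      ENNReal.ofReal (((n : ℝ) ^ 2) ^ k) * KnormSq U S m (-1) f := by
  have h := lintegral_mul_norm_iteratedFDeriv_sq_le_of_forall_iterDirDeriv (μ := volume)
    (w := fun x => infDist x S ^ (k + 1)) (EuclideanSpace.basisFun (Fin n) ℝ) hU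
    ((continuous_infDist_pt S).pow (k + 1)).continuousOn hf k
    fun is his => by
      simpa only [his] using
        lintegral_infDist_pow_mul_iterDirDeriv_sq_le_KnormSq (S := S) hU hf (his.trans_le hk)
  rw [Fintype.card_fin] at h
  rw [ENNReal.ofReal_pow (by positivity), ENNReal.ofReal_pow (by positivity),
    ENNReal.ofReal_natCast]
  refine le_of_eq_of_le (lintegral_congr fun x => ?_) h
  rw [mul_pow, ← pow_mul]
  ring_nf

end MultiIndices

namespace IsPolyhedralDomain

variable {n : ℕ} {Ω : Set (EuclideanSpace ℝ (Fin n))}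
  {𝓗 : Finset (Set (EuclideanSpace ℝ (Fin n)))}

lemma exists_lintegral_norm_fderiv_sq_le_KnormSq (hΩ : IsPolyhedralDomain Ω 𝓗)
    (hS : (polySingularSet Ω 𝓗).Nonempty) (m : ℕ) :
    ∃ C : ℝ, 0 < C ∧ ∀ u : EuclideanSpace ℝ (Fin n) → ℝ, ContDiffOn ℝ ∞ u Ω →
      ContinuousOn u (closure Ω) → (∀ x ∈ frontier Ω, u x = 0) →
      ∫⁻ x in Ω, ENNReal.ofReal (‖fderiv ℝ u x‖ ^ 2) ≤
        ENNReal.ofReal C * KnormSq Ω (polySingularSet Ω 𝓗) m (-1) (Δ u) := by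
  obtain ⟨C, hC, henergy⟩ := hΩ.exists_lintegral_norm_fderiv_sq_le hS
  refine ⟨C, hC, fun u hu huc hu0 => (henergy u hu huc hu0).trans (mul_le_mul' le_rfl ?_)⟩
  simpa [iterDirDeriv] using lintegral_infDist_pow_mul_iterDirDeriv_sq_le_KnormSq
    (S := polySingularSet Ω 𝓗) hΩ.isOpen (contDiffOn_laplacian hΩ.isOpen hu)
    (is := []) (Nat.zero_le m)

lemma exists_lintegral_infDist_pow_mul_iteratedFDeriv_succ_le (hΩ : IsPolyhedralDomain Ω 𝓗)
    (hS : (polySingularSet Ω 𝓗).Nonempty) (k : ℕ) :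
    ∃ C : ℝ, 0 < C ∧ ∀ u : EuclideanSpace ℝ (Fin n) → ℝ, ContDiffOn ℝ ∞ u Ω →
      ContinuousOn u (closure Ω) → (∀ x ∈ frontier Ω, u x = 0) →
      ∫⁻ x in Ω, ENNReal.ofReal (infDist x (polySingularSet Ω 𝓗) ^ (2 * k + 2) *
          ‖iteratedFDeriv ℝ (k + 2) u x‖ ^ 2) ≤
        ENNReal.ofReal C * ((∫⁻ x in Ω, ENNReal.ofReal
            (infDist x (polySingularSet Ω 𝓗) ^ (2 * k) * ‖iteratedFDeriv ℝ (k + 1) u x‖ ^ 2)) +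
          ∫⁻ x in Ω, ENNReal.ofReal (infDist x (polySingularSet Ω 𝓗) ^ (2 * k + 2) *
            ‖iteratedFDeriv ℝ k (Δ u) x‖ ^ 2)) := by
  obtain ⟨κ, hκ, hκ4, hflat⟩ := hΩ.exists_inter_ball_eq_halfBall hS
  exact exists_lintegral_infDist_pow_mul_iteratedFDeriv_le hΩ.isOpen hκ hκ4
    (fun x hx => hΩ.infDist_pos hS hx) (fun y hy => hflat y _ (mul_pos hκ hy) le_rfl) k

lemma exists_lintegral_infDist_pow_mul_iteratedFDeriv_le_KnormSq (hΩ : IsPolyhedralDomain Ω 𝓗)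
    (hS : (polySingularSet Ω 𝓗).Nonempty) {m k : ℕ} (hk : k ≤ m + 1) :
    ∃ C : ℝ, 0 < C ∧ ∀ u : EuclideanSpace ℝ (Fin n) → ℝ, ContDiffOn ℝ ∞ u Ω →
      ContinuousOn u (closure Ω) → (∀ x ∈ frontier Ω, u x = 0) →
      ∫⁻ x in Ω, ENNReal.ofReal
          (infDist x (polySingularSet Ω 𝓗) ^ (2 * k) * ‖iteratedFDeriv ℝ (k + 1) u x‖ ^ 2) ≤
        ENNReal.ofReal C * KnormSq Ω (polySingularSet Ω 𝓗) m (-1) (Δ u) := by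
  induction k with
  | zero => simpa [norm_iteratedFDeriv_one] using
      hΩ.exists_lintegral_norm_fderiv_sq_le_KnormSq hS m
  | succ k ih =>
    obtain ⟨C₁, hC₁, hprev⟩ := ih (by lia)
    obtain ⟨C₂, hC₂, hstep⟩ := hΩ.exists_lintegral_infDist_pow_mul_iteratedFDeriv_succ_le hS k
    refine ⟨C₂ * (C₁ + ((n : ℝ) ^ 2) ^ k), by positivity, fun u hu huc hu0 =>
      (hstep u hu huc hu0).trans ?_⟩
    rw [ENNReal.ofReal_mul hC₂.le, mul_assoc, ENNReal.ofReal_add hC₁.le (by positivity), add_mul]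
    exact mul_le_mul' le_rfl (add_le_add (hprev u hu huc hu0)
      (lintegral_infDist_pow_mul_iteratedFDeriv_le_KnormSq hΩ.isOpen
        (contDiffOn_laplacian hΩ.isOpen hu) (by lia)))

lemma exists_lintegral_infDist_rpow_mul_iteratedFDeriv_le_KnormSq (hΩ : IsPolyhedralDomain Ω 𝓗)
    (hS : (polySingularSet Ω 𝓗).Nonempty) {m k : ℕ} (hk : k ≤ m + 2) :
    ∃ C : ℝ, 0 < C ∧ ∀ u : EuclideanSpace ℝ (Fin n) → ℝ, ContDiffOn ℝ ∞ u Ω →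
      ContinuousOn u (closure Ω) → (∀ x ∈ frontier Ω, u x = 0) →
      ∫⁻ x in Ω, ENNReal.ofReal (infDist x (polySingularSet Ω 𝓗) ^ (2 * ((k : ℝ) - 1)) *
          ‖iteratedFDeriv ℝ k u x‖ ^ 2) ≤
        ENNReal.ofReal C * KnormSq Ω (polySingularSet Ω 𝓗) m (-1) (Δ u) := by
  cases k with
  | zero =>
    obtain ⟨C₁, hC₁, hhardy⟩ := hΩ.exists_hardy hS
    obtain ⟨C₂, hC₂, henergy⟩ := hΩ.exists_lintegral_norm_fderiv_sq_le_KnormSq hS m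
    refine ⟨C₁ * C₂, by positivity, fun u hu huc hu0 => ?_⟩
    have hweight (x : EuclideanSpace ℝ (Fin n)) :
        infDist x (polySingularSet Ω 𝓗) ^ (2 * (((0 : ℕ) : ℝ) - 1)) *
          ‖iteratedFDeriv ℝ 0 u x‖ ^ 2 = u x ^ 2 / infDist x (polySingularSet Ω 𝓗) ^ 2 := by
      rw [show 2 * (((0 : ℕ) : ℝ) - 1) = -((2 : ℕ) : ℝ) by norm_num,
        Real.rpow_neg infDist_nonneg, Real.rpow_natCast, norm_iteratedFDeriv_zero,
        Real.norm_eq_abs, sq_abs, div_eq_inv_mul]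
    simp only [hweight]
    rw [ENNReal.ofReal_mul hC₁.le, mul_assoc]
    exact (hhardy u hu huc hu0).trans (mul_le_mul' le_rfl (henergy u hu huc hu0))
  | succ k =>
    have hexp : 2 * (((k + 1 : ℕ) : ℝ) - 1) = (2 * k : ℕ) := by
      push_cast
      ring
    simpa only [hexp, Real.rpow_natCast] using
      hΩ.exists_lintegral_infDist_pow_mul_iteratedFDeriv_le_KnormSq hS (by lia : k ≤ m + 1)

theorem exists_KnormSq_le_KnormSq_laplacian (hΩ : IsPolyhedralDomain Ω 𝓗)
    (hS : (polySingularSet Ω 𝓗).Nonempty) (m : ℕ) :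
    ∃ C : ℝ, 0 < C ∧ ∀ u : EuclideanSpace ℝ (Fin n) → ℝ, ContDiffOn ℝ ∞ u Ω →
      ContinuousOn u (closure Ω) → (∀ x ∈ frontier Ω, u x = 0) →
      KnormSq Ω (polySingularSet Ω 𝓗) (m + 2) 1 u ≤
        ENNReal.ofReal C * KnormSq Ω (polySingularSet Ω 𝓗) m (-1) (Δ u) := by
  choose! C hC hterm using fun k (hk : k ≤ m + 2) =>
    hΩ.exists_lintegral_infDist_rpow_mul_iteratedFDeriv_le_KnormSq hS hk
  have hCsum : 0 ≤ ∑ β ∈ multiIndicesLE n (m + 2), C (∑ i, β i) :=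
    Finset.sum_nonneg fun β hβ => (hC _ (mem_multiIndicesLE.1 hβ)).le
  refine ⟨(∑ β ∈ multiIndicesLE n (m + 2), C (∑ i, β i)) + 1, by positivity,
    fun u hu huc hu0 => ?_⟩
  calc KnormSq Ω (polySingularSet Ω 𝓗) (m + 2) 1 u
      ≤ ∑ β ∈ multiIndicesLE n (m + 2),
          ENNReal.ofReal (C (∑ i, β i)) * KnormSq Ω (polySingularSet Ω 𝓗) m (-1) (Δ u) := by
        refine Finset.sum_le_sum fun β hβ => le_trans ?_
          (hterm _ (mem_multiIndicesLE.1 hβ) u hu huc hu0)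
        refine setLIntegral_mono' hΩ.isOpen.measurableSet fun x hx => ENNReal.ofReal_le_ofReal
          (mul_le_mul_of_nonneg_left ?_ (Real.rpow_nonneg infDist_nonneg _))
        rw [← sq_abs]
        exact pow_le_pow_left₀ (abs_nonneg _) (abs_pderivMulti_le hΩ.isOpen hu β hx) 2
    _ = ENNReal.ofReal (∑ β ∈ multiIndicesLE n (m + 2), C (∑ i, β i)) *
          KnormSq Ω (polySingularSet Ω 𝓗) m (-1) (Δ u) := by
        rw [← Finset.sum_mul, ENNReal.ofReal_sum_of_nonneg fun β hβ =>
          (hC _ (mem_multiIndicesLE.1 hβ)).le]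
    _ ≤ _ := mul_le_mul' (ENNReal.ofReal_le_ofReal (by linarith)) le_rfl

end IsPolyhedralDomain

theorem kondratiev_apriori_estimate_general {n : ℕ} {Ω : Set (EuclideanSpace ℝ (Fin n))}
    {𝓗 : Finset (Set (EuclideanSpace ℝ (Fin n)))}
    (hΩ : IsPolyhedralDomain Ω 𝓗) (hS : (polySingularSet Ω 𝓗).Nonempty) (m : ℕ) :
    ∃ C : ℝ, 0 < C ∧ ∀ u : EuclideanSpace ℝ (Fin n) → ℝ,
      ContDiffOn ℝ ∞ u Ω → ContinuousOn u (closure Ω) → (∀ x ∈ frontier Ω, u x = 0) →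
      (KnormSq Ω (polySingularSet Ω 𝓗) (m + 2) 1 u) ^ (1 / 2 : ℝ) ≤
        ENNReal.ofReal C *
          (KnormSq Ω (polySingularSet Ω 𝓗) m (-1) (laplaceOp u)) ^ (1 / 2 : ℝ) := by
  obtain ⟨C, hC, hsq⟩ := hΩ.exists_KnormSq_le_KnormSq_laplacian hS m
  refine ⟨C ^ (1 / 2 : ℝ), by positivity, fun u hu huc hu0 => ?_⟩
  have hhalf : (0 : ℝ) ≤ 1 / 2 := by norm_num
  rw [KnormSq_congr hΩ.isOpen (laplaceOp_eqOn_laplacian hΩ.isOpen hu),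
    ← ENNReal.ofReal_rpow_of_pos hC, ← ENNReal.mul_rpow_of_nonneg _ _ hhalf]
  exact ENNReal.rpow_le_rpow (hsq u hu huc hu0) hhalf

/-- A priori estimate for the Dirichlet problem in Babuška–Kondratiev spaces on a polyhedral
domain: `‖u‖_{K^{μ+1}_1} ≤ C ‖Δu‖_{K^{μ-1}_{-1}}` for functions vanishing on the boundary. -/
theorem kondratiev_apriori_estimate {n : ℕ} (hn : 2 ≤ n)
    (Ω : Set (EuclideanSpace ℝ (Fin n))) (𝓗 : Finset (Set (EuclideanSpace ℝ (Fin n))))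
    (hΩ : IsPolyhedralDomain Ω 𝓗) (hS : (polySingularSet Ω 𝓗).Nonempty)
    (μ : ℕ) (hμ : 1 ≤ μ) :
    ∃ C : ℝ, 0 < C ∧ ∀ u : EuclideanSpace ℝ (Fin n) → ℝ,
      ContDiffOn ℝ (⊤ : ℕ∞) u Ω → ContinuousOn u (closure Ω) →
      (∀ x ∈ frontier Ω, u x = 0) →
      KnormSq Ω (polySingularSet Ω 𝓗) 1 1 u < ⊤ →
      KnormSq Ω (polySingularSet Ω 𝓗) (μ - 1) (-1) (laplaceOp u) < ⊤ →
      (KnormSq Ω (polySingularSet Ω 𝓗) (μ + 1) 1 u) ^ (1 / 2 : ℝ) ≤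
        ENNReal.ofReal C *
          (KnormSq Ω (polySingularSet Ω 𝓗) (μ - 1) (-1) (laplaceOp u)) ^ (1 / 2 : ℝ) := by
  obtain ⟨m, rfl⟩ := Nat.exists_eq_add_of_le' hμ
  obtain ⟨C, hC, h⟩ := kondratiev_apriori_estimate_general hΩ hS m
  exact ⟨C, hC, fun u hu huc hu0 _ _ => h u hu huc hu0⟩
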